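/- Let q be a prime power, m ≥ 3, l | q^m − 1, g | x^m − 1 over F_q. Let p_1, …, p_r be the primes dividing q^m − 1 but not l, and g_1, …, g_s the monic irreducible factors of x^m − 1 not dividing g. Set δ = 1 − 2Σ_{i=1}^r 1/p_i − Σ_{i=1}^s 1/q^{deg g_i}, and assume δ > 0; set Δ = (2r + s − 1)/δ + 2. If q^{m/2 − 1} > (n+2)·Δ·W(l)^2·W(g), then for every non-exceptional rational function f over F_{q^m} of degree sum n and every a ∈ F_q, there exists α ∈ F_{q^m} normal over F_q with (α, f(α)) a primitive pair and Tr_{F_{q^m}/F_q}(α^{−1}) = a. -/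

import Mathlib

section
open Polynomial UniqueFactorizationMonoid Finset Classical

/-- `α` is a primitive element of the finite field `F`: a generator of the cyclic group `Fˣ`. -/
def IsPrimitiveElem {F : Type*} [Field F] [Fintype F] (α : F) : Prop :=
  orderOf α = Fintype.card F - 1

/-- `α` is normal over `K`: its Frobenius conjugates form a `K`-basis of `F`. -/
def IsNormalElem (K : Type*) {F : Type*} [Field K] [Field F] [Algebra K F]
    (q m : ℕ) (α : F) : Prop :=
  LinearIndependent K (fun i : Fin m => α ^ q ^ (i : ℕ)) ∧
    Submodule.span K (Set.range fun i : Fin m => α ^ q ^ (i : ℕ)) = ⊤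

/-- A rational function `f ∈ F(x)` is exceptional if `f = c·xⁱ·hᵈ` for some `d > 1` dividing
`|F| − 1`, or `f = xⁱ` with `gcd(|F| − 1, i) ≠ 1`. -/
def ExceptionalRatFunc {F : Type*} [Field F] [Fintype F] (f : RatFunc F) : Prop :=
  (∃ (c : F) (i : ℤ) (h : RatFunc F) (d : ℕ), 1 < d ∧ d ∣ Fintype.card F - 1 ∧
      f = RatFunc.C c * RatFunc.X ^ i * h ^ d) ∨
  (∃ i : ℤ, f = RatFunc.X ^ i ∧ Nat.gcd (Fintype.card F - 1) i.natAbs ≠ 1)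

end

section
namespace Weil
open Polynomial

theorem natCard_degreeLT (E : Type*) [Field E] [Fintype E] (n : ℕ) :
    Nat.card (degreeLT E n) = Fintype.card E ^ n := by
  rw [Nat.card_congr (degreeLTEquiv E n).toEquiv]
  simp

theorem stepanov_core {E : Type*} [Field E] [Fintype E] (p : ℕ) [Fact p.Prime] [CharP E p]
    (r s : ℕ) (hs : s = p ^ r) (hE : Fintype.card E = s ^ 2) {I : Type*} [Fintype I]
    (W V : I → E[X]) (B : ℕ) (hW : ∀ i, (W i).natDegree ≤ B) (hV : ∀ i, (V i).natDegree ≤ B)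
    (x0 : E) (L M : ℕ) (Cl : Finset E)
    (hcl : ∀ x ∈ Cl, ∀ i, (W i).eval x ^ s = (V i).eval x)
    (hind : ∀ n : I → E[X], (∀ i, (n i).degree < L) → (X - C x0) ^ s ∣ ∑ i, n i * W i →
      ∀ i, n i = 0)
    (hcount : s * L + B + M < L * M * Fintype.card I) :
    Cl.card ≤ L + B + M * s := by
  classical
  have hp := (Fact.out : p.Prime)
  have hspos : 0 < s := hs ▸ pow_pos hp.pos r
  have hLpos : 0 < L := by
    rcases Nat.eq_zero_or_pos L with h | h
    · subst h; simp at hcount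
    · exact h
  have hMpos : 0 < M := by
    rcases Nat.eq_zero_or_pos M with h | h
    · subst h; simp at hcount
    · exact h
  have hadd : ∀ a b : E[X], (a - b) ^ s = a ^ s - b ^ s := by
    intro a b; rw [hs]; exact sub_pow_char_pow a b r
  have hfrob : ∀ x : E, (x ^ s) ^ s = x := by
    intro x; rw [← pow_mul, ← sq, ← hE]; exact FiniteField.pow_card x
  let T := s * L + B + M
  let Φ : (Fin M × I → degreeLT E L) → E[X] := fun n =>
    ∑ ai : Fin M × I, (n ai : E[X]) ^ s * V ai.2 * (X - C x0) ^ (ai.1 : ℕ)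
  have hΦ : ∀ n, Φ n ∈ degreeLT E T := by
    intro n
    refine Submodule.sum_mem _ ?_
    intro ai _
    rw [mem_degreeLT]
    have h1 : ((n ai : E[X])).natDegree ≤ L - 1 := by
      have := (mem_degreeLT.1 (n ai).2)
      by_cases h0 : (n ai : E[X]) = 0
      · simp [h0]
      · rw [degree_eq_natDegree h0] at this
        have : (n ai : E[X]).natDegree < L := by exact_mod_cast this
        omega
    have h2 : ((n ai : E[X]) ^ s * V ai.2 * (X - C x0) ^ (ai.1 : ℕ)).natDegree
        ≤ s * (L - 1) + B + ai.1 := by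
      refine natDegree_mul_le.trans (add_le_add (natDegree_mul_le.trans (add_le_add ?_ (hV _))) ?_)
      · exact natDegree_pow_le.trans (Nat.mul_le_mul_left _ h1)
      · refine natDegree_pow_le.trans ?_
        rw [natDegree_X_sub_C]; simp
    refine lt_of_le_of_lt degree_le_natDegree ?_
    have h3 : s * (L - 1) ≤ s * L := Nat.mul_le_mul_left _ (Nat.sub_le _ _)
    have h4 : (ai.1 : ℕ) < M := ai.1.2
    have : ((n ai : E[X]) ^ s * V ai.2 * (X - C x0) ^ (ai.1 : ℕ)).natDegree < T := by
      show _ < s * L + B + M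
      omega
    exact_mod_cast this
  let Φ' : (Fin M × I → degreeLT E L) → degreeLT E T := fun n => ⟨Φ n, hΦ n⟩
  have hfin : ∀ n, Finite (degreeLT E n) := fun n => Finite.of_equiv _ (degreeLTEquiv E n).toEquiv.symm
  have hE1 : 1 < Fintype.card E := Fintype.one_lt_card
  have hninj : ¬ Function.Injective Φ' := by
    intro hinj
    have := Nat.card_le_card_of_injective Φ' hinj
    rw [Nat.card_fun, natCard_degreeLT, natCard_degreeLT, Nat.card_eq_fintype_card,
      Fintype.card_prod, Fintype.card_fin, ← pow_mul] at this
    have := (Nat.pow_le_pow_iff_right hE1).1 this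
    have h5 : L * (M * Fintype.card I) = L * M * Fintype.card I := by ring
    omega
  simp only [Function.Injective, not_forall] at hninj
  obtain ⟨n1, n2, h12, hne⟩ := hninj
  let n := n1 - n2
  have hn0 : n ≠ 0 := sub_ne_zero.2 hne
  have hΦn : Φ n = 0 := by
    have h6 : Φ n1 = Φ n2 := congrArg Subtype.val h12
    have : Φ n = Φ n1 - Φ n2 := by
      simp only [Φ, n, ← Finset.sum_sub_distrib]
      refine Finset.sum_congr rfl fun ai _ => ?_
      simp only [Pi.sub_apply, Submodule.coe_sub, hadd]
      ring
    rw [this, h6, sub_self]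
  let Ψ : E[X] := ∑ a : Fin M, (X - C x0) ^ ((a : ℕ) * s) * ∑ i, (n (a, i) : E[X]) * W i
  have hdegn : ∀ ai, ((n ai : E[X])).natDegree ≤ L := by
    intro ai
    have := (mem_degreeLT.1 (n ai).2)
    by_cases h0 : (n ai : E[X]) = 0
    · simp [h0]
    · rw [degree_eq_natDegree h0] at this
      have : (n ai : E[X]).natDegree < L := by exact_mod_cast this
      omega
  have hΨdeg : Ψ.natDegree ≤ L + B + M * s := by
    refine natDegree_sum_le_of_forall_le _ _ fun a _ => ?_
    refine natDegree_mul_le.trans ?_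
    have h7 : ((X - C x0) ^ ((a : ℕ) * s) : E[X]).natDegree ≤ M * s := by
      refine natDegree_pow_le.trans ?_
      rw [natDegree_X_sub_C, mul_one]
      exact Nat.mul_le_mul_right _ a.2.le
    have h8 : (∑ i, (n (a, i) : E[X]) * W i).natDegree ≤ L + B := by
      refine natDegree_sum_le_of_forall_le _ _ fun i _ => ?_
      exact natDegree_mul_le.trans (add_le_add (hdegn _) (hW _))
    omega
  have hΨ0 : Ψ ≠ 0 := by
    intro hΨ0
    -- smallest `a` with a nonzero row
    have hex : ∃ a : ℕ, ∃ h : a < M, ∃ i, n (⟨a, h⟩, i) ≠ 0 := by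
      by_contra hcon
      push Not at hcon
      apply hn0
      funext ai
      exact hcon ai.1 ai.1.2 ai.2
    let a0 := Nat.find hex
    obtain ⟨ha0, i0, hi0⟩ := Nat.find_spec hex
    have hmin : ∀ a : Fin M, (a : ℕ) < a0 → ∀ i, n (a, i) = 0 := by
      intro a ha i
      by_contra h
      exact Nat.find_min hex ha ⟨a.2, i, h⟩
    have hsplit : Ψ = (X - C x0) ^ (a0 * s) * (∑ i, (n (⟨a0, ha0⟩, i) : E[X]) * W i) +
        ∑ a ∈ Finset.univ.erase (⟨a0, ha0⟩ : Fin M),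
          (X - C x0) ^ ((a : ℕ) * s) * ∑ i, (n (a, i) : E[X]) * W i := by
      simp only [Ψ]
      rw [Finset.add_sum_erase Finset.univ
        (fun a : Fin M => (X - C x0) ^ ((a : ℕ) * s) * ∑ i, (n (a, i) : E[X]) * W i)
        (Finset.mem_univ (⟨a0, ha0⟩ : Fin M))]
    have hrest : (X - C x0) ^ (a0 * s + s) ∣ ∑ a ∈ Finset.univ.erase (⟨a0, ha0⟩ : Fin M),
          (X - C x0) ^ ((a : ℕ) * s) * ∑ i, (n (a, i) : E[X]) * W i := by
      refine Finset.dvd_sum fun a ha => ?_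
      rcases lt_trichotomy (a : ℕ) a0 with h | h | h
      · simp [hmin a h]
      · exact absurd (Fin.ext h) (Finset.ne_of_mem_erase ha)
      · refine Dvd.dvd.mul_right (pow_dvd_pow _ ?_) _
        calc a0 * s + s = (a0 + 1) * s := by ring
          _ ≤ a * s := Nat.mul_le_mul_right _ h
    have hd : (X - C x0) ^ (a0 * s + s) ∣
        (X - C x0) ^ (a0 * s) * (∑ i, (n (⟨a0, ha0⟩, i) : E[X]) * W i) := by
      have : (X - C x0) ^ (a0 * s + s) ∣ Ψ := by rw [hΨ0]; exact dvd_zero _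
      rw [hsplit] at this
      exact (dvd_add_left hrest).1 this
    rw [pow_add] at hd
    have hd' := (mul_dvd_mul_iff_left (pow_ne_zero _ (X_sub_C_ne_zero x0))).1 hd
    have := hind (fun i => (n (⟨a0, ha0⟩, i) : E[X]))
      (fun i => mem_degreeLT.1 (n (⟨a0, ha0⟩, i)).2) hd' i0
    exact hi0 (Subtype.ext this)
  have hroot : ∀ x ∈ Cl, Ψ.IsRoot x := by
    intro x hx
    have h9 : (Ψ.eval x) ^ s = (Φ n).eval x := by
      simp only [Ψ, Φ, eval_finsetSum, eval_mul, eval_pow, eval_sub, eval_X, eval_C]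
      rw [hs, sum_pow_char_pow, ← hs, Fintype.sum_prod_type]
      refine Finset.sum_congr rfl fun a _ => ?_
      have hsum' : ∀ g : I → E, (∑ i, g i) ^ s = ∑ i, g i ^ s := by
        intro g; rw [hs]; exact sum_pow_char_pow p r _ g
      rw [mul_pow, hsum', Finset.mul_sum]
      refine Finset.sum_congr rfl fun i _ => ?_
      rw [mul_pow, hcl x hx i, pow_mul, ← pow_mul, ← pow_mul]
      have : (x - x0) ^ ((a : ℕ) * (s * s)) = (x - x0) ^ (a : ℕ) := by
        have : (x - x0) ^ ((a : ℕ) * (s * s)) = (((x - x0) ^ s) ^ s) ^ (a : ℕ) := by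
          rw [← pow_mul, ← pow_mul]; ring_nf
        rw [this, hfrob]
      rw [this]
      ring
    rw [hΦn, eval_zero] at h9
    exact pow_eq_zero_iff hspos.ne' |>.1 h9
  calc Cl.card ≤ Ψ.roots.toFinset.card := Finset.card_le_card fun x hx => by
        rw [Multiset.mem_toFinset, mem_roots hΨ0]; exact hroot x hx
    _ ≤ Multiset.card Ψ.roots := Multiset.toFinset_card_le _
    _ ≤ Ψ.natDegree := card_roots' _
    _ ≤ _ := hΨdeg

end Weil
end

section
namespace Weil
open Polynomial

theorem exists_natCast_of_pow_eq {Om : Type*} [Field Om] (p : ℕ) [Fact p.Prime] [CharP Om p] (t : Om)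
    (ht : t ^ p = t) : ∃ j : ℕ, t = j := by
  classical
  have hp := (Fact.out : p.Prime)
  by_contra hcon
  push Not at hcon
  have hinj : Set.InjOn (fun j : ℕ => (j : Om)) (Finset.range p : Set ℕ) := by
    intro a ha b hb hab
    have : a ≡ b [MOD p] := (CharP.cast_eq_iff_mod_eq Om p).1 hab
    rw [Finset.coe_range] at ha hb
    exact Nat.ModEq.eq_of_lt_of_lt this ha hb
  let S : Finset Om := insert t ((Finset.range p).image fun j : ℕ => (j : Om))
  have hcard : S.card = p + 1 := by
    rw [Finset.card_insert_of_notMem, Finset.card_image_of_injOn hinj, Finset.card_range]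
    intro h
    obtain ⟨j, -, hj⟩ := Finset.mem_image.1 h
    exact hcon j hj.symm
  have hne : (X ^ p - X : Om[X]) ≠ 0 := FiniteField.X_pow_card_sub_X_ne_zero Om hp.one_lt
  have hsub : S.card ≤ p := by
    have h1 : S.val ⊆ (X ^ p - X : Om[X]).roots := by
      intro x hx
      rw [mem_roots hne, IsRoot, eval_sub, eval_pow, eval_X, sub_eq_zero]
      rcases Finset.mem_insert.1 (Finset.mem_val ▸ hx) with h | h
      · rw [h, ht]
      · obtain ⟨j, -, hj⟩ := Finset.mem_image.1 h
        rw [← hj]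
        exact (frobenius_def (R := Om) p (j : Om)).symm.trans (map_natCast (frobenius Om p) j)
    have := Polynomial.card_le_degree_of_subset_roots h1
    rwa [FiniteField.X_pow_card_sub_X_natDegree_eq Om hp.one_lt] at this
  omega

theorem pow_char_eq_one {Om : Type*} [Field Om] (p : ℕ) [Fact p.Prime] [CharP Om p] (t : Om)
    (ht : t ^ p = 1) : t = 1 := by
  have : (t - 1) ^ p = 0 := by rw [sub_pow_char, ht]; simp
  exact sub_eq_zero.1 (pow_eq_zero_iff (Fact.out : p.Prime).ne_zero |>.1 this)

theorem indep_core {k Om : Type*} [Field k] [Field Om] [Algebra k Om] (p : ℕ) [Fact p.Prime]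
    [CharP Om p] (N : ℕ) (y1 y2 z : Om) (hy10 : y1 ≠ 0) (hy20 : y2 ≠ 0)
    (h1 : ∀ σ : Om ≃ₐ[k] Om, ∃ ζ : k, ζ ^ N = 1 ∧ σ y1 = algebraMap k Om ζ * y1)
    (h2 : ∀ σ : Om ≃ₐ[k] Om, ∃ ζ : k, ζ ^ N = 1 ∧ σ y2 = algebraMap k Om ζ * y2)
    (hz : ∀ σ : Om ≃ₐ[k] Om, ∃ j : ℕ, σ z = z + j)
    (hzk : ∃ σ : Om ≃ₐ[k] Om, σ z ≠ z)
    (hy : ∀ i j : ℕ, (∀ σ : Om ≃ₐ[k] Om, σ (y1 ^ i * y2 ^ j) = y1 ^ i * y2 ^ j) → N ∣ i ∧ N ∣ j) :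
    LinearIndependent k (fun t : (Fin N × Fin N) × Fin p =>
      y1 ^ (t.1.1 : ℕ) * y2 ^ (t.1.2 : ℕ) * z ^ (t.2 : ℕ)) := by
  classical
  have hp := (Fact.out : p.Prime)
  have hhom : ∀ y : Om, y ≠ 0 →
      (∀ σ : Om ≃ₐ[k] Om, ∃ ζ : k, ζ ^ N = 1 ∧ σ y = algebraMap k Om ζ * y) →
      ∃ c : (Om ≃ₐ[k] Om) →* Om, (∀ σ, σ y = c σ * y) ∧ ∀ σ, c σ ^ N = 1 := by
    intro y hy0 h
    choose ζ hζ1 hζ using h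
    refine ⟨⟨⟨fun σ => algebraMap k Om (ζ σ), ?_⟩, ?_⟩, fun σ => hζ σ, fun σ => ?_⟩
    · have := hζ 1
      rw [AlgEquiv.one_apply] at this
      exact mul_right_cancel₀ hy0 (by rw [← this, one_mul])
    · intro σ τ
      apply mul_right_cancel₀ hy0
      show algebraMap k Om (ζ (σ * τ)) * y = algebraMap k Om (ζ σ) * algebraMap k Om (ζ τ) * y
      rw [← hζ, AlgEquiv.mul_apply, hζ τ, map_mul, hζ σ, AlgEquiv.commutes]
      ring
    · show algebraMap k Om (ζ σ) ^ N = 1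
      rw [← map_pow, hζ1, map_one]
  obtain ⟨c1, hc1, hc1N⟩ := hhom y1 hy10 h1
  obtain ⟨c2, hc2, hc2N⟩ := hhom y2 hy20 h2
  have hcy : ∀ (i j : ℕ) (σ : Om ≃ₐ[k] Om),
      σ (y1 ^ i * y2 ^ j) = (c1 σ ^ i * c2 σ ^ j) * (y1 ^ i * y2 ^ j) := by
    intro i j σ
    rw [map_mul, map_pow, map_pow, hc1, hc2]; ring
  -- powers of σ
  have hpowz : ∀ σ : Om ≃ₐ[k] Om, (σ ^ p) z = z := by
    intro σ
    obtain ⟨j, hj⟩ := hz σ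
    have : ∀ n : ℕ, (σ ^ n) z = z + n * j := by
      intro n
      induction n with
      | zero => simp
      | succ n ih =>
        rw [pow_succ', AlgEquiv.mul_apply, ih, map_add, hj, map_mul, map_natCast, map_natCast]
        push_cast; ring
    rw [this p, CharP.cast_eq_zero]; simp
  let Γ0 : Subgroup (Om ≃ₐ[k] Om) := MulAction.stabilizer (Om ≃ₐ[k] Om) z
  let χ : Fin N × Fin N → (Γ0 →* Om) := fun b =>
    (c1.comp Γ0.subtype) ^ (b.1 : ℕ) * (c2.comp Γ0.subtype) ^ (b.2 : ℕ)
  have hχ : ∀ b (σ : Γ0), χ b σ = c1 σ ^ (b.1 : ℕ) * c2 σ ^ (b.2 : ℕ) := by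
    intro b σ; simp [χ]
  have hχinj : Function.Injective χ := by
    intro b b' hbb
    have key : ∀ σ : Om ≃ₐ[k] Om,
        c1 σ ^ (b.1 + N - b'.1 : ℕ) * c2 σ ^ (b.2 + N - b'.2 : ℕ) = 1 := by
      intro σ
      apply pow_char_eq_one p
      have hmem : σ ^ p ∈ Γ0 := hpowz σ
      have h3 := congrArg (fun f : Γ0 →* Om => f ⟨σ ^ p, hmem⟩) hbb
      simp only [hχ, map_pow] at h3
      have n1 : c1 σ ≠ 0 := by
        intro h; have := hc1N σ; rw [h, zero_pow (by have := b.1.2; omega)] at this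
        exact zero_ne_one this
      have n2 : c2 σ ≠ 0 := by
        intro h; have := hc2N σ; rw [h, zero_pow (by have := b.1.2; omega)] at this
        exact zero_ne_one this
      have e1 : c1 σ ^ (b.1 + N - b'.1 : ℕ) * c1 σ ^ (b'.1 : ℕ) = c1 σ ^ (b.1 : ℕ) := by
        rw [← pow_add, Nat.sub_add_cancel (by have := b'.1.2; omega), pow_add, hc1N, mul_one]
      have e2 : c2 σ ^ (b.2 + N - b'.2 : ℕ) * c2 σ ^ (b'.2 : ℕ) = c2 σ ^ (b.2 : ℕ) := by
        rw [← pow_add, Nat.sub_add_cancel (by have := b'.2.2; omega), pow_add, hc2N, mul_one]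
      have n3 : (c1 σ ^ (b'.1 : ℕ) * c2 σ ^ (b'.2 : ℕ)) ^ p ≠ 0 := by positivity
      apply mul_right_cancel₀ n3
      rw [← mul_pow, one_mul]
      calc _ = ((c1 σ ^ (b.1 + N - b'.1 : ℕ) * c1 σ ^ (b'.1 : ℕ)) *
            (c2 σ ^ (b.2 + N - b'.2 : ℕ) * c2 σ ^ (b'.2 : ℕ))) ^ p := by ring
        _ = _ := by
          rw [e1, e2, mul_pow, ← pow_mul, ← pow_mul, mul_comm _ p, mul_comm _ p, pow_mul, pow_mul,
            h3, mul_pow, ← pow_mul, ← pow_mul, ← pow_mul, ← pow_mul, mul_comm _ p, mul_comm _ p]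
    have := hy _ _ fun σ => by rw [hcy, key σ, one_mul]
    have b1 := b.1.2; have b2 := b.2.2; have b1' := b'.1.2; have b2' := b'.2.2
    have aux : ∀ x y : ℕ, x < N → y < N → N ∣ x + N - y → x = y := by
      intro x y hx hy ⟨c, hc⟩
      have h5 : c = 1 := by
        rcases Nat.lt_trichotomy c 1 with h | h | h
        · have : c = 0 := by omega
          subst this; simp at hc; omega
        · exact h
        · exfalso
          have : N * 2 ≤ N * c := Nat.mul_le_mul_left _ h
          omega
      subst h5; omega
    exact Prod.ext (Fin.ext (aux _ _ b1 b1' this.1)) (Fin.ext (aux _ _ b2 b2' this.2))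
  have hli := (linearIndependent_monoidHom Γ0 Om).comp χ hχinj
  rw [Fintype.linearIndependent_iff] at hli ⊢
  intro n hn
  -- step 1
  have hb : ∀ b : Fin N × Fin N, ∑ c : Fin p, algebraMap k Om (n (b, c)) * z ^ (c : ℕ) = 0 := by
    intro b
    have := hli (fun b => y1 ^ (b.1 : ℕ) * y2 ^ (b.2 : ℕ) *
      ∑ c : Fin p, algebraMap k Om (n (b, c)) * z ^ (c : ℕ)) (by
        funext σ
        simp only [Finset.sum_apply, Pi.smul_apply, Function.comp, Pi.zero_apply, smul_eq_mul]
        have h6 := congrArg (fun w => (σ : Om ≃ₐ[k] Om) w) hn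
        simp only [map_zero, map_sum, Fintype.sum_prod_type] at h6
        rw [← Fintype.sum_prod_type'] at h6
        rw [← h6]
        refine Finset.sum_congr rfl fun b _ => ?_
        rw [Finset.mul_sum, Finset.sum_mul]
        refine Finset.sum_congr rfl fun c _ => ?_
        have hσz : (σ : Om ≃ₐ[k] Om) z = z := σ.2
        rw [map_smul, map_mul, map_pow _ z, hσz, hcy, hχ, Algebra.smul_def]
        ring) b
    exact (mul_eq_zero.1 this).resolve_left (by positivity)
  rintro ⟨b, c⟩
  -- step 2
  let P : Om[X] := ∑ c : Fin p, C (algebraMap k Om (n (b, c))) * X ^ (c : ℕ)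
  obtain ⟨σ, hσ⟩ := hzk
  obtain ⟨j, hj⟩ := hz σ
  have hj0 : (j : Om) ≠ 0 := by intro h; rw [h, add_zero] at hj; exact hσ hj
  have hroots : ∀ m : ℕ, P.eval (z + m * j) = 0 := by
    have hstep : ∀ w, P.eval w = 0 → P.eval (σ w) = 0 := by
      intro w hw
      have := congrArg σ hw
      simp only [P, eval_finsetSum, eval_mul, eval_C, eval_pow, eval_X, map_sum, map_mul, map_pow,
        map_zero, AlgEquiv.commutes] at this ⊢
      exact this
    intro m
    induction m with
    | zero => simpa [P, eval_finsetSum] using hb b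
    | succ m ih =>
      have := hstep _ ih
      rw [map_add, hj, map_mul, map_natCast, map_natCast] at this
      convert this using 2
      push_cast; ring
  have hP0 : P = 0 := by
    apply Polynomial.eq_zero_of_natDegree_lt_card_of_eval_eq_zero P
      (f := fun m : Fin p => z + (m : ℕ) * (j : Om))
    · intro m m' hmm
      have h7 : ((m : ℕ) : Om) = (m' : ℕ) := mul_right_cancel₀ hj0 (add_left_cancel hmm)
      have : (m : ℕ) ≡ m' [MOD p] := (CharP.cast_eq_iff_mod_eq Om p).1 h7
      exact Fin.ext (Nat.ModEq.eq_of_lt_of_lt this m.2 m'.2)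
    · intro m; exact hroots m
    · rw [Fintype.card_fin]
      have : P.natDegree ≤ p - 1 := by
        refine natDegree_sum_le_of_forall_le _ _ fun c _ => ?_
        refine (natDegree_C_mul_X_pow_le _ _).trans ?_
        have := c.2; omega
      have := hp.pos; omega
  have hc := congrArg (fun q => q.coeff (c : ℕ)) hP0
  simp only [P, finsetSum_coeff, coeff_C_mul, coeff_X_pow, coeff_zero] at hc
  rw [Finset.sum_eq_single c] at hc
  · simpa using hc
  · intro c' _ hc'
    rw [if_neg, mul_zero]
    intro h; exact hc' (Fin.ext h.symm)
  · simp

end Weil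
end

section
namespace Weil
open Polynomial

theorem det_core {E Om I : Type*} [Field E] [Field Om] [Algebra E[X] Om] [Fintype I] [DecidableEq I]
    [Nonempty I]
    (c : I → I → I → E[X]) (Cd : ℕ) (hc : ∀ i j l, (c i j l).natDegree ≤ Cd)
    (i0 : I) (mm : I → Om) (hmm : LinearIndependent E[X] mm)
    (hmul : ∀ i j, mm i * mm j = ∑ l, algebraMap E[X] Om (c i j l) * mm l)
    (π : E[X]) (W : I → E[X]) (hW : ∀ i j, π ∣ W i * W j - ∑ l, c i j l * W l) (hW0 : W i0 = 1)
    (L : ℕ) (n : I → E[X]) (hn : ∀ i, (n i).degree < L)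
    (hL : Fintype.card I * (L + Cd) ≤ π.natDegree)
    (hdvd : π ∣ ∑ i, n i * W i) : ∀ i, n i = 0 := by
  rcases Nat.eq_zero_or_pos L with h | hLpos
  · subst h
    intro i
    have := hn i
    by_contra h0
    rw [degree_eq_natDegree h0] at this
    exact absurd this (by simp)
  let A : Matrix I I E[X] := Matrix.of fun j l => ∑ i, n i * c i j l
  have hAW : ∀ j, π ∣ A.mulVec W j := by
    intro j
    have h1 : A.mulVec W j = W j * (∑ i, n i * W i) - ∑ i, n i * (W i * W j - ∑ l, c i j l * W l) := by
      simp only [A, Matrix.mulVec, dotProduct, Matrix.of_apply, mul_sub, Finset.sum_sub_distrib,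
        Finset.mul_sum, Finset.sum_mul]
      rw [Finset.sum_comm]
      have : ∀ i, W j * (n i * W i) = n i * (W i * W j) := fun i => by ring
      simp only [this, sub_sub_cancel]
      refine Finset.sum_congr rfl fun i _ => Finset.sum_congr rfl fun l _ => by ring
    rw [h1]
    exact dvd_sub (Dvd.dvd.mul_left hdvd _) (Finset.dvd_sum fun i _ => Dvd.dvd.mul_left (hW i j) _)
  have hdet : π ∣ A.det := by
    have h1 : (A.adjugate.mulVec (A.mulVec W)) i0 = A.det := by
      rw [Matrix.mulVec_mulVec, Matrix.adjugate_mul, Matrix.smul_mulVec, Matrix.one_mulVec,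
        Pi.smul_apply, hW0, smul_eq_mul, mul_one]
    rw [← h1]
    exact Finset.dvd_sum fun j _ => Dvd.dvd.mul_left (hAW j) _
  have hA0 : A.det = 0 := by
    apply Polynomial.eq_zero_of_dvd_of_natDegree_lt hdet
    have hent : ∀ j l, (A j l).natDegree ≤ L - 1 + Cd := by
      intro j l
      refine natDegree_sum_le_of_forall_le _ _ fun i _ => ?_
      refine natDegree_mul_le.trans (add_le_add ?_ (hc _ _ _))
      by_cases h0 : n i = 0
      · simp [h0]
      · have := hn i
        rw [degree_eq_natDegree h0] at this
        have : (n i).natDegree < L := by exact_mod_cast this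
        omega
    have : A.det.natDegree ≤ Fintype.card I * (L - 1 + Cd) := by
      rw [Matrix.det_apply]
      refine natDegree_sum_le_of_forall_le _ _ fun σ _ => ?_
      refine (natDegree_smul_le _ _).trans ?_
      refine (natDegree_prod_le _ _).trans ?_
      refine (Finset.sum_le_card_nsmul _ _ _ fun i _ => hent _ _).trans ?_
      rw [Finset.card_univ, smul_eq_mul]
    have hcp : 0 < Fintype.card I := Fintype.card_pos
    have : Fintype.card I * (L - 1 + Cd) < Fintype.card I * (L + Cd) :=
      Nat.mul_lt_mul_of_pos_left (by omega) hcp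
    omega
  obtain ⟨v, hv0, hv⟩ := Matrix.exists_vecMul_eq_zero_iff.2 hA0
  have hprod : (∑ j, algebraMap E[X] Om (v j) * mm j) * (∑ i, algebraMap E[X] Om (n i) * mm i) = 0 := by
    have : ∀ l, ∑ j, v j * A j l = 0 := fun l => congrFun hv l
    calc _ = ∑ j, ∑ i, algebraMap E[X] Om (v j) * algebraMap E[X] Om (n i) * (mm i * mm j) := by
          rw [Finset.sum_mul_sum]
          refine Finset.sum_congr rfl fun i _ => Finset.sum_congr rfl fun l _ => by ring
      _ = ∑ l, algebraMap E[X] Om (∑ j, v j * A j l) * mm l := by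
          simp only [hmul, A, Matrix.of_apply, map_sum, map_mul, Finset.mul_sum, Finset.sum_mul]
          symm
          rw [Finset.sum_comm]
          refine Finset.sum_congr rfl fun j _ => ?_
          rw [Finset.sum_comm]
          refine Finset.sum_congr rfl fun i _ => Finset.sum_congr rfl fun l _ => by ring
      _ = 0 := by simp [this]
  have hli := Fintype.linearIndependent_iff.1 hmm
  have key : ∀ u : I → E[X], (∑ j, algebraMap E[X] Om (u j) * mm j) = 0 → ∀ i, u i = 0 := by
    intro u hu
    apply hli
    rw [← hu]
    exact Finset.sum_congr rfl fun j _ => Algebra.smul_def _ _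
  rcases mul_eq_zero.1 hprod with h | h
  · exact absurd (funext (key v h)) hv0
  · exact key n h

end Weil
end

section
namespace Weil
open Polynomial

/-- multiplication table for the relation `Y ^ N = A * Y + B`. -/
def tab {R : Type*} [CommRing R] (N : ℕ) (A B : R) (b b' l : Fin N) : R :=
  if (b : ℕ) + b' < N then (if (l : ℕ) = b + b' then 1 else 0)
  else (if (l : ℕ) + N = b + b' + 1 then A else 0) + (if (l : ℕ) + N = b + b' then B else 0)

theorem sum_ite_fin {S : Type*} [CommRing S] (N k : ℕ) (hk : k < N) (a : S) (g : ℕ → S)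
    (P : ℕ → Prop) [DecidablePred P] (hP : ∀ l, l < N → (P l ↔ l = k)) :
    ∑ l : Fin N, (if P (l : ℕ) then a else 0) * g l = a * g k := by
  rw [Finset.sum_eq_single ⟨k, hk⟩]
  · rw [if_pos ((hP k hk).2 rfl)]
  · intro l _ hl
    rw [if_neg, zero_mul]
    intro h
    exact hl (Fin.ext ((hP l l.2).1 h))
  · simp

theorem tab_mul {R S : Type*} [CommRing R] [CommRing S] (φ : R →+* S) (N : ℕ) (A B : R) (y : S)
    (hy : y ^ N = φ A * y + φ B) (b b' : Fin N) :
    y ^ (b : ℕ) * y ^ (b' : ℕ) = ∑ l, φ (tab N A B b b' l) * y ^ (l : ℕ) := by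
  have hb := b.2
  have hb' := b'.2
  rw [← pow_add]
  unfold tab
  by_cases h : (b : ℕ) + b' < N
  · simp only [if_pos h, apply_ite φ, map_one, map_zero]
    rw [sum_ite_fin N (b + b') h 1 (fun l => y ^ l) (fun l => l = b + b') (fun l _ => Iff.rfl), one_mul]
  · simp only [if_neg h, map_add, apply_ite φ, map_zero, add_mul, Finset.sum_add_distrib]
    rw [sum_ite_fin N (b + b' + 1 - N) (by omega) (φ A) (fun l => y ^ l)
        (fun l => l + N = b + b' + 1) (fun l _ => by omega),
      sum_ite_fin N (b + b' - N) (by omega) (φ B) (fun l => y ^ l)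
        (fun l => l + N = b + b') (fun l _ => by omega)]
    have e1 : (b : ℕ) + b' = (b + b' - N) + N := by omega
    have e2 : (b : ℕ) + b' + 1 - N = (b + b' - N) + 1 := by omega
    rw [e2]
    conv_lhs => rw [e1]
    rw [pow_add, hy]
    ring

theorem tab_natDegree {E : Type*} [Field E] (N : ℕ) (A B : E[X]) (d : ℕ) (hA : A.natDegree ≤ d)
    (hB : B.natDegree ≤ d) (b b' l : Fin N) : (tab N A B b b' l).natDegree ≤ d := by
  unfold tab
  split_ifs <;> first | simp | skip
  all_goals first | assumption | (refine (natDegree_add_le _ _).trans ?_; simp [hA, hB])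

abbrev Idx (N p : ℕ) := (Fin N × Fin N) × Fin p

def tab3 {R : Type*} [CommRing R] (N p : ℕ) (K1 K2 A B : R) (t t' l : Idx N p) : R :=
  tab N 0 K1 t.1.1 t'.1.1 l.1.1 * tab N 0 K2 t.1.2 t'.1.2 l.1.2 * tab p A B t.2 t'.2 l.2

theorem tab3_mul {R S : Type*} [CommRing R] [CommRing S] (φ : R →+* S) (N p : ℕ) (K1 K2 A B : R)
    (y1 y2 z : S) (hy1 : y1 ^ N = φ K1) (hy2 : y2 ^ N = φ K2) (hz : z ^ p = φ A * z + φ B)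
    (t t' : Idx N p) :
    (y1 ^ (t.1.1 : ℕ) * y2 ^ (t.1.2 : ℕ) * z ^ (t.2 : ℕ)) *
      (y1 ^ (t'.1.1 : ℕ) * y2 ^ (t'.1.2 : ℕ) * z ^ (t'.2 : ℕ)) =
    ∑ l, φ (tab3 N p K1 K2 A B t t' l) * (y1 ^ (l.1.1 : ℕ) * y2 ^ (l.1.2 : ℕ) * z ^ (l.2 : ℕ)) := by
  have h1 := tab_mul φ N 0 K1 y1 (by simp [hy1]) t.1.1 t'.1.1
  have h2 := tab_mul φ N 0 K2 y2 (by simp [hy2]) t.1.2 t'.1.2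
  have h3 := tab_mul φ p A B z hz t.2 t'.2
  calc _ = (y1 ^ (t.1.1 : ℕ) * y1 ^ (t'.1.1 : ℕ)) * (y2 ^ (t.1.2 : ℕ) * y2 ^ (t'.1.2 : ℕ)) *
        (z ^ (t.2 : ℕ) * z ^ (t'.2 : ℕ)) := by ring
    _ = _ := by
      rw [h1, h2, h3, Fintype.sum_prod_type, Fintype.sum_prod_type, Finset.sum_mul_sum,
        Finset.sum_mul]
      refine Finset.sum_congr rfl fun i _ => ?_
      rw [Finset.sum_mul_sum]
      refine Finset.sum_congr rfl fun j _ => Finset.sum_congr rfl fun l _ => ?_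
      simp only [tab3, map_mul]
      ring

theorem indep_of_relations {E Om : Type*} [Field E] [Field Om] [Algebra E[X] Om] (N p : ℕ)
    (hN : 0 < N) (hp : 0 < p) (K1 K2 A B : E[X]) (d : ℕ)
    (hK1 : K1.natDegree ≤ d) (hK2 : K2.natDegree ≤ d) (hA : A.natDegree ≤ d) (hB : B.natDegree ≤ d)
    (y1 y2 z : Om) (hy1 : y1 ^ N = algebraMap E[X] Om K1) (hy2 : y2 ^ N = algebraMap E[X] Om K2)
    (hz : z ^ p = algebraMap E[X] Om A * z + algebraMap E[X] Om B)
    (hli : LinearIndependent E[X] (fun t : Idx N p =>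
      y1 ^ (t.1.1 : ℕ) * y2 ^ (t.1.2 : ℕ) * z ^ (t.2 : ℕ)))
    (π h1 h2 w : E[X]) (hh1 : π ∣ h1 ^ N - K1) (hh2 : π ∣ h2 ^ N - K2)
    (hw : π ∣ w ^ p - (A * w + B))
    (L : ℕ) (hL : N * N * p * (L + 3 * d) ≤ π.natDegree) (n : Idx N p → E[X])
    (hn : ∀ i, (n i).degree < L)
    (hdvd : π ∣ ∑ t, n t * (h1 ^ (t.1.1 : ℕ) * h2 ^ (t.1.2 : ℕ) * w ^ (t.2 : ℕ))) :
    ∀ i, n i = 0 := by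
  haveI : NeZero N := ⟨hN.ne'⟩
  haveI : NeZero p := ⟨hp.ne'⟩
  haveI : Nonempty (Idx N p) := ⟨((0, 0), 0)⟩
  refine det_core (I := Idx N p) (tab3 N p K1 K2 A B) (3 * d) ?_ ((0, 0), 0) _ hli ?_ π
    (fun t => h1 ^ (t.1.1 : ℕ) * h2 ^ (t.1.2 : ℕ) * w ^ (t.2 : ℕ)) ?_ (by simp) L n hn ?_ hdvd
  · intro t t' l
    refine natDegree_mul_le.trans ?_
    refine (add_le_add natDegree_mul_le le_rfl).trans ?_
    have := tab_natDegree N 0 K1 d (by simp) hK1 t.1.1 t'.1.1 l.1.1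
    have := tab_natDegree N 0 K2 d (by simp) hK2 t.1.2 t'.1.2 l.1.2
    have := tab_natDegree p A B d hA hB t.2 t'.2 l.2
    omega
  · intro i j
    exact tab3_mul (algebraMap E[X] Om) N p K1 K2 A B y1 y2 z hy1 hy2 hz i j
  · intro i j
    rw [← Ideal.mem_span_singleton, ← Ideal.Quotient.eq]
    have q1 := (Ideal.Quotient.eq.2 (Ideal.mem_span_singleton.2 hh1))
    have q2 := (Ideal.Quotient.eq.2 (Ideal.mem_span_singleton.2 hh2))
    have q3 := (Ideal.Quotient.eq.2 (Ideal.mem_span_singleton.2 hw))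
    rw [map_pow] at q1 q2 q3
    rw [map_add, map_mul] at q3
    have := tab3_mul (Ideal.Quotient.mk (Ideal.span {π})) N p K1 K2 A B _ _ _ q1 q2 q3 i j
    simpa only [map_mul, map_pow, map_sum] using this
  · simpa [Fintype.card_prod] using hL

end Weil
end

section
namespace Weil
open Polynomial

theorem as_insoluble {E : Type*} [Field E] (p : ℕ) [Fact p.Prime] (u v : E[X]) (hv : v ≠ 0)
    (cop : IsCoprime u v) (κ a b : E) (hab : a ≠ 0 ∨ b ≠ 0) :
    X * (u ^ p - u * v ^ (p - 1)) ≠ v ^ p * (C κ * X - C a * X ^ 2 - C b) := by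
  intro h
  have hp := (Fact.out : p.Prime)
  have hp2 := hp.two_le
  have h1 : v ^ p ∣ X := by
    have hc : IsCoprime (v ^ p) (u ^ p - u * v ^ (p - 1)) := by
      have e : u ^ p - u * v ^ (p - 1) = u ^ p + v * (- u * v ^ (p - 2)) := by
        have : p - 1 = (p - 2) + 1 := by omega
        rw [this, pow_succ]; ring
      rw [e]
      apply IsCoprime.pow_left
      exact IsCoprime.add_mul_left_right (IsCoprime.pow_right cop.symm) _
    have h2 : v ^ p ∣ X * (u ^ p - u * v ^ (p - 1)) := h ▸ dvd_mul_right _ _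
    exact hc.dvd_of_dvd_mul_right h2
  have hdv : v.natDegree = 0 := by
    have := natDegree_le_of_dvd h1 X_ne_zero
    rw [natDegree_pow, natDegree_X] at this
    by_contra h0
    have : p * 1 ≤ p * v.natDegree := Nat.mul_le_mul_left _ (Nat.pos_of_ne_zero h0)
    omega
  obtain ⟨c, rfl⟩ : ∃ c, v = C c := ⟨_, eq_C_of_natDegree_eq_zero hdv⟩
  have hc : c ≠ 0 := by rintro rfl; simp at hv
  have hb : b = 0 := by
    have := congrArg (fun q => q.eval 0) h
    simp [hc] at this
    exact this
  have ha : a ≠ 0 := by tauto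
  subst hb
  have h3 : u ^ p - u * C c ^ (p - 1) = C c ^ p * (C κ - C a * X) := by
    apply mul_left_cancel₀ (X_ne_zero (R := E))
    rw [h]; simp; ring
  have d1 : (C c ^ p * (C κ - C a * X)).natDegree = 1 := by
    rw [← C_pow, natDegree_C_mul (pow_ne_zero _ hc), show C κ - C a * X = C (-a) * X + C κ by simp; ring,
      natDegree_linear (neg_ne_zero.2 ha)]
  rw [← h3] at d1
  by_cases hu : u.natDegree = 0
  · obtain ⟨e, rfl⟩ : ∃ c, u = C c := ⟨_, eq_C_of_natDegree_eq_zero hu⟩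
    rw [← C_pow, ← C_pow, ← C_mul, ← C_sub, natDegree_C] at d1
    omega
  · rw [natDegree_sub_eq_left_of_natDegree_lt, natDegree_pow] at d1
    · have := Nat.eq_one_of_mul_eq_one_right d1
      omega
    · rw [← C_pow, natDegree_mul_C (pow_ne_zero _ hc), natDegree_pow]
      have : 2 * u.natDegree ≤ p * u.natDegree := Nat.mul_le_mul_right _ hp2
      omega

theorem mem_range_of_pow_card {E Om : Type*} [Field E] [Fintype E] [Field Om] [Algebra E Om] (t : Om)
    (ht : t ^ Fintype.card E = t) : ∃ x : E, t = algebraMap E Om x := by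
  classical
  have hne : (X ^ Fintype.card E - X : Om[X]) ≠ 0 :=
    FiniteField.X_pow_card_sub_X_ne_zero Om (Fintype.one_lt_card)
  by_contra hcon
  push Not at hcon
  let S : Finset Om := insert t (Finset.univ.image fun x : E => algebraMap E Om x)
  have hcard : S.card = Fintype.card E + 1 := by
    rw [Finset.card_insert_of_notMem, Finset.card_image_of_injective _ (algebraMap E Om).injective,
      Finset.card_univ]
    intro h
    obtain ⟨j, -, hj⟩ := Finset.mem_image.1 h
    exact hcon j hj.symm
  have h1 : S.val ⊆ (X ^ Fintype.card E - X : Om[X]).roots := by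
    intro x hx
    rw [mem_roots hne, IsRoot, eval_sub, eval_pow, eval_X, sub_eq_zero]
    rcases Finset.mem_insert.1 (Finset.mem_val ▸ hx) with h | h
    · rw [h, ht]
    · obtain ⟨j, -, hj⟩ := Finset.mem_image.1 h
      rw [← hj, ← map_pow, FiniteField.pow_card]
  have := Polynomial.card_le_degree_of_subset_roots h1
  rw [FiniteField.X_pow_card_sub_X_natDegree_eq Om Fintype.one_lt_card] at this
  omega

theorem aux_div {k : Type*} [Field k] (c a b x : k) (hx : x ≠ 0) :
    x * (c - (a * x + b / x)) = c * x - a * x ^ 2 - b := by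
  field_simp; ring

theorem field_indep {E : Type*} [Field E] [Fintype E] (p : ℕ) [Fact p.Prime] [CharP E p] (N : ℕ)
    (hN : 0 < N) (hNE : N ∣ Fintype.card E - 1) (hNp : (N : E) ≠ 0) (R : E[X]) (hR : R ≠ 0)
    (κ1 κ2 κ κ' a b : E) (hκ1 : κ1 ≠ 0) (hκ2 : κ2 ≠ 0) (hκ : κ ≠ 0) (hab : a ≠ 0 ∨ b ≠ 0)
    (hkum : ∀ (i j : ℕ) (c : E) (w1 w2 : E[X]), c ≠ 0 → w1 ≠ 0 → w2 ≠ 0 →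
      X ^ i * R ^ j * w2 ^ N = C c * w1 ^ N → N ∣ i ∧ N ∣ j) :
    ∃ y1 y2 z : SeparableClosure (RatFunc E),
      y1 ^ N = algebraMap E[X] _ (C κ1 * X ^ (N - 1)) ∧
      y2 ^ N = algebraMap E[X] _ (C κ2 * R ^ (N - 1)) ∧
      z ^ p = algebraMap E[X] _ ((C κ * X) ^ (p - 1)) * z +
        algebraMap E[X] _ ((C κ * X) ^ (p - 1) * (C κ' * X - C κ * (C a * X ^ 2 + C b))) ∧
      LinearIndependent E[X] (fun t : Idx N p =>
        y1 ^ (t.1.1 : ℕ) * y2 ^ (t.1.2 : ℕ) * z ^ (t.2 : ℕ)) := by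
  have hp := (Fact.out : p.Prime)
  let k := RatFunc E
  let Om := SeparableClosure (RatFunc E)
  haveI : CharP Om p := charP_of_injective_algebraMap (algebraMap k Om).injective p
  let ι := algebraMap E[X] k
  have hι : Function.Injective ι := IsFractionRing.injective E[X] k
  have hιO : ∀ x, algebraMap E[X] Om x = algebraMap k Om (ι x) := fun x =>
    IsScalarTower.algebraMap_apply E[X] k Om x
  have hinj : Function.Injective (algebraMap E[X] Om) := by
    have : (algebraMap E[X] Om : E[X] → Om) = algebraMap k Om ∘ ι := funext hιO
    rw [this]
    exact (algebraMap k Om).injective.comp hι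
  have hNO : (N : Om) ≠ 0 := by
    intro h
    apply hNp
    rw [CharP.cast_eq_zero_iff Om p] at h
    exact (CharP.cast_eq_zero_iff E p N).2 h
  have kum : ∀ K : E[X], K ≠ 0 → ∃ y : Om, y ≠ 0 ∧ y ^ N = algebraMap E[X] Om K := by
    intro K hK
    have hK' : algebraMap E[X] Om K ≠ 0 := (map_ne_zero_iff _ hinj).2 hK
    obtain ⟨y, hy⟩ := IsSepClosed.exists_root (X ^ N - C (algebraMap E[X] Om K))
      (by rw [degree_X_pow_sub_C hN]; exact_mod_cast hN.ne') (separable_X_pow_sub_C _ hNO hK')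
    have hy' : y ^ N = algebraMap E[X] Om K := by
      rw [IsRoot, eval_sub, eval_pow, eval_X, eval_C, sub_eq_zero] at hy
      exact hy
    refine ⟨y, ?_, hy'⟩
    rintro rfl
    rw [zero_pow hN.ne'] at hy'
    exact hK' hy'.symm
  have hCX : ∀ c : E, c ≠ 0 → (C c : E[X]) ≠ 0 := fun c hc => C_ne_zero.2 hc
  obtain ⟨y1, hy10, hy1⟩ := kum (C κ1 * X ^ (N - 1)) (mul_ne_zero (hCX _ hκ1) (pow_ne_zero _ X_ne_zero))
  obtain ⟨y2, hy20, hy2⟩ := kum (C κ2 * R ^ (N - 1)) (mul_ne_zero (hCX _ hκ2) (pow_ne_zero _ hR))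
  let ρ : k := ι (C (κ' / κ)) - (ι (C a) * ι X + ι (C b) / ι X)
  obtain ⟨z0, hz0⟩ : ∃ z0 : Om, z0 ^ p = z0 + algebraMap k Om ρ := by
    have hd : ((X ^ p - X - C (algebraMap k Om ρ) : Om[X])).degree = p := by
      have : (X ^ p - X - C (algebraMap k Om ρ) : Om[X]) = X ^ p - (X + C (algebraMap k Om ρ)) := by ring
      rw [this, degree_sub_eq_left_of_degree_lt, degree_X_pow]
      rw [degree_X_pow, degree_X_add_C]
      exact_mod_cast hp.one_lt
    obtain ⟨y, hy⟩ := IsSepClosed.exists_root (X ^ p - X - C (algebraMap k Om ρ))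
      (by rw [hd]; exact_mod_cast hp.ne_zero) (by
        rw [separable_def]
        have : derivative (X ^ p - X - C (algebraMap k Om ρ) : Om[X]) = -1 := by
          rw [derivative_sub, derivative_sub, derivative_X_pow, CharP.cast_eq_zero]
          simp
        rw [this]
        exact isCoprime_one_right.neg_right)
    refine ⟨y, ?_⟩
    rw [IsRoot, eval_sub, eval_sub, eval_pow, eval_X, eval_C] at hy
    linear_combination hy
  have hXO : algebraMap E[X] Om X ≠ 0 := (map_ne_zero_iff _ hinj).2 X_ne_zero
  have hXk : ι X ≠ 0 := (map_ne_zero_iff _ hι).2 X_ne_zero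
  have hκk : ι (C κ) ≠ 0 := (map_ne_zero_iff _ hι).2 (hCX _ hκ)
  have root1 : ∀ (t : Om), t ^ N = 1 → ∃ ζ : k, ζ ^ N = 1 ∧ t = algebraMap k Om ζ := by
    intro t ht
    letI : Algebra E Om := inferInstance
    obtain ⟨x, hx⟩ := mem_range_of_pow_card (E := E) t (by
      obtain ⟨m, hm⟩ := hNE
      have : Fintype.card E = N * m + 1 := by
        have := Fintype.card_pos (α := E); omega
      rw [this, pow_succ, pow_mul, ht, one_pow, one_mul])
    have hx' : t = algebraMap k Om (algebraMap E k x) := by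
      rw [hx]; exact IsScalarTower.algebraMap_apply E k Om x
    refine ⟨algebraMap E k x, ?_, hx'⟩
    apply (algebraMap k Om).injective
    rw [map_pow, ← hx', ht, map_one]
  have hσ : ∀ (y : Om) (K : E[X]), y ≠ 0 → y ^ N = algebraMap E[X] Om K → ∀ σ : Om ≃ₐ[k] Om,
      ∃ ζ : k, ζ ^ N = 1 ∧ σ y = algebraMap k Om ζ * y := by
    intro y K hy0 hy σ
    obtain ⟨ζ, h1, h2⟩ := root1 (σ y / y) (by
      rw [div_pow, ← map_pow, hy, hιO, AlgEquiv.commutes, div_self]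
      rw [← hιO, ← hy]; exact pow_ne_zero _ hy0)
    exact ⟨ζ, h1, by rw [← h2, div_mul_cancel₀ _ hy0]⟩
  have hli := indep_core (k := k) p N y1 y2 z0 hy10 hy20 (hσ y1 _ hy10 hy1) (hσ y2 _ hy20 hy2)
    (by
      intro σ
      obtain ⟨j, hj⟩ := exists_natCast_of_pow_eq p (σ z0 - z0) (by
        rw [sub_pow_char, ← map_pow, hz0, map_add, AlgEquiv.commutes]; ring)
      exact ⟨j, by rw [← hj]; ring⟩)
    (by
      by_contra hcon
      push Not at hcon
      obtain ⟨u, hu⟩ := (InfiniteGalois.mem_range_algebraMap_iff_fixed z0).2 hcon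
      have hu' : u ^ p = u + ρ := by
        apply (algebraMap k Om).injective
        rw [map_pow, map_add, hu, hz0]
      have hd : u.denom ≠ 0 := u.denom_ne_zero
      have hdk : ι u.denom ≠ 0 := (map_ne_zero_iff _ hι).2 hd
      refine as_insoluble p u.num u.denom hd u.isCoprime_num_denom (κ' / κ) a b hab ?_
      apply hι
      have e : u = ι u.num / ι u.denom := (RatFunc.num_div_denom u).symm
      have e2 : ι u.num = u * ι u.denom := by rw [eq_div_iff hdk] at e; exact e.symm
      simp only [map_mul, map_sub, map_pow, e2]
      have e3 : ι X * ρ = ι (C (κ' / κ)) * ι X - ι (C a) * ι X ^ 2 - ι (C b) := by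
        exact aux_div _ _ _ _ hXk
      rw [← e3, mul_pow, hu']
      have : p = (p - 1) + 1 := by have := hp.pos; omega
      conv_lhs => rw [this]
      conv_rhs => rw [this]
      simp only [Nat.add_sub_cancel]
      ring)
    (by
      intro i j hfix
      obtain ⟨u, hu⟩ := (InfiniteGalois.mem_range_algebraMap_iff_fixed _).2 hfix
      have hu0 : u ≠ 0 := by
        rintro rfl
        rw [map_zero] at hu
        exact mul_ne_zero (pow_ne_zero _ hy10) (pow_ne_zero _ hy20) hu.symm
      have huN : u ^ N = ι ((C κ1 * X ^ (N - 1)) ^ i * (C κ2 * R ^ (N - 1)) ^ j) := by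
        apply (algebraMap k Om).injective
        rw [map_pow, hu, ← hιO, map_mul, map_pow _ _ i, map_pow _ _ j, ← hy1, ← hy2]
        ring
      have hd : u.denom ≠ 0 := u.denom_ne_zero
      have hn0 : u.num ≠ 0 := u.num_ne_zero hu0
      have hdk : ι u.denom ≠ 0 := (map_ne_zero_iff _ hι).2 hd
      have e : u = ι u.num / ι u.denom := (RatFunc.num_div_denom u).symm
      have e2 : ι u.num = u * ι u.denom := by rw [eq_div_iff hdk] at e; exact e.symm
      have main : u.num ^ N = (C κ1 * X ^ (N - 1)) ^ i * (C κ2 * R ^ (N - 1)) ^ j * u.denom ^ N := by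
        apply hι
        rw [map_pow, e2, mul_pow, huN, map_mul ι _ (u.denom ^ N), map_pow ι u.denom]
      refine hkum i j (κ1 ^ i * κ2 ^ j) (X ^ i * R ^ j * u.denom) u.num
        (mul_ne_zero (pow_ne_zero _ hκ1) (pow_ne_zero _ hκ2))
        (mul_ne_zero (mul_ne_zero (pow_ne_zero _ X_ne_zero) (pow_ne_zero _ hR)) hd) hn0 ?_
      rw [main, C_mul, C_pow, C_pow]
      obtain ⟨N', rfl⟩ : ∃ N', N = N' + 1 := ⟨N - 1, by omega⟩
      simp only [Nat.add_sub_cancel]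
      ring)
  let x1 : kˣ := Units.mk0 (ι (C κ) * ι X) (mul_ne_zero hκk hXk)
  refine ⟨y1, y2, algebraMap k Om (ι (C κ) * ι X) * z0, hy1, hy2, ?_, ?_⟩
  · rw [mul_pow, hz0]
    have : p = (p - 1) + 1 := by have := hp.pos; omega
    rw [hιO, hιO]
    have e3 : ι (C κ) * ι X * ρ = ι (C κ' * X - C κ * (C a * X ^ 2 + C b)) := by
      have e4 : ι (C κ) * ι (C (κ' / κ)) = ι (C κ') := by
        rw [← map_mul, ← C_mul, mul_div_cancel₀ _ hκ]
      simp only [ρ, map_sub, map_mul, map_add, map_pow]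
      rw [← e4]
      have := aux_div (ι (C (κ' / κ))) (ι (C a)) (ι (C b)) _ hXk
      linear_combination ι (C κ) * this
    conv_lhs => rw [this]
    rw [map_mul ι, ← e3, map_pow ι, map_mul ι]
    simp only [map_mul, map_pow]
    ring
  · have h2 := hli.units_smul (fun t => x1 ^ (t.2 : ℕ))
    have h3 := h2.restrict_scalars' E[X]
    convert h3 using 1
    funext t
    rw [Pi.smul_apply', Units.smul_def, Algebra.smul_def]
    simp only [x1, Units.val_pow_eq_pow_val, Units.val_mk0, map_pow]
    ring

end Weil
end

section
namespace Weil
open Polynomial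
universe u

noncomputable def wpoly {E : Type*} [Field E] (p r s : ℕ) (a b : E) : E[X] :=
  X * ∑ i ∈ Finset.range r, X ^ (s - p ^ i) * (C a * X ^ 2 + C b) ^ (p ^ i)

theorem wpoly_pow {E : Type*} [Field E] (p r s : ℕ) [Fact p.Prime] [CharP E p] (hs : s = p ^ r)
    (a b : E) : (wpoly p r s a b) ^ p =
      (X * X ^ s) ^ (p - 1) * (wpoly p r s a b + X * (C a * X ^ 2 + C b) ^ s -
        X ^ s * (C a * X ^ 2 + C b)) := by
  have hp := (Fact.out : p.Prime)
  have hle : ∀ i, i ≤ r → p ^ i ≤ s := fun i hi => hs ▸ Nat.pow_le_pow_right hp.pos hi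
  set g : E[X] := C a * X ^ 2 + C b with hg
  let G : ℕ → E[X] := fun i => X ^ (s - p ^ i) * g ^ (p ^ i)
  have hw : wpoly p r s a b = X * ∑ i ∈ Finset.range r, G i := rfl
  have h1 : (wpoly p r s a b) ^ p = X ^ p * ∑ i ∈ Finset.range r, (X ^ s) ^ (p - 1) * G (i + 1) := by
    rw [hw, mul_pow, sum_pow_char]
    congr 1
    refine Finset.sum_congr rfl fun i hi => ?_
    have hi' := hle (i + 1) (Finset.mem_range.1 hi)
    simp only [G]
    rw [mul_pow, ← pow_mul, ← pow_mul, ← pow_succ, ← mul_assoc, ← pow_mul, ← pow_add]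
    congr 2
    rw [Nat.sub_mul, ← pow_succ, Nat.mul_sub, mul_one]
    have : s ≤ s * p := Nat.le_mul_of_pos_right _ hp.pos
    omega
  have h2 : ∑ i ∈ Finset.range r, G (i + 1) = (∑ i ∈ Finset.range r, G i) + G r - G 0 := by
    have := Finset.sum_range_succ G r
    have h3 := Finset.sum_range_succ' G r
    rw [← this, h3]; ring
  have hGr : G r = g ^ s := by simp [G, ← hs]
  have hX0 : X * G 0 = X ^ s * g := by
    simp only [G, pow_zero, pow_one]
    rw [← mul_assoc, ← pow_succ']
    have := hle 0 (Nat.zero_le _)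
    rw [pow_zero] at this
    rw [Nat.sub_add_cancel this]
  rw [h1, ← Finset.mul_sum, h2, hGr, hw, ← hX0, mul_pow]
  have : X ^ p = (X : E[X]) ^ (p - 1) * X := by rw [← pow_succ, Nat.sub_add_cancel hp.pos]
  rw [this]; ring

theorem wpoly_natDegree {E : Type*} [Field E] (p r s : ℕ) [Fact p.Prime] (hs : s = p ^ r)
    (a b : E) : (wpoly p r s a b).natDegree ≤ 3 * s := by
  have hp := (Fact.out : p.Prime)
  have hspos : 0 < s := hs ▸ pow_pos hp.pos r
  refine natDegree_mul_le.trans ?_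
  rw [natDegree_X]
  have : (∑ i ∈ Finset.range r, X ^ (s - p ^ i) * (C a * X ^ 2 + C b) ^ (p ^ i)).natDegree ≤ 2 * s := by
    refine natDegree_sum_le_of_forall_le _ _ fun i hi => ?_
    have hi' : p ^ i ≤ s := hs ▸ Nat.pow_le_pow_right hp.pos (Finset.mem_range.1 hi).le
    refine natDegree_mul_le.trans ?_
    rw [natDegree_X_pow]
    have h1 : (C a * X ^ 2 + C b : E[X]).natDegree ≤ 2 := by compute_degree
    have h2 := (natDegree_pow_le (p := (C a * X ^ 2 + C b : E[X])) (n := p ^ i)).trans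
      (Nat.mul_le_mul_left _ h1)
    omega
  omega

theorem wpoly_eval_pow {E : Type*} [Field E] [Fintype E] (p r s : ℕ) [Fact p.Prime] [CharP E p]
    (hs : s = p ^ r) (hE : Fintype.card E = s ^ 2)
    (a b v x : E) (hx : x ≠ 0) (hv : ∑ i ∈ Finset.range (2 * r), (a * x + b / x) ^ p ^ i = v) :
    (wpoly p r s a b).eval x ^ s = v * x ^ (s + 1) - (wpoly p r s a b).eval x := by
  have hp := (Fact.out : p.Prime)
  set y := a * x + b / x with hy
  have hw : (wpoly p r s a b).eval x = x ^ (s + 1) * ∑ i ∈ Finset.range r, y ^ p ^ i := by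
    simp only [wpoly, eval_mul, eval_X, eval_finsetSum, eval_pow, eval_add, eval_C]
    rw [pow_succ' x s, mul_assoc]
    congr 1
    rw [Finset.mul_sum]
    refine Finset.sum_congr rfl fun i hi => ?_
    have hi' : p ^ i ≤ s := hs ▸ Nat.pow_le_pow_right hp.pos (Finset.mem_range.1 hi).le
    have e : a * x ^ 2 + b = x * y := by rw [hy]; field_simp
    rw [e, mul_pow, ← mul_assoc, ← pow_add, Nat.sub_add_cancel hi']
  have hsplit : ∑ i ∈ Finset.range r, y ^ p ^ i + (∑ i ∈ Finset.range r, y ^ p ^ i) ^ s = v := by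
    rw [← hv, two_mul, Finset.sum_range_add]
    congr 1
    conv_lhs => rw [hs]
    rw [sum_pow_char_pow]
    refine Finset.sum_congr rfl fun i _ => ?_
    rw [← pow_mul, ← pow_add, add_comm]
  have hxx : (x ^ (s + 1)) ^ s = x ^ (s + 1) := by
    rw [← pow_mul, add_mul, one_mul, ← sq, ← hE, pow_add, FiniteField.pow_card, ← pow_succ']
  rw [hw, mul_pow, hxx, ← hsplit]; ring

theorem dvd_pow_sub {E : Type*} [Field E] (p r s : ℕ) [Fact p.Prime] [CharP E p] (hs : s = p ^ r)
    (x0 : E) (R : E[X]) : (X - C x0) ^ s ∣ R ^ s - C (R.eval x0 ^ s) := by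
  have : R ^ s - C (R.eval x0 ^ s) = (R - C (R.eval x0)) ^ s := by
    rw [C_pow, hs, sub_pow_char_pow]
  rw [this]
  exact pow_dvd_pow_of_dvd X_sub_C_dvd_sub_C_eval s

theorem h_relation {E : Type*} [Field E] (p r s N : ℕ) [Fact p.Prime] [CharP E p] (hs : s = p ^ r)
    (hN : 0 < N) (hNs : N ∣ s - 1) (x0 : E) (R : E[X]) :
    (X - C x0) ^ s ∣ (R ^ ((s - 1) / N + 1)) ^ N - C (R.eval x0 ^ s) * R ^ (N - 1) := by
  have hspos : 0 < s := hs ▸ pow_pos (Fact.out : p.Prime).pos r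
  have e : ((s - 1) / N + 1) * N = s + (N - 1) := by
    rw [add_mul, Nat.div_mul_cancel hNs]; omega
  rw [← pow_mul, e, pow_add, ← sub_mul]
  exact Dvd.dvd.mul_right (dvd_pow_sub p r s hs x0 R) _

theorem w_relation {E : Type*} [Field E] (p r s : ℕ) [Fact p.Prime] [CharP E p] (hs : s = p ^ r)
    (a b x0 : E) :
    (X - C x0) ^ s ∣ (wpoly p r s a b) ^ p - ((C (x0 ^ s) * X) ^ (p - 1) * wpoly p r s a b +
      (C (x0 ^ s) * X) ^ (p - 1) *
      (C ((a * x0 ^ 2 + b) ^ s) * X - C (x0 ^ s) * (C a * X ^ 2 + C b))) := by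
  have h1 := dvd_pow_sub p r s hs x0 X
  have h2 := dvd_pow_sub p r s hs x0 (C a * X ^ 2 + C b)
  have e2 : (C a * X ^ 2 + C b : E[X]).eval x0 = a * x0 ^ 2 + b := by simp
  rw [eval_X] at h1
  rw [e2] at h2
  rw [wpoly_pow p r s hs a b]
  rw [← Ideal.mem_span_singleton, ← Ideal.Quotient.eq] at *
  simp only [map_mul, map_sub, map_add, map_pow] at *
  rw [h1, h2]
  ring

theorem eval_pow_class {E : Type*} [Field E] [Fintype E] (s N : ℕ)
    (hN : 0 < N) (hs : 0 < s) (hNs : N ∣ s - 1) (hE : Fintype.card E = s ^ 2)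
    (y u : E) (hy : y ≠ 0) (hu : y ^ ((s ^ 2 - 1) / N) = u) :
    (y ^ ((s - 1) / N + 1)) ^ s = u * y ^ (s - (s - 1) / N) := by
  rw [← hu, ← pow_mul, ← pow_add]
  congr 1
  obtain ⟨c, hc⟩ := hNs
  have h1 : s = N * c + 1 := by omega
  have h2 : s ^ 2 - 1 = N * (c * (s + 1)) := by
    have : s ^ 2 = N * (c * (s + 1)) + 1 := by
      rw [h1]; ring
    omega
  rw [h2, hc, Nat.mul_div_cancel_left _ hN, Nat.mul_div_cancel_left _ hN]
  have : c ≤ N * c := Nat.le_mul_of_pos_left _ hN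
  have e : s - c + c = s := by omega
  calc (c + 1) * s = c * s + s := by ring
    _ = c * s + (s - c + c) := by rw [e]
    _ = _ := by ring

theorem natDegree_mul3_le {E : Type*} [Field E] (N p a b c : ℕ) (P1 P2 P3 : E[X]) (t : Idx N p)
    (h1 : P1.natDegree ≤ a) (h2 : P2.natDegree ≤ b) (h3 : P3.natDegree ≤ c) :
    (P1 ^ (t.1.1 : ℕ) * P2 ^ (t.1.2 : ℕ) * P3 ^ (t.2 : ℕ)).natDegree ≤ N * a + N * b + p * c := by
  refine natDegree_mul_le.trans (add_le_add (natDegree_mul_le.trans (add_le_add ?_ ?_)) ?_)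
  · exact natDegree_pow_le.trans (Nat.mul_le_mul t.1.1.2.le h1)
  · exact natDegree_pow_le.trans (Nat.mul_le_mul t.1.2.2.le h2)
  · exact natDegree_pow_le.trans (Nat.mul_le_mul t.2.2.le h3)

theorem count_aux (s D d B0 M1 : ℕ) (hDpos : 0 < D) (hM1 : M1 = 3 * d + 3 + B0)
    (hs0 : (D * (3 * d + 1) + 1) * M1 + 1 ≤ s) :
    s * (s / D - 3 * d) + B0 * s + (s / D + M1) < (s / D - 3 * d) * (s / D + M1) * D := by
  have hsD : D * (s / D) ≤ s := Nat.mul_div_le s D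
  have hsD2 : s < D * (s / D) + D := by
    have := Nat.lt_mul_div_succ s hDpos
    rw [mul_add, mul_one] at this; exact this
  have hk : 3 * d ≤ s / D := by
    rw [Nat.le_div_iff_mul_le hDpos]
    have : (D * (3 * d + 1) + 1) * 1 ≤ (D * (3 * d + 1) + 1) * M1 := Nat.mul_le_mul_left _ (by omega)
    nlinarith
  obtain ⟨L, hL⟩ : ∃ L, s / D = L + 3 * d := ⟨s / D - 3 * d, by omega⟩
  have hLe : s / D - 3 * d = L := by omega
  rw [hLe]
  rw [hL] at hsD hsD2 ⊢
  have k0 : (L + 3 * d) * (1 + D * (3 * d + 1)) ≤ s * (3 * d + 2) := by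
    calc (L + 3 * d) * (1 + D * (3 * d + 1)) ≤ (L + 3 * d) * (D + D * (3 * d + 1)) := by gcongr; omega
      _ = D * (L + 3 * d) * (3 * d + 2) := by ring
      _ ≤ _ := by gcongr
  have k1 : (L + 3 * d + M1) * (1 + D * (3 * d + 1)) + B0 * s < s * M1 := by
    calc (L + 3 * d + M1) * (1 + D * (3 * d + 1)) + B0 * s
        = (L + 3 * d) * (1 + D * (3 * d + 1)) + (D * (3 * d + 1) + 1) * M1 + B0 * s := by ring
      _ < s * (3 * d + 2) + s + B0 * s := by
        have : (D * (3 * d + 1) + 1) * M1 < s := hs0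
        omega
      _ = s * M1 := by rw [hM1]; ring
  have k2 : s * (L + 3 * d + M1) ≤ (L * D + D * (3 * d + 1)) * (L + 3 * d + M1) := by
    apply Nat.mul_le_mul_right
    nlinarith
  have e1 : s * (L + 3 * d + M1) = s * L + s * (3 * d) + s * M1 := by ring
  have e2 : (L * D + D * (3 * d + 1)) * (L + 3 * d + M1) =
    L * (L + 3 * d + M1) * D + (L + 3 * d + M1) * (D * (3 * d + 1)) := by ring
  have e3 : (L + 3 * d + M1) * (1 + D * (3 * d + 1)) =
    (L + 3 * d + M1) + (L + 3 * d + M1) * (D * (3 * d + 1)) := by ring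
  omega

set_option maxHeartbeats 1000000 in
theorem class_bound (p N dR : ℕ) [Fact p.Prime] (hN : 0 < N) : ∃ Cc s0 : ℕ, ∀ (E : Type u) [Field E]
    [Fintype E] [CharP E p] (r s : ℕ) (_ : s = p ^ r) (_ : Fintype.card E = s ^ 2) (_ : N ∣ s - 1)
    (_ : (N : E) ≠ 0) (R : E[X]) (_ : R ≠ 0) (_ : R.natDegree ≤ dR) (a b : E)
    (_ : a ≠ 0 ∨ b ≠ 0) (_ : ∀ (i j : ℕ) (c : E) (w1 w2 : E[X]), c ≠ 0 → w1 ≠ 0 → w2 ≠ 0 →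
      X ^ i * R ^ j * w2 ^ N = C c * w1 ^ N → N ∣ i ∧ N ∣ j) (u1 u2 v : E) (Cl : Finset E)
    (_ : ∀ x ∈ Cl, x ≠ 0 ∧ R.eval x ≠ 0 ∧ x ^ ((s ^ 2 - 1) / N) = u1 ∧
      R.eval x ^ ((s ^ 2 - 1) / N) = u2 ∧ ∑ i ∈ Finset.range (2 * r), (a * x + b / x) ^ p ^ i = v)
    (_ : s0 ≤ s), N * N * p * Cl.card ≤ s ^ 2 + Cc * s := by
  have hp := (Fact.out : p.Prime)
  obtain ⟨D, hD⟩ : ∃ D, D = N * N * p := ⟨_, rfl⟩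
  have hDpos : 0 < D := by rw [hD]; have := hp.pos; positivity
  obtain ⟨d, hd⟩ : ∃ d, d = N * (dR + 1) + p + 1 := ⟨_, rfl⟩
  obtain ⟨B0, hB0⟩ : ∃ B0, B0 = N + N * dR + p * 3 := ⟨_, rfl⟩
  obtain ⟨M1, hM1⟩ : ∃ M1, M1 = 3 * d + 3 + B0 := ⟨_, rfl⟩
  refine ⟨D * (1 + B0 + M1), (D * (3 * d + 1) + 1) * M1 + 1, ?_⟩
  intro E _ _ _ r s hs hE hNs hNp R hR hRd a b hab hkum u1 u2 v Cl hCl hs0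
  rw [← hD]
  rcases Cl.eq_empty_or_nonempty with h | ⟨x0, hx0⟩
  · simp [h]
  have hspos : 0 < s := hs ▸ pow_pos hp.pos r
  obtain ⟨hx00, hRx0, -, -, -⟩ := hCl x0 hx0
  obtain ⟨y1, y2, z, hy1, hy2, hz, hli⟩ := field_indep p N hN
    (hE ▸ (hNs.trans (by simpa using Nat.sub_dvd_pow_sub_pow s 1 2))) hNp R hR
    (x0 ^ s) (R.eval x0 ^ s) (x0 ^ s) ((a * x0 ^ 2 + b) ^ s) a b (pow_ne_zero _ hx00)
    (pow_ne_zero _ hRx0) (pow_ne_zero _ hx00) hab hkum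
  have hNd : N * dR ≤ d := by rw [hd, mul_add]; omega
  have hNd1 : N ≤ d := by rw [hd, mul_add]; omega
  let W : Idx N p → E[X] := fun t => (X ^ ((s - 1) / N + 1)) ^ (t.1.1 : ℕ) *
    (R ^ ((s - 1) / N + 1)) ^ (t.1.2 : ℕ) * (wpoly p r s a b) ^ (t.2 : ℕ)
  let V : Idx N p → E[X] := fun t => (C u1 * X ^ (s - (s - 1) / N)) ^ (t.1.1 : ℕ) *
    (C u2 * R ^ (s - (s - 1) / N)) ^ (t.1.2 : ℕ) *
      (C v * X ^ (s + 1) - wpoly p r s a b) ^ (t.2 : ℕ)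
  have he : (s - 1) / N + 1 ≤ s := by
    have := Nat.div_le_self (s - 1) N; omega
  have he2 : s - (s - 1) / N ≤ s := Nat.sub_le _ _
  have hB : N * s + N * (s * dR) + p * (3 * s) = B0 * s := by rw [hB0]; ring
  have hRp : ∀ k, k ≤ s → (R ^ k).natDegree ≤ s * dR := fun k hk =>
    natDegree_pow_le.trans (Nat.mul_le_mul hk hRd)
  have hwd := wpoly_natDegree p r s hs a b
  have hcore := stepanov_core p r s hs hE W V (B0 * s) (fun t => hB ▸ natDegree_mul3_le N p s (s * dR) (3 * s)
      _ _ _ t (by rwa [natDegree_X_pow]) (hRp _ he) hwd)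
    (fun t => hB ▸ natDegree_mul3_le N p s (s * dR) (3 * s)
      _ _ _ t ((natDegree_C_mul_X_pow_le _ _).trans he2) ((natDegree_C_mul_le _ _).trans (hRp _ he2))
      (by
        refine (natDegree_sub_le _ _).trans (max_le ((natDegree_C_mul_X_pow_le _ _).trans ?_) hwd)
        omega))
    x0 (s / D - 3 * d) (s / D + M1) Cl (by
      intro x hx t
      obtain ⟨hx1, hx2, hx3, hx4, hx5⟩ := hCl x hx
      have e1 := eval_pow_class s N hN hspos hNs hE x u1 hx1 hx3
      have e2 := eval_pow_class s N hN hspos hNs hE _ u2 hx2 hx4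
      have e3 := wpoly_eval_pow p r s hs hE a b v x hx1 hx5
      simp only [W, V, eval_mul, eval_pow, eval_sub, eval_C, eval_X]
      rw [← e1, ← e2, ← e3]
      simp only [mul_pow, ← pow_mul]
      congr 1
      · congr 1 <;> (congr 1; ring)
      · congr 1; ring)
    (by
      intro n hn hdvd
      have hsD : D * (s / D) ≤ s := Nat.mul_div_le s D
      by_cases hcase : 3 * d ≤ s / D
      · refine indep_of_relations N p hN hp.pos _ _ _ _ d ?_ ?_ ?_ ?_ y1 y2 z hy1 hy2 hz hli
          ((X - C x0) ^ s) _ _ _ ?_ (h_relation p r s N hs hN hNs x0 R)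
          (w_relation p r s hs a b x0) (s / D - 3 * d) ?_ n hn hdvd
        · refine (natDegree_C_mul_X_pow_le _ _).trans (by omega)
        · refine (natDegree_C_mul_le _ _).trans (natDegree_pow_le.trans ?_)
          exact (Nat.mul_le_mul (Nat.sub_le N 1) hRd).trans hNd
        · refine natDegree_pow_le.trans ?_
          have : (C (x0 ^ s) * X : E[X]).natDegree ≤ 1 := (natDegree_C_mul_le _ _).trans natDegree_X_le
          have := Nat.mul_le_mul_left (p - 1) this
          omega
        · have h1 : (C (x0 ^ s) * X : E[X]).natDegree ≤ 1 := (natDegree_C_mul_le _ _).trans natDegree_X_le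
          have h2 := natDegree_pow_le.trans (Nat.mul_le_mul_left (p - 1) h1)
          have h3 : (C ((a * x0 ^ 2 + b) ^ s) * X - C (x0 ^ s) * (C a * X ^ 2 + C b)).natDegree ≤ 2 := by
            compute_degree
          refine natDegree_mul_le.trans ?_
          have := hp.pos
          omega
        · have := h_relation p r s N hs hN hNs x0 X
          rwa [eval_X] at this
        · rw [Nat.sub_add_cancel hcase, ← hD, natDegree_pow, natDegree_X_sub_C, mul_one]
          exact hsD
      · intro i
        have h0 : s / D - 3 * d = 0 := by omega
        have := hn i
        rw [h0] at this
        by_contra hne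
        rw [degree_eq_natDegree hne] at this
        exact absurd this (by simp))
    (by
      have hcard : Fintype.card (Idx N p) = D := by simp [hD]
      rw [hcard]
      exact count_aux s D d B0 M1 hDpos hM1 hs0)
  have hsD : D * (s / D) ≤ s := Nat.mul_div_le s D
  have h5 : s / D - 3 * d ≤ s := (Nat.sub_le _ _).trans (Nat.div_le_self _ _)
  calc D * Cl.card ≤ D * (s / D - 3 * d + B0 * s + (s / D + M1) * s) := Nat.mul_le_mul_left _ hcore
    _ ≤ D * (s + B0 * s + (s / D + M1) * s) := by gcongr
    _ = D * (s / D) * s + D * (1 + B0 + M1) * s := by ring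
    _ ≤ s * s + D * (1 + B0 + M1) * s := by gcongr
    _ = _ := by ring

end Weil
end

section
namespace Weil
open Polynomial UniqueFactorizationMonoid

theorem exists_pow_of_dvd {F : Type*} [Field F] (g : F[X]) (hg : g ≠ 0) (d : ℕ)
    (h : ∀ P : F[X], Irreducible P → P ≠ X → P.Monic → ∀ k g', g = P ^ k * g' → ¬ P ∣ g' → d ∣ k) :
    ∃ (c : F) (i : ℕ) (w : F[X]), g = C c * X ^ i * w ^ d := by
  classical
  let s := normalizedFactors g
  have hs : Associated s.prod g := prod_normalizedFactors hg
  obtain ⟨u, hu⟩ : ∃ u, s.filter (fun P => ¬ X = P) = d • u := by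
    apply Multiset.exists_smul_of_dvd_count
    intro P hP
    rw [Multiset.mem_filter] at hP
    rw [Multiset.count_filter_of_pos (p := fun P => ¬ X = P) hP.2]
    have hirr := irreducible_of_normalized_factor P hP.1
    have hmon : P.Monic := by
      have := normalize_normalized_factor P hP.1
      rw [← this]
      exact monic_normalize hirr.ne_zero
    have hfin : FiniteMultiplicity P g := FiniteMultiplicity.of_not_isUnit hirr.not_isUnit hg
    obtain ⟨g', hg', hnd⟩ := hfin.exists_eq_pow_mul_and_not_dvd
    have hk : multiplicity P g = s.count P := by
      have := emultiplicity_eq_count_normalizedFactors hirr hg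
      rw [normalize_normalized_factor P hP.1] at this
      exact multiplicity_eq_of_emultiplicity_eq_some this
    rw [← hk]
    exact h P hirr (fun h => hP.2 h.symm) hmon _ _ hg' hnd
  have hprod : s.prod = X ^ (s.count X) * u.prod ^ d := by
    rw [← Multiset.filter_add_not (fun P => X = P) s, Multiset.prod_add, hu, Multiset.prod_nsmul,
      Multiset.filter_eq, Multiset.prod_replicate]
    congr 2
    rw [Multiset.count_add, Multiset.count_replicate_self, ← hu, Multiset.count_filter_of_neg (by simp),
      add_zero]
  obtain ⟨v, hv⟩ := hs
  obtain ⟨c, hc, hcv⟩ := Polynomial.isUnit_iff.1 v.isUnit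
  refine ⟨c, s.count X, u.prod, ?_⟩
  rw [← hv, hprod, ← hcv]; ring

theorem rootMult_pow {A : Type*} [Field A] (P : A[X]) (k : ℕ) (β : A) :
    (P ^ k).rootMultiplicity β = k * P.rootMultiplicity β := by
  classical
  rw [← count_roots, ← count_roots, roots_pow, Multiset.count_nsmul]

theorem rootMult_map {F A : Type*} [Field F] [PerfectField F] [Field A] [Algebra F A] (P g : F[X])
    (hP : Irreducible P) (hg : g ≠ 0) (k : ℕ) (g' : F[X]) (hk : g = P ^ k * g') (hnd : ¬ P ∣ g')
    (β : A) (hβ : aeval β P = 0) : (g.map (algebraMap F A)).rootMultiplicity β = k := by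
  have hinj := (algebraMap F A).injective
  have hg'0 : g' ≠ 0 := by rintro rfl; simp at hnd
  have hP1 : (P.map (algebraMap F A)).rootMultiplicity β = 1 := by
    apply le_antisymm
    · exact rootMultiplicity_le_one_of_separable ((PerfectField.separable_of_irreducible hP).map) β
    · rw [Nat.one_le_iff_ne_zero, ← pos_iff_ne_zero, rootMultiplicity_pos ((Polynomial.map_ne_zero_iff hinj).2 hP.ne_zero)]
      rw [IsRoot, eval_map_algebraMap, hβ]
  have hg1 : (g'.map (algebraMap F A)).rootMultiplicity β = 0 := by
    apply rootMultiplicity_eq_zero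
    rw [IsRoot, eval_map_algebraMap]
    intro h
    apply hnd
    have hPm := minpoly.eq_of_irreducible hP hβ
    have h2 := minpoly.dvd F β h
    exact (Dvd.intro _ hPm).trans h2
  rw [hk, Polynomial.map_mul, Polynomial.map_pow, rootMultiplicity_mul, rootMult_pow, hP1, hg1]
  · simp
  · exact mul_ne_zero (pow_ne_zero _ ((Polynomial.map_ne_zero_iff hinj).2 hP.ne_zero))
      ((Polynomial.map_ne_zero_iff hinj).2 hg'0)

theorem kummer_cond {F E : Type*} [Field F] [PerfectField F] [Field E] [Algebra F E] (f1 f2 : F[X])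
    (hf1 : f1 ≠ 0) (hf2 : f2 ≠ 0) (hcop : IsCoprime f1 f2) (N : ℕ) (hN : 0 < N)
    (hnon : ∀ d, 1 < d → d ∣ N → (∃ (c : F) (i : ℕ) (w : F[X]), f1 = C c * X ^ i * w ^ d) →
      (∃ (c : F) (i : ℕ) (w : F[X]), f2 = C c * X ^ i * w ^ d) → False)
    (i j : ℕ) (c : E) (w1 w2 : E[X]) (hc : c ≠ 0) (hw1 : w1 ≠ 0) (hw2 : w2 ≠ 0)
    (h : X ^ i * ((f1 * f2 ^ (N - 1)).map (algebraMap F E)) ^ j * w2 ^ N = C c * w1 ^ N) :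
    N ∣ i ∧ N ∣ j := by
  classical
  let A := AlgebraicClosure E
  have hinj := (algebraMap F A).injective
  have hinjE := (algebraMap E A).injective
  have hmap : ∀ g : F[X], (g.map (algebraMap F E)).map (algebraMap E A) = g.map (algebraMap F A) := by
    intro g; rw [Polynomial.map_map, ← IsScalarTower.algebraMap_eq]
  have hm0 : ∀ g : F[X], g ≠ 0 → g.map (algebraMap F A) ≠ 0 := fun g hg =>
    (Polynomial.map_ne_zero_iff hinj).2 hg
  have hA : X ^ i * (f1.map (algebraMap F A) * f2.map (algebraMap F A) ^ (N - 1)) ^ j *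
      (w2.map (algebraMap E A)) ^ N = C (algebraMap E A c) * (w1.map (algebraMap E A)) ^ N := by
    have := congrArg (fun q => q.map (algebraMap E A)) h
    simpa only [Polynomial.map_mul, Polynomial.map_pow, hmap, map_X, map_C] using this
  have hmult : ∀ β : A, (X : A[X]).rootMultiplicity β * i +
      ((f1.map (algebraMap F A)).rootMultiplicity β +
        (N - 1) * (f2.map (algebraMap F A)).rootMultiplicity β) * j +
      N * (w2.map (algebraMap E A)).rootMultiplicity β =
      N * (w1.map (algebraMap E A)).rootMultiplicity β := by
    intro β
    have hw1' : w1.map (algebraMap E A) ≠ 0 := (Polynomial.map_ne_zero_iff hinjE).2 hw1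
    have hw2' : w2.map (algebraMap E A) ≠ 0 := (Polynomial.map_ne_zero_iff hinjE).2 hw2
    have hc' : (C (algebraMap E A c)) ≠ 0 := C_ne_zero.2 ((_root_.map_ne_zero _).2 hc)
    have h1 := congrArg (fun q => rootMultiplicity β q) hA
    have n1 := hm0 f1 hf1
    have n2 := hm0 f2 hf2
    rw [rootMultiplicity_mul (mul_ne_zero (mul_ne_zero (pow_ne_zero _ X_ne_zero)
        (pow_ne_zero _ (mul_ne_zero n1 (pow_ne_zero _ n2)))) (pow_ne_zero _ hw2')),
      rootMultiplicity_mul (mul_ne_zero (pow_ne_zero _ X_ne_zero)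
        (pow_ne_zero _ (mul_ne_zero n1 (pow_ne_zero _ n2)))),
      rootMultiplicity_mul (mul_ne_zero hc' (pow_ne_zero _ hw1')), rootMultiplicity_C,
      rootMult_pow, rootMult_pow, rootMult_pow, rootMult_pow,
      rootMultiplicity_mul (mul_ne_zero n1 (pow_ne_zero _ n2)), rootMult_pow] at h1
    linarith
  have hj : N ∣ j := by
    let d := N / Nat.gcd N j
    have hgpos : 0 < Nat.gcd N j := Nat.gcd_pos_of_pos_left _ hN
    have hgd : d * Nat.gcd N j = N := Nat.div_mul_cancel (Nat.gcd_dvd_left N j)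
    have hdd : ∀ v, N ∣ v * j → d ∣ v := by
      intro v hv
      have hco : Nat.Coprime d (j / Nat.gcd N j) := Nat.coprime_div_gcd_div_gcd hgpos
      have e : j = (j / Nat.gcd N j) * Nat.gcd N j := (Nat.div_mul_cancel (Nat.gcd_dvd_right N j)).symm
      rw [← hgd, e, ← mul_assoc] at hv
      have e2 : (j / N.gcd j * N.gcd j) = j := e.symm
      rw [e2] at hv
      exact hco.dvd_of_dvd_mul_right (Nat.dvd_of_mul_dvd_mul_right hgpos hv)
    have hroot : ∀ P : F[X], Irreducible P → ∃ β : A, aeval β P = 0 := by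
      intro P hP
      exact IsAlgClosed.exists_aeval_eq_zero A P (degree_pos_of_irreducible hP).ne'
    have hX0 : ∀ P : F[X], Irreducible P → P ≠ X → P.Monic → ∀ β : A, aeval β P = 0 →
        (X : A[X]).rootMultiplicity β = 0 := by
      intro P hP hPX hPm β hβ
      apply rootMultiplicity_eq_zero
      intro h0
      rw [IsRoot, eval_X] at h0
      subst h0
      have hd : X ∣ P := by
        rw [X_dvd_iff]
        have : aeval (0 : A) P = algebraMap F A (P.coeff 0) := by
          exact (coeff_zero_eq_aeval_zero' P).symm
        rw [this] at hβ
        exact (map_eq_zero _).1 hβ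
      have := (irreducible_X (R := F)).associated_of_dvd hP hd
      exact hPX (eq_of_monic_of_associated hPm monic_X this.symm)
    by_cases hd1 : 1 < d
    · exfalso
      refine hnon d hd1 ⟨_, hgd.symm⟩ (exists_pow_of_dvd f1 hf1 d ?_) (exists_pow_of_dvd f2 hf2 d ?_)
      · intro P hP hPX hPm k g' hk hnd
        rcases Nat.eq_zero_or_pos k with rfl | hkpos
        · exact dvd_zero _
        obtain ⟨β, hβ⟩ := hroot P hP
        have h1 := rootMult_map P f1 hP hf1 k g' hk hnd β hβ
        have hnd2 : ¬ P ∣ f2 := by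
          intro h2
          exact hP.not_isUnit (hcop.isUnit_of_dvd' (hk ▸ (dvd_pow_self P hkpos.ne').mul_right _) h2)
        have h2 := rootMult_map P f2 hP hf2 0 f2 (by simp) hnd2 β hβ
        have h3 := hmult β
        rw [h1, h2, hX0 P hP hPX hPm β hβ] at h3
        apply hdd
        have : N ∣ k * j + N * (w2.map (algebraMap E A)).rootMultiplicity β :=
          ⟨(w1.map (algebraMap E A)).rootMultiplicity β, by rw [← h3]; ring⟩
        exact (Nat.dvd_add_left (dvd_mul_right _ _)).1 this
      · intro P hP hPX hPm k g' hk hnd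
        rcases Nat.eq_zero_or_pos k with rfl | hkpos
        · exact dvd_zero _
        obtain ⟨β, hβ⟩ := hroot P hP
        have h1 := rootMult_map P f2 hP hf2 k g' hk hnd β hβ
        have hnd2 : ¬ P ∣ f1 := by
          intro h2
          exact hP.not_isUnit (hcop.isUnit_of_dvd' h2 (hk ▸ (dvd_pow_self P hkpos.ne').mul_right _))
        have h2 := rootMult_map P f1 hP hf1 0 f1 (by simp) hnd2 β hβ
        have h3 := hmult β
        rw [h1, h2, hX0 P hP hPX hPm β hβ] at h3
        apply hdd
        obtain ⟨N', rfl⟩ : ∃ N', N = N' + 1 := ⟨N - 1, by omega⟩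
        rw [Nat.add_sub_cancel] at h3
        have : (N' + 1) ∣ k * j + (N' + 1) * (w1.map (algebraMap E A)).rootMultiplicity β := by
          refine ⟨(w2.map (algebraMap E A)).rootMultiplicity β + k * j, ?_⟩
          rw [← h3]; ring
        exact (Nat.dvd_add_left (dvd_mul_right _ _)).1 this
    · have hd : d = 1 := by
        have : 0 < d := Nat.div_pos (Nat.gcd_le_left _ hN) hgpos
        omega
      rw [hd, one_mul] at hgd
      exact hgd ▸ Nat.gcd_dvd_right N j
  refine ⟨?_, hj⟩
  have h3 := hmult 0
  have hx : (X : A[X]).rootMultiplicity 0 = 1 := by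
    have := rootMultiplicity_X_sub_C_self (x := (0 : A))
    rwa [C_0, sub_zero] at this
  rw [hx, one_mul] at h3
  have : N ∣ i + ((f1.map (algebraMap F A)).rootMultiplicity 0 +
        (N - 1) * (f2.map (algebraMap F A)).rootMultiplicity 0) * j +
      N * (w2.map (algebraMap E A)).rootMultiplicity 0 := ⟨_, h3⟩
  have := (Nat.dvd_add_left (dvd_mul_right _ _)).1 this
  exact (Nat.dvd_add_left (Dvd.dvd.mul_left hj _)).1 this

end Weil
end

section
namespace Weil
open Polynomial

theorem equi {T E : Type*} [Fintype T] [DecidableEq T] [Nonempty T] (S : Finset E) (key : E → T)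
    (g : T → ℂ) (hg : ∀ κ, ‖g κ‖ ≤ 1) (hsum : ∑ κ, g κ = 0) (A B C' : ℝ) (hB : 0 ≤ B)
    (h : ∀ κ, (Fintype.card T : ℝ) * (S.filter (fun x => key x = κ)).card ≤ A + B)
    (hS : A - C' ≤ S.card) : ‖∑ x ∈ S, g (key x)‖ ≤ 2 * B + C' := by
  have hD : (0 : ℝ) < Fintype.card T := by exact_mod_cast Fintype.card_pos
  set D : ℝ := ((Fintype.card T : ℕ) : ℝ) with hDdef
  set c : T → ℝ := fun κ => (S.filter (fun x => key x = κ)).card with hc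
  have hcs : ∑ κ, c κ = S.card := by
    rw [hc]
    have := Finset.card_eq_sum_card_fiberwise (s := S) (t := Finset.univ) (f := key) (by simp)
    rw [this]; push_cast; rfl
  have h1 : ∑ x ∈ S, g (key x) = ∑ κ, (c κ : ℂ) * g κ := by
    rw [← Finset.sum_fiberwise S key]
    refine Finset.sum_congr rfl fun κ _ => ?_
    rw [Finset.sum_congr rfl (g := fun _ => g κ)]
    · simp [hc]
    · intro x hx; rw [(Finset.mem_filter.1 hx).2]
  have h2 : (D : ℂ) * ∑ x ∈ S, g (key x) = ∑ κ, ((D * c κ - A : ℝ) : ℂ) * g κ := by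
    rw [h1, Finset.mul_sum]
    have : ∑ κ, ((D * c κ - A : ℝ) : ℂ) * g κ = ∑ κ, (D : ℂ) * ((c κ : ℂ) * g κ) - A * ∑ κ, g κ := by
      rw [Finset.mul_sum, ← Finset.sum_sub_distrib]
      refine Finset.sum_congr rfl fun κ _ => ?_
      push_cast; ring
    rw [this, hsum]; simp
  have h3 : ‖(D : ℂ) * ∑ x ∈ S, g (key x)‖ ≤ ∑ κ, (2 * B - (D * c κ - A)) := by
    rw [h2]
    refine (norm_sum_le _ _).trans (Finset.sum_le_sum fun κ _ => ?_)
    rw [norm_mul, Complex.norm_real, Real.norm_eq_abs]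
    have h4 : |D * c κ - A| ≤ 2 * B - (D * c κ - A) := by
      have := h κ
      rw [abs_le]; constructor <;> linarith
    calc _ ≤ |D * c κ - A| * 1 := by gcongr; exact hg κ
      _ ≤ _ := by linarith
  have h5 : ∑ κ, (2 * B - (D * c κ - A)) = D * (2 * B + A - S.card) := by
    rw [← hcs]
    simp only [Finset.sum_sub_distrib, Finset.sum_const, nsmul_eq_mul, ← Finset.mul_sum]
    rw [Finset.card_univ, ← hDdef]; ring
  rw [h5, norm_mul, Complex.norm_real, Real.norm_eq_abs, abs_of_pos hD] at h3
  have := le_of_mul_le_mul_left h3 hD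
  linarith

/-- `f1/f2` is not of the form `c x^i h^d`. -/
def NonExc {F : Type*} [Field F] (f1 f2 : F[X]) (N : ℕ) : Prop :=
  f1 ≠ 0 ∧ f2 ≠ 0 ∧ IsCoprime f1 f2 ∧ ∀ d, 1 < d → d ∣ N →
    (∃ (c : F) (i : ℕ) (w : F[X]), f1 = C c * X ^ i * w ^ d) →
      (∃ (c : F) (i : ℕ) (w : F[X]), f2 = C c * X ^ i * w ^ d) → False

theorem mulChar_norm_le {F : Type*} [Field F] [Fintype F] (χ : MulChar F ℂ) (x : F) : ‖χ x‖ ≤ 1 := by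
  by_cases hx : x = 0
  · rw [hx, MulChar.map_zero]; simp
  · have : (χ x) ^ (Fintype.card F - 1) = 1 := by
      rw [← map_pow, FiniteField.pow_card_sub_one_eq_one x hx, map_one]
    have h2 : Fintype.card F - 1 ≠ 0 := by have := Fintype.one_lt_card (α := F); omega
    exact (Complex.norm_eq_one_of_pow_eq_one this h2).le

theorem card_good {E : Type*} [Field E] [Fintype E] [DecidableEq E] (R : E[X]) (hR : R ≠ 0) :
    Fintype.card E ≤ (Finset.univ.filter fun x : E => x ≠ 0 ∧ R.eval x ≠ 0).card + (R.natDegree + 1) := by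
  have h1 : (Finset.univ : Finset E) ⊆ (Finset.univ.filter fun x : E => x ≠ 0 ∧ R.eval x ≠ 0) ∪
      (insert 0 R.roots.toFinset) := by
    intro x _
    simp only [Finset.mem_union, Finset.mem_filter, Finset.mem_insert, Multiset.mem_toFinset,
      mem_roots hR, IsRoot, Finset.mem_univ, true_and]
    tauto
  have h1 := (Finset.card_le_card h1).trans (Finset.card_union_le _ _)
  have h2 := Finset.card_insert_le 0 R.roots.toFinset
  have h3 := R.roots.toFinset_card_le
  have h4 := R.card_roots'
  rw [Finset.card_univ] at h1
  omega

set_option maxHeartbeats 800000 in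
theorem equidist {F : Type u} [Field F] [Fintype F] (p : ℕ) [Fact p.Prime] [CharP F p]
    [Algebra (ZMod p) F] (f1 f2 : F[X]) (hne : NonExc f1 f2 (Fintype.card F - 1))
    (χ1 χ2 : MulChar F ℂ) (ε : AddChar (ZMod p) ℂ) (a b : F) (hab : a ≠ 0 ∨ b ≠ 0)
    (hnt : χ1 ≠ 1 ∨ χ2 ≠ 1 ∨ ε ≠ 1) :
    ∃ (Cc : ℝ) (k0 : ℕ), ∀ k, k0 ≤ k → ∀ (E : Type v) [Field E] [Fintype E] [Algebra F E]
      [Algebra (ZMod p) E] [IsScalarTower (ZMod p) F E], Module.finrank F E = 2 * k →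
      ‖∑ x : E, χ1 (Algebra.norm F x) *
        χ2 (Algebra.norm F (aeval x (f1 * f2 ^ (Fintype.card F - 1 - 1)))) *
        ε (Algebra.trace (ZMod p) E (algebraMap F E a * x + algebraMap F E b / x))‖
        ≤ Cc * (Fintype.card F : ℝ) ^ k := by
  classical
  set N := Fintype.card F - 1 with hN
  have hQ1 := Fintype.one_lt_card (α := F)
  have hN0 : 0 < N := by omega
  have hp := (Fact.out : p.Prime)
  set R := f1 * f2 ^ (N - 1) with hR
  have hR0 : R ≠ 0 := mul_ne_zero hne.1 (pow_ne_zero _ hne.2.1)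
  obtain ⟨C1, s0, hcb⟩ := class_bound.{v} p N R.natDegree hN0
  refine ⟨2 * C1 + (1 + R.natDegree), max s0 1, fun k hk E _ _ _ _ _ hfr => ?_⟩
  haveI : CharP E p := charP_of_injective_algebraMap (algebraMap F E).injective p
  have hfd : Module.finrank (ZMod p) F * (2 * k) = Module.finrank (ZMod p) E := by
    rw [← hfr]; exact Module.finrank_mul_finrank _ _ _
  set r := Module.finrank (ZMod p) F * k with hr
  have hcF : Fintype.card F = p ^ Module.finrank (ZMod p) F := by
    rw [Module.card_eq_pow_finrank (K := ZMod p), ZMod.card]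
  set s := Fintype.card F ^ k with hs
  have hsr : s = p ^ r := by rw [hs, hcF, hr, pow_mul]
  have hE : Fintype.card E = s ^ 2 := by
    rw [Module.card_eq_pow_finrank (K := F), hfr, hs, ← pow_mul, mul_comm 2 k]
  have hNs : N ∣ s - 1 := by
    have := Nat.sub_dvd_pow_sub_pow (Fintype.card F) 1 k
    rwa [one_pow] at this
  have hNE : (N : E) ≠ 0 := by
    have : ((Fintype.card F : ℕ) : F) = 0 := by simp
    have h2 : (N : F) = -1 := by
      rw [hN, Nat.cast_sub hQ1.le, this]; simp
    intro h
    have h3 : algebraMap F E (N : F) = 0 := by rw [map_natCast]; exact h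
    rw [h2] at h3; simp at h3
  have hss : s0 ≤ s := by
    calc s0 ≤ k := le_trans (le_max_left _ _) hk
      _ ≤ s := (Nat.lt_pow_self hQ1).le
  set RE := R.map (algebraMap F E) with hRE
  have hRE0 : RE ≠ 0 := (Polynomial.map_ne_zero_iff (algebraMap F E).injective).2 hR0
  have hREd : RE.natDegree = R.natDegree := natDegree_map _
  have hev : ∀ x : E, aeval x R = RE.eval x := fun x => by rw [hRE, eval_map_algebraMap]
  have hab' : algebraMap F E a ≠ 0 ∨ algebraMap F E b ≠ 0 := by
    simpa using hab
  have hkum := fun i j (c : E) w1 w2 hc hw1 hw2 h => kummer_cond f1 f2 hne.1 hne.2.1 hne.2.2.1 N hN0 hne.2.2.2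
    i j (c : E) w1 w2 hc hw1 hw2 h
  have hnormexp : ∀ x : E, algebraMap F E (Algebra.norm F x) = x ^ ((s ^ 2 - 1) / N) := by
    intro x
    rw [FiniteField.algebraMap_norm_eq_pow, Nat.card_eq_fintype_card, Nat.card_eq_fintype_card, hE]
  have htrexp : ∀ x : E, algebraMap (ZMod p) E (Algebra.trace (ZMod p) E x) =
      ∑ i ∈ Finset.range (2 * r), x ^ p ^ i := by
    intro x
    rw [FiniteField.algebraMap_trace_eq_sum_pow, Nat.card_zmod, ← hfd, hr]
    congr 2; ring
  -- keys
  let T := (Fˣ × Fˣ) × ZMod p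
  let S : Finset E := Finset.univ.filter fun x => x ≠ 0 ∧ RE.eval x ≠ 0
  let tou : F → Fˣ := fun y => if h : y = 0 then 1 else Units.mk0 y h
  have htou : ∀ y, y ≠ 0 → ((tou y : Fˣ) : F) = y := by intro y hy; simp [tou, hy]
  let key : E → T := fun x => ((tou (Algebra.norm F x), tou (Algebra.norm F (RE.eval x))),
    Algebra.trace (ZMod p) E (algebraMap F E a * x + algebraMap F E b / x))
  let g : T → ℂ := fun κ => χ1 κ.1.1 * χ2 κ.1.2 * ε κ.2
  have hgn : ∀ κ, ‖g κ‖ ≤ 1 := by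
    intro κ
    simp only [g, norm_mul, AddChar.norm_apply, mul_one]
    exact mul_le_one₀ (mulChar_norm_le _ _) (norm_nonneg _) (mulChar_norm_le _ _)
  have hunits : ∀ χ : MulChar F ℂ, ∑ u : Fˣ, χ u = ∑ y : F, χ y := by
    intro χ
    refine Fintype.sum_of_injective (fun u : Fˣ => (u : F)) Units.val_injective _ _ ?_ fun _ => rfl
    intro y hy
    by_cases h : y = 0
    · rw [h, MulChar.map_zero]
    · exact absurd ⟨Units.mk0 y h, rfl⟩ hy
  have hgs : ∑ κ, g κ = 0 := by
    have : ∑ κ, g κ = (∑ u : Fˣ, χ1 u) * (∑ u : Fˣ, χ2 u) * ∑ v, ε v := by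
      rw [Finset.sum_mul_sum, Finset.sum_mul_sum, Fintype.sum_prod_type, Fintype.sum_prod_type]
      simp only [g, Finset.sum_mul]
      exact Finset.sum_congr rfl fun _ _ => Finset.sum_comm
    rw [this, hunits, hunits]
    rcases hnt with h | h | h
    · rw [MulChar.sum_eq_zero_of_ne_one h]; ring
    · rw [MulChar.sum_eq_zero_of_ne_one h]; ring
    · rw [AddChar.sum_eq_zero_of_ne_one h]; ring
  have hcT : Fintype.card T = N * N * p := by
    simp only [T, Fintype.card_prod, ZMod.card, Fintype.card_units]
    rfl
  have hnn : ∀ x : E, x ≠ 0 → Algebra.norm F x ≠ 0 := fun x hx => by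
    rwa [Ne, Algebra.norm_eq_zero_iff]
  have main := equi S key g hgn hgs ((s : ℝ) ^ 2) (C1 * s) (1 + R.natDegree) (by positivity) ?_ ?_
  · have hsum : ∑ x : E, χ1 (Algebra.norm F x) * χ2 (Algebra.norm F (aeval x R)) *
        ε (Algebra.trace (ZMod p) E (algebraMap F E a * x + algebraMap F E b / x)) =
        ∑ x ∈ S, g (key x) := by
      rw [← Finset.sum_filter_add_sum_filter_not Finset.univ (fun x : E => x ≠ 0 ∧ RE.eval x ≠ 0)]
      rw [Finset.sum_eq_zero (s := Finset.univ.filter fun x : E => ¬ (x ≠ 0 ∧ RE.eval x ≠ 0)), add_zero]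
      · refine Finset.sum_congr rfl fun x hx => ?_
        obtain ⟨-, hx1, hx2⟩ := Finset.mem_filter.1 hx
        simp only [g, key]
        rw [htou _ (hnn _ hx1), htou _ (hnn _ hx2), hev]
      · intro x hx
        have hx := (Finset.mem_filter.1 hx).2
        by_cases h0 : x = 0
        · subst h0; rw [Algebra.norm_zero, MulChar.map_zero]; ring
        · have : RE.eval x = 0 := by by_contra h; exact hx ⟨h0, h⟩
          rw [hev, this, Algebra.norm_zero, MulChar.map_zero]; ring
    rw [hsum]
    refine main.trans ?_
    have : (1 : ℝ) ≤ s := by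
      have : 0 < s := by rw [hs]; positivity
      exact_mod_cast this
    have hs' : (Fintype.card F : ℝ) ^ k = s := by rw [hs]; push_cast; rfl
    rw [hs']
    have : (0:ℝ) ≤ R.natDegree := by positivity
    nlinarith
  · intro κ
    have := hcb E r s hsr hE hNs hNE RE hRE0 hREd.le _ _ hab' (by
        intro i j c w1 w2 hc hw1 hw2 h
        exact hkum i j c w1 w2 hc hw1 hw2 h)
      (algebraMap F E κ.1.1) (algebraMap F E κ.1.2) (algebraMap (ZMod p) E κ.2)
      (S.filter (fun x => key x = κ)) (by
        intro x hx
        obtain ⟨hx, hk⟩ := Finset.mem_filter.1 hx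
        obtain ⟨-, hx1, hx2⟩ := Finset.mem_filter.1 hx
        refine ⟨hx1, hx2, ?_, ?_, ?_⟩
        · rw [← hk, ← hnormexp, htou _ (hnn _ hx1)]
        · rw [← hk, ← hnormexp, htou _ (hnn _ hx2)]
        · rw [← hk, ← htrexp]) hss
    rw [hcT]
    exact_mod_cast this
  · have := card_good RE hRE0
    rw [hE, hREd] at this
    have h3 : s ^ 2 ≤ S.card + (R.natDegree + 1) := this
    have : (s : ℝ) ^ 2 ≤ S.card + (R.natDegree + 1) := by exact_mod_cast h3
    linarith
end Weil
end

section
namespace Weil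
open Polynomial

/-- All data of a mixed character sum. -/
structure Dat (F : Type u) [Field F] where
  χ1 : MulChar F ℂ
  χ2 : MulChar F ℂ
  ψ1 : AddChar F ℂ
  ψ2 : AddChar F ℂ
  f1 : F[X]
  f2 : F[X]

/-- The summand over an extension field. -/
noncomputable def Dat.Th {F : Type u} [Field F] (d : Dat F) (E : Type v) [Field E] [Algebra F E] (x : E) : ℂ :=
  d.χ1 (Algebra.norm F x) * d.χ2 (Algebra.norm F (aeval x d.f1) / Algebra.norm F (aeval x d.f2)) *
    d.ψ1 (Algebra.trace F E x) * d.ψ2 (Algebra.trace F E x⁻¹)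

/-- not all characters trivial -/
def Dat.Nt {F : Type u} [Field F] (d : Dat F) : Prop := d.χ1 ≠ 1 ∨ d.χ2 ≠ 1 ∨ d.ψ1 ≠ 1 ∨ d.ψ2 ≠ 1

theorem exists_shift {F : Type u} [Field F] [Fintype F] (p : ℕ) [Fact p.Prime] [CharP F p]
    [Algebra (ZMod p) F] : ∃ ε : AddChar (ZMod p) ℂ, ε ≠ 1 ∧ ∀ ψ : AddChar F ℂ, ∃ a : F, ∀ y,
      ψ y = ε (Algebra.trace (ZMod p) F (a * y)) := by
  classical
  have hε : (ZMod.stdAddChar (N := p)).IsPrimitive := ZMod.isPrimitive_stdAddChar p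
  have hε1 : (ZMod.stdAddChar (N := p)) ≠ 1 := by
    have := hε (one_ne_zero)
    rwa [AddChar.mulShift_one] at this
  refine ⟨ZMod.stdAddChar, hε1, fun ψ => ?_⟩
  let Ψ : AddChar F ℂ := (ZMod.stdAddChar (N := p)).compAddMonoidHom (Algebra.trace (ZMod p) F).toAddMonoidHom
  have hΨ : Ψ ≠ 1 := by
    obtain ⟨v, hv⟩ := AddChar.ne_one_iff.1 hε1
    obtain ⟨x, hx⟩ := Algebra.trace_surjective (ZMod p) F v
    refine AddChar.ne_one_iff.2 ⟨x, ?_⟩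
    simpa [Ψ, hx] using hv
  have hinj := AddChar.to_mulShift_inj_of_isPrimitive (AddChar.IsPrimitive.of_ne_one hΨ)
  have hbij : Function.Bijective Ψ.mulShift :=
    (Fintype.bijective_iff_injective_and_card _).2 ⟨hinj, AddChar.card_eq.symm⟩
  obtain ⟨a, ha⟩ := hbij.2 ψ
  refine ⟨a, fun y => ?_⟩
  rw [← ha]
  simp [Ψ, AddChar.mulShift_apply]

theorem Dat.equidist {F : Type u} [Field F] [Fintype F] (p : ℕ) [Fact p.Prime] [CharP F p]
    (hQ : 2 < Fintype.card F) (d : Dat F) (hne : NonExc d.f1 d.f2 (Fintype.card F - 1))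
    (hnt : d.Nt) :
    ∃ (Cc : ℝ) (k0 : ℕ), ∀ k, k0 ≤ k → ∀ (E : Type v) [Field E] [Fintype E] [Algebra F E],
      Module.finrank F E = 2 * k → ‖∑ x : E, d.Th E x‖ ≤ Cc * (Fintype.card F : ℝ) ^ k := by
  letI := ZMod.algebra F p
  obtain ⟨ε, hε, hsh⟩ := exists_shift (F := F) p
  have key : ∃ (ε : AddChar (ZMod p) ℂ) (a b : F), (a ≠ 0 ∨ b ≠ 0) ∧ (d.χ1 ≠ 1 ∨ d.χ2 ≠ 1 ∨ ε ≠ 1) ∧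
      (∀ y, d.ψ1 y = ε (Algebra.trace (ZMod p) F (a * y))) ∧
      (∀ y, d.ψ2 y = ε (Algebra.trace (ZMod p) F (b * y))) := by
    by_cases h : d.ψ1 = 1 ∧ d.ψ2 = 1
    · refine ⟨1, 1, 0, by simp, ?_, ?_, ?_⟩
      · rcases hnt with h' | h' | h' | h'
        · exact Or.inl h'
        · exact Or.inr (Or.inl h')
        · exact absurd h.1 h'
        · exact absurd h.2 h'
      · intro y; rw [h.1]; simp
      · intro y; rw [h.2]; simp
    · obtain ⟨a, ha⟩ := hsh d.ψ1
      obtain ⟨b, hb⟩ := hsh d.ψ2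
      refine ⟨ε, a, b, ?_, Or.inr (Or.inr hε), ha, hb⟩
      by_contra hab
      push Not at hab
      apply h
      constructor
      · ext y; rw [ha, hab.1]; simp
      · ext y; rw [hb, hab.2]; simp
  obtain ⟨ε, a, b, hab, hnt', ha, hb⟩ := key
  obtain ⟨Cc, k0, H⟩ := Weil.equidist.{u, v} p d.f1 d.f2 hne d.χ1 d.χ2 ε a b hab hnt'
  refine ⟨Cc, k0, fun k hk E _ _ _ hfr => ?_⟩
  haveI : CharP E p := charP_of_injective_algebraMap (algebraMap F E).injective p
  letI := ZMod.algebra E p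
  haveI : IsScalarTower (ZMod p) F E := .of_algebraMap_eq' <| Subsingleton.elim _ _
  refine le_of_eq_of_le ?_ (H k hk E hfr)
  congr 1
  refine Finset.sum_congr rfl fun x _ => ?_
  rw [Dat.Th, mul_assoc _ (d.ψ1 _)]
  congr 1
  · congr 2
    rw [map_mul, map_pow, map_mul, map_pow, div_eq_mul_inv]
    congr 1
    set y := Algebra.norm F (aeval x d.f2)
    by_cases hy : y = 0
    · rw [hy, inv_zero, zero_pow]; omega
    · have := FiniteField.pow_card_sub_one_eq_one y hy
      rw [inv_eq_iff_eq_inv, eq_comm, inv_eq_iff_eq_inv, ← mul_eq_one_iff_eq_inv₀ hy, ← pow_succ]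
      rw [← this]; congr 1; omega
  · rw [ha, hb, ← AddChar.map_add_eq_mul, ← map_add]
    congr 1
    have h1 : ∀ (c : F) (z : E), c * Algebra.trace F E z = Algebra.trace F E (algebraMap F E c * z) := by
      intro c z
      rw [← Algebra.smul_def, map_smul, smul_eq_mul]
    rw [h1, h1, ← map_add, div_eq_mul_inv, Algebra.trace_trace]

end Weil
end

section
namespace Weil
open Polynomial

variable {F : Type u} [Field F]

/-- resultant -/
noncomputable def BB (f h : F[X]) : F := resultant h f h.natDegree f.natDegree

/-- The multiplicative weight on monic polynomials. -/
noncomputable def Dat.lam (d : Dat F) (h : F[X]) : ℂ :=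
  d.χ1 (BB X h) * d.χ2 (BB d.f1 h / BB d.f2 h) * d.ψ1 (-h.nextCoeff) * d.ψ2 (-(h.coeff 1 / h.coeff 0))

theorem BB_mul (f h1 h2 : F[X]) (m1 : h1.Monic) (m2 : h2.Monic) : BB f (h1 * h2) = BB f h1 * BB f h2 := by
  rw [BB, m1.natDegree_mul m2, resultant_mul_left _ _ _ _ le_rfl]; rfl

theorem BB_X (h : F[X]) : BB X h = (-1) ^ h.natDegree * h.coeff 0 := by
  have := resultant_X_sub_C_right h h.natDegree 0 le_rfl
  rw [C_0, sub_zero, ← coeff_zero_eq_eval_zero] at this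
  rw [BB, natDegree_X, this]

theorem Dat.lam_mul (d : Dat F) (h1 h2 : F[X]) (m1 : h1.Monic) (m2 : h2.Monic) :
    d.lam (h1 * h2) = d.lam h1 * d.lam h2 := by
  simp only [Dat.lam, BB_mul _ _ _ m1 m2]
  by_cases h : h1.coeff 0 = 0
  · simp only [BB_X h1, h, mul_zero, zero_mul]; simp only [MulChar.map_zero]; ring
  by_cases h' : h2.coeff 0 = 0
  · simp only [BB_X h2, h', mul_zero, zero_mul]; simp only [MulChar.map_zero]; ring
  rw [m1.nextCoeff_mul m2, mul_coeff_one, mul_coeff_zero]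
  have e1 : -((h1.coeff 0 * h2.coeff 1 + h1.coeff 1 * h2.coeff 0) / (h1.coeff 0 * h2.coeff 0)) =
    -(h1.coeff 1 / h1.coeff 0) + -(h2.coeff 1 / h2.coeff 0) := by field_simp; ring
  rw [e1, neg_add, AddChar.map_add_eq_mul, AddChar.map_add_eq_mul, mul_div_mul_comm, map_mul, map_mul]
  ring

theorem Dat.lam_one (d : Dat F) : d.lam 1 = 1 := by
  simp [Dat.lam, BB, coeff_one, nextCoeff]

theorem Dat.lam_pow (d : Dat F) (h : F[X]) (m : h.Monic) (e : ℕ) : d.lam (h ^ e) = d.lam h ^ e := by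
  induction e with
  | zero => simp [d.lam_one]
  | succ e ih => rw [pow_succ, d.lam_mul _ _ (m.pow e) m, ih, pow_succ]

theorem Dat.lam_X_sub_C (d : Dat F) (a : F) : d.lam (X - C a) =
    d.χ1 a * d.χ2 (d.f1.eval a / d.f2.eval a) * d.ψ1 a * d.ψ2 a⁻¹ := by
  simp only [Dat.lam, BB, natDegree_X_sub_C]
  rw [resultant_X_sub_C_left _ _ _ le_rfl, resultant_X_sub_C_left _ _ _ le_rfl, resultant_X_sub_C_left _ _ _ le_rfl]
  rw [nextCoeff_X_sub_C]
  by_cases h : a = 0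
  · simp [h]
  simp [neg_div_neg_eq]

section roots
variable (Om : Type v) [Field Om] [IsAlgClosed Om] [Algebra F Om]

theorem BB_roots (f h : F[X]) (m : h.Monic) :
    algebraMap F Om (BB f h) = ((h.aroots Om).map (fun r => aeval r f)).prod := by
  rw [BB, ← resultant_map_map]
  have := resultant_eq_prod_eval (h.map (algebraMap F Om)) (f.map (algebraMap F Om)) f.natDegree
    (natDegree_map_le) (IsAlgClosed.splits _)
  rw [natDegree_map] at this
  rw [this, (m.map _).leadingCoeff, one_pow, one_mul]
  congr 1
  refine Multiset.map_congr rfl fun r _ => ?_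
  rw [eval_map_algebraMap]

theorem T_roots (h : F[X]) (m : h.Monic) :
    algebraMap F Om (-h.nextCoeff) = (h.aroots Om).sum := by
  have := (IsAlgClosed.splits (h.map (algebraMap F Om))).nextCoeff_eq_neg_sum_roots_of_monic (m.map _)
  rw [nextCoeff_map (algebraMap F Om).injective] at this
  rw [map_neg, this, neg_neg]

theorem U_aux (s : Multiset Om) (hs : (0 : Om) ∉ s) :
    ((s.map (fun r => X - C r)).prod.coeff 0 ≠ 0) ∧
    -((s.map (fun r => X - C r)).prod.coeff 1 / (s.map (fun r => X - C r)).prod.coeff 0) =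
      (s.map (fun r => r⁻¹)).sum := by
  induction s using Multiset.induction with
  | empty => simp [coeff_one]
  | cons a s ih =>
    simp only [Multiset.mem_cons, not_or] at hs
    obtain ⟨h1, h2⟩ := ih hs.2
    have ha : a ≠ 0 := fun h => hs.1 h.symm
    simp only [Multiset.map_cons, Multiset.prod_cons, Multiset.sum_cons]
    rw [← h2, mul_coeff_zero, mul_coeff_one]
    generalize (s.map (fun r => X - C r)).prod = g at h1 h2
    have e0 : (X - C a : Om[X]).coeff 0 = -a := by simp
    have e1 : (X - C a : Om[X]).coeff 1 = 1 := by simp [coeff_C]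
    rw [e0, e1]
    refine ⟨mul_ne_zero (neg_ne_zero.2 ha) h1, ?_⟩
    field_simp
    ring

theorem U_roots (h : F[X]) (m : h.Monic) (h0 : h.coeff 0 ≠ 0) :
    algebraMap F Om (-(h.coeff 1 / h.coeff 0)) = ((h.aroots Om).map (fun r => r⁻¹)).sum := by
  have hs : (0 : Om) ∉ h.aroots Om := by
    intro hr
    rw [mem_aroots] at hr
    apply h0
    apply (algebraMap F Om).injective
    rw [map_zero, ← hr.2, coeff_zero_eq_aeval_zero']
  have e := (IsAlgClosed.splits (h.map (algebraMap F Om))).eq_prod_roots_of_monic (m.map _)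
  have := (U_aux Om _ hs).2
  rw [← e] at this
  rw [← this]
  simp

end roots

section ext
variable {E : Type v} [Field E] [Algebra F E] [FiniteDimensional F E] [Algebra.IsSeparable F E]
open IntermediateField Module

theorem emb_ms (Om : Type w) [Field Om] [IsAlgClosed Om] [Algebra F Om] (x : E) :
    (Finset.univ : Finset (F⟮x⟯ →ₐ[F] Om)).val.map (fun σ => σ (AdjoinSimple.gen F x)) =
      (minpoly F x).aroots Om := by
  classical
  have hx : IsIntegral F x := Algebra.IsIntegral.isIntegral x
  have hsep : ((minpoly F x).map (algebraMap F Om)).Separable :=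
    Polynomial.Separable.map (Algebra.IsSeparable.isSeparable F x)
  have hnd : ((minpoly F x).aroots Om).Nodup := nodup_roots hsep
  refine Multiset.Nodup.ext ?_ hnd |>.2 ?_
  · refine Multiset.Nodup.map ?_ Finset.univ.nodup
    intro σ τ h
    exact (adjoin.powerBasis hx).algHom_ext (by simpa using h)
  · intro r
    rw [Multiset.mem_map]
    constructor
    · rintro ⟨σ, -, rfl⟩
      rw [mem_aroots]
      refine ⟨minpoly.ne_zero hx, ?_⟩
      rw [Polynomial.aeval_algHom_apply]
      have : aeval (AdjoinSimple.gen F x) (minpoly F x) = 0 := by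
        rw [← minpoly_gen F x]; exact minpoly.aeval _ _
      rw [this, map_zero]
    · intro hr
      rw [mem_aroots] at hr
      have h2 : aeval r (minpoly F (adjoin.powerBasis hx).gen) = 0 := by
        rw [adjoin.powerBasis_gen, minpoly_gen]; exact hr.2
      refine ⟨(adjoin.powerBasis hx).lift r h2, Finset.mem_val.symm ▸ Finset.mem_univ _, ?_⟩
      have := (adjoin.powerBasis hx).lift_gen r h2
      convert this using 2
      rw [adjoin.powerBasis_gen]

theorem emb_prod (Om : Type w) [Field Om] [IsAlgClosed Om] [Algebra F Om] (x : E) (G : Om → Om) :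
    ∏ σ : F⟮x⟯ →ₐ[F] Om, G (σ (AdjoinSimple.gen F x)) = (((minpoly F x).aroots Om).map G).prod := by
  rw [← emb_ms, Multiset.map_map]; rfl

theorem emb_sum (Om : Type w) [Field Om] [IsAlgClosed Om] [Algebra F Om] (x : E) (G : Om → Om) :
    ∑ σ : F⟮x⟯ →ₐ[F] Om, G (σ (AdjoinSimple.gen F x)) = (((minpoly F x).aroots Om).map G).sum := by
  rw [← emb_ms, Multiset.map_map]; rfl

theorem norm_tower (x : E) (z : F⟮x⟯) : Algebra.norm F (z : E) = Algebra.norm F z ^ finrank F⟮x⟯ E := by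
  rw [← Algebra.norm_norm (S := F⟮x⟯), ← IntermediateField.algebraMap_apply, Algebra.norm_algebraMap, map_pow]

theorem trace_tower (x : E) (z : F⟮x⟯) : Algebra.trace F E (z : E) = finrank F⟮x⟯ E • Algebra.trace F F⟮x⟯ z := by
  rw [← Algebra.trace_trace (S := F⟮x⟯), ← IntermediateField.algebraMap_apply, Algebra.trace_algebraMap, map_nsmul]

theorem Dat.Th_eq (d : Dat F) (x : E) : d.Th E x = d.lam (minpoly F x) ^ finrank F⟮x⟯ E := by
  have hx : IsIntegral F x := Algebra.IsIntegral.isIntegral x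
  have m := minpoly.monic hx
  set e := finrank F⟮x⟯ E with he
  have he0 : e ≠ 0 := (finrank_pos).ne'
  let Om := AlgebraicClosure F
  haveI : Algebra.IsSeparable F F⟮x⟯ := Algebra.isSeparable_tower_bot_of_isSeparable F F⟮x⟯ E
  have hN : ∀ f : F[X], Algebra.norm F (aeval x f) = BB f (minpoly F x) ^ e := by
    intro f
    have h1 : aeval x f = ((aeval (AdjoinSimple.gen F x) f : F⟮x⟯) : E) := by
      conv_lhs => rw [← AdjoinSimple.coe_gen F x]
      rw [← IntermediateField.coe_val, Polynomial.aeval_algHom_apply]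
    rw [h1, norm_tower]
    congr 1
    apply (algebraMap F Om).injective
    rw [Algebra.norm_eq_prod_embeddings F Om, BB_roots Om _ _ m, ← emb_prod]
    refine Finset.prod_congr rfl fun σ _ => ?_
    rw [Polynomial.aeval_algHom_apply]
  have hNx : Algebra.norm F x = BB X (minpoly F x) ^ e := by
    have := hN X; rwa [aeval_X] at this
  have hT : Algebra.trace F E x = e • (-(minpoly F x).nextCoeff) := by
    conv_lhs => rw [← AdjoinSimple.coe_gen F x]
    rw [trace_tower]
    congr 1
    apply (algebraMap F Om).injective
    rw [trace_eq_sum_embeddings (K := F) Om, T_roots (F := F) Om _ m]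
    have := emb_sum (F := F) (E := E) Om x id
    rw [Multiset.map_id] at this
    rw [← this]; rfl
  by_cases h0 : (minpoly F x).coeff 0 = 0
  · have : BB X (minpoly F x) = 0 := by rw [BB_X, h0, mul_zero]
    rw [Dat.Th, hNx, Dat.lam, this, zero_pow he0]; simp only [MulChar.map_zero, zero_mul]
    rw [zero_pow he0]
  have hU : Algebra.trace F E x⁻¹ = e • (-((minpoly F x).coeff 1 / (minpoly F x).coeff 0)) := by
    have h1 : x⁻¹ = (((AdjoinSimple.gen F x)⁻¹ : F⟮x⟯) : E) := by
      rw [IntermediateField.coe_inv, AdjoinSimple.coe_gen]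
    rw [h1, trace_tower]
    congr 1
    apply (algebraMap F Om).injective
    rw [trace_eq_sum_embeddings (K := F) Om, U_roots Om _ m h0, ← emb_sum]
    exact Finset.sum_congr rfl fun σ _ => map_inv₀ σ _
  rw [Dat.Th, hNx, hN, hN, hT, hU, Dat.lam]
  simp only [AddChar.map_nsmul_eq_pow, ← div_pow, map_pow, mul_pow]
end ext
end Weil
end

section
namespace Weil
open Polynomial

variable {F : Type u} [Field F]

theorem mon_finite [Finite F] (k : ℕ) : {h : F[X] | h.Monic ∧ h.natDegree = k}.Finite := by
  have : Set.InjOn (fun (h : F[X]) (i : Fin k) => h.coeff i) {h : F[X] | h.Monic ∧ h.natDegree = k} := by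
    rintro h ⟨m, hd⟩ h' ⟨m', hd'⟩ heq
    ext i
    rcases lt_trichotomy i k with hi | hi | hi
    · exact congrFun heq ⟨i, hi⟩
    · rw [hi]; nth_rewrite 1 [← hd]; rw [← hd', m.coeff_natDegree, m'.coeff_natDegree]
    · rw [coeff_eq_zero_of_natDegree_lt (by omega), coeff_eq_zero_of_natDegree_lt (by omega)]
  exact Set.Finite.of_finite_image (Set.toFinite _) this

/-- Monic polynomials of degree `k`. -/
noncomputable def Mon (F : Type u) [Field F] [Finite F] (k : ℕ) : Finset F[X] := (mon_finite (F := F) k).toFinset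

theorem mem_Mon [Finite F] {k : ℕ} {h : F[X]} : h ∈ Mon F k ↔ h.Monic ∧ h.natDegree = k := by
  simp [Mon]

/-- coefficient of the L function -/
noncomputable def Dat.cc [Finite F] (d : Dat F) (k : ℕ) : ℂ := ∑ h ∈ Mon F k, d.lam h

theorem BB_congr (f h h' : F[X]) (hd : h.natDegree = h'.natDegree) (hdvd : f ∣ h' - h) : BB f h' = BB f h := by
  obtain ⟨p, hp⟩ := hdvd
  have e : h' = h + f * p := by rw [← hp]; ring
  by_cases h0 : f * p = 0
  · rw [e, h0, add_zero]
  have hn : p.natDegree + f.natDegree ≤ h.natDegree := by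
    rw [add_comm, ← natDegree_mul (left_ne_zero_of_mul h0) (right_ne_zero_of_mul h0), ← hp]
    refine (natDegree_sub_le _ _).trans ?_
    rw [hd, max_self]
  rw [BB, ← hd, BB, e, resultant_add_mul_left _ _ _ _ _ hn le_rfl]

/-- modulus -/
noncomputable def Dat.M (d : Dat F) : F[X] := X ^ 2 * (d.f1 * d.f2)

theorem Dat.lam_congr (d : Dat F) (h h' : F[X]) (hd : h.natDegree = h'.natDegree) (hdvd : d.M ∣ h' - h)
    (z : F) (hz : h'.nextCoeff = h.nextCoeff + z) : d.lam h' = d.lam h * d.ψ1 (-z) := by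
  have h1 : d.f1 ∣ h' - h := ((dvd_mul_right _ _).trans (dvd_mul_left _ _)).trans hdvd
  have h2 : d.f2 ∣ h' - h := ((dvd_mul_left _ _).trans (dvd_mul_left _ _)).trans hdvd
  have h4 : X ^ 2 ∣ h' - h := (dvd_mul_right _ _).trans hdvd
  have h3 : X ∣ h' - h := (dvd_pow_self X two_ne_zero).trans h4
  rw [X_pow_dvd_iff] at h4
  have c0 := h4 0 (by norm_num)
  have c1 := h4 1 (by norm_num)
  rw [coeff_sub, sub_eq_zero] at c0 c1
  rw [Dat.lam, BB_congr _ _ _ hd h1, BB_congr _ _ _ hd h2, BB_congr _ _ _ hd h3, c0, c1, hz, Dat.lam,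
    neg_add, AddChar.map_add_eq_mul]
  ring

theorem Dat.cc_zero_of_psi [Finite F] (d : Dat F) (hf1 : d.f1 ≠ 0) (hf2 : d.f2 ≠ 0) (hψ : d.ψ1 ≠ 1) (k : ℕ)
    (hk : d.f1.natDegree + d.f2.natDegree + 3 ≤ k) : d.cc k = 0 := by
  classical
  have hM0 : d.M ≠ 0 := mul_ne_zero (pow_ne_zero _ X_ne_zero) (mul_ne_zero hf1 hf2)
  have hMd : d.M.natDegree = d.f1.natDegree + d.f2.natDegree + 2 := by
    rw [Dat.M, natDegree_mul (pow_ne_zero _ X_ne_zero) (mul_ne_zero hf1 hf2), natDegree_mul hf1 hf2, natDegree_X_pow]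
    ring
  obtain ⟨y, hy⟩ := AddChar.ne_one_iff.1 hψ
  have hl : d.M.leadingCoeff ≠ 0 := leadingCoeff_ne_zero.2 hM0
  let t := -y / d.M.leadingCoeff
  let w : F[X] := d.M * (C t * X ^ (k - 1 - d.M.natDegree))
  have hwd : w.natDegree ≤ k - 1 := by
    refine natDegree_mul_le.trans ?_
    have := natDegree_C_mul_X_pow_le t (k - 1 - d.M.natDegree)
    omega
  have hwk : w.coeff k = 0 := coeff_eq_zero_of_natDegree_lt (by omega)
  have hwk1 : w.coeff (k - 1) = -y := by
    have e : w = C t * d.M * X ^ (k - 1 - d.M.natDegree) := by simp only [w]; ring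
    rw [e, coeff_mul_X_pow', if_pos (by omega)]
    have : k - 1 - (k - 1 - d.M.natDegree) = d.M.natDegree := by omega
    rw [this, coeff_C_mul, coeff_natDegree]
    exact div_mul_cancel₀ _ hl
  have hmem : ∀ h ∈ Mon F k, ∀ c : F, h + C c * w ∈ Mon F k ∧ (h + C c * w).nextCoeff = h.nextCoeff + c * -y := by
    intro h hh c
    obtain ⟨m, hd⟩ := mem_Mon.1 hh
    have hlt : (C c * w).degree < h.degree := by
      refine lt_of_le_of_lt (degree_mul_le _ _) ?_
      refine lt_of_le_of_lt (add_le_add_left degree_C_le _) ?_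
      rw [zero_add]
      rw [degree_eq_natDegree m.ne_zero, hd]
      exact lt_of_le_of_lt degree_le_natDegree (by exact_mod_cast (by omega))
    have hd' : (h + C c * w).natDegree = k := by
      rw [natDegree_add_eq_left_of_degree_lt hlt, hd]
    refine ⟨mem_Mon.2 ⟨m.add_of_left hlt, hd'⟩, ?_⟩
    rw [nextCoeff_of_natDegree_pos (by omega), nextCoeff_of_natDegree_pos (by omega), hd, hd', coeff_add,
      coeff_C_mul, hwk1]
  have key : d.cc k = d.cc k * d.ψ1 y := by
    conv_rhs => rw [Dat.cc, Finset.sum_mul]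
    rw [Dat.cc]
    symm
    refine Finset.sum_bij (fun h _ => h + C 1 * w) (fun h hh => (hmem h hh 1).1) ?_ ?_ ?_
    · intro a _ b _ hab; exact add_right_cancel hab
    · intro b hb
      exact ⟨b + C (-1) * w, (hmem b hb (-1)).1, by simp⟩
    · intro h hh
      rw [d.lam_congr h (h + C 1 * w) _ _ (1 * -y) (hmem h hh 1).2]
      · simp
      · rw [(mem_Mon.1 hh).2, (mem_Mon.1 (hmem h hh 1).1).2]
      · simp only [add_sub_cancel_left]
        exact Dvd.dvd.mul_left (dvd_mul_right _ _) _
  have : d.cc k * (1 - d.ψ1 y) = 0 := by rw [mul_sub, mul_one, ← key, sub_self]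
  exact (mul_eq_zero.1 this).resolve_right (sub_ne_zero.2 (Ne.symm hy))

theorem BB_ne_zero_coprime (f h : F[X]) (m : h.Monic) (hf : f ≠ 0) (h0 : BB f h ≠ 0) : IsCoprime h f := by
  by_contra hc
  apply h0
  rw [Polynomial.isCoprime_iff_aeval_ne_zero_of_isAlgClosed F (AlgebraicClosure F)] at hc
  push Not at hc
  obtain ⟨r, hr1, hr2⟩ := hc
  apply (algebraMap F (AlgebraicClosure F)).injective
  rw [BB_roots _ _ _ m, map_zero]
  apply Multiset.prod_eq_zero
  rw [Multiset.mem_map]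
  exact ⟨r, (mem_aroots.2 ⟨m.ne_zero, hr1⟩), hr2⟩

theorem Dat.cc_zero_of_mul [Finite F] (d : Dat F) (hf1 : d.f1 ≠ 0) (hf2 : d.f2 ≠ 0) (hψ : d.ψ1 = 1) (k : ℕ)
    (hk : d.f1.natDegree + d.f2.natDegree + 2 ≤ k) (u u0 : F[X]) (mu : u.Monic) (mu0 : u0.Monic)
    (hdeg : u.natDegree = u0.natDegree) (hu : d.lam u ≠ 0) (hu0 : d.lam u0 ≠ 0) (hne : d.lam u ≠ d.lam u0) :
    d.cc k = 0 := by
  classical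
  have hM0 : d.M ≠ 0 := mul_ne_zero (pow_ne_zero _ X_ne_zero) (mul_ne_zero hf1 hf2)
  have hMd : d.M.natDegree = d.f1.natDegree + d.f2.natDegree + 2 := by
    rw [Dat.M, natDegree_mul (pow_ne_zero _ X_ne_zero) (mul_ne_zero hf1 hf2), natDegree_mul hf1 hf2, natDegree_X_pow]
    ring
  have hcop : ∀ v : F[X], v.Monic → d.lam v ≠ 0 → IsCoprime v d.M := by
    intro v mv hv
    have hv1 : BB X v ≠ 0 := by intro h; apply hv; rw [Dat.lam, h, MulChar.map_zero]; ring
    have hv2 : BB d.f1 v ≠ 0 := by intro h; apply hv; rw [Dat.lam, h, zero_div, MulChar.map_zero]; ring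
    have hv3 : BB d.f2 v ≠ 0 := by intro h; apply hv; rw [Dat.lam, h, div_zero, MulChar.map_zero]; ring
    exact (BB_ne_zero_coprime _ _ mv X_ne_zero hv1).pow_right.mul_right
      ((BB_ne_zero_coprime _ _ mv hf1 hv2).mul_right (BB_ne_zero_coprime _ _ mv hf2 hv3))
  obtain ⟨a, b, hab⟩ := hcop u0 mu0 hu0
  have hcu := hcop u mu hu
  have hca : IsCoprime a d.M := ⟨u0, b, by rw [← hab]; ring⟩
  have hcw := hcu.mul_left hca
  set w := u * a with hw
  let φ : F[X] → F[X] := fun h => h - h % d.M + (w * h) % d.M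
  have hdl : ∀ g : F[X], (g % d.M).degree < d.M.degree := fun g => EuclideanDomain.mod_lt g hM0
  have hφmem : ∀ h ∈ Mon F k, φ h ∈ Mon F k := by
    intro h hh
    obtain ⟨m, hd⟩ := mem_Mon.1 hh
    have hlt : (-(h % d.M) + (w * h) % d.M).degree < h.degree := by
      refine lt_of_le_of_lt (degree_add_le _ _) ?_
      rw [degree_neg]
      refine lt_of_lt_of_le (max_lt (hdl _) (hdl _)) ?_
      rw [degree_eq_natDegree m.ne_zero, degree_eq_natDegree hM0, hd]
      exact_mod_cast (by omega)
    have e : φ h = h + (-(h % d.M) + (w * h) % d.M) := by simp only [φ]; ring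
    rw [e]
    exact mem_Mon.2 ⟨m.add_of_left hlt, by rw [natDegree_add_eq_left_of_degree_lt hlt, hd]⟩
  have hmodd : ∀ g : F[X], d.M ∣ g - g % d.M := fun g =>
    ⟨g / d.M, by rw [sub_eq_iff_eq_add, EuclideanDomain.div_add_mod]⟩
  have hφc : ∀ h, d.M ∣ φ h - w * h := by
    intro h
    have := dvd_sub (hmodd h) (hmodd (w * h))
    convert this using 1
    simp only [φ]; ring
  have hinj : Set.InjOn φ (Mon F k) := by
    intro h1 _ h2 _ he
    have h3 : d.M ∣ w * (h1 - h2) := by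
      have := dvd_sub (hφc h2) (hφc h1)
      rw [he] at this
      convert this using 1; ring
    have h4 : d.M ∣ h1 - h2 := hcw.symm.dvd_of_dvd_mul_left h3
    have h5 : h1 % d.M = h2 % d.M := mod_eq_of_dvd_sub h4
    have h6 : (w * h1) % d.M = (w * h2) % d.M := by
      apply mod_eq_of_dvd_sub; rwa [← mul_sub]
    simp only [φ, h5, h6] at he
    have := add_right_cancel he
    exact sub_left_inj.1 this
  have hlam : ∀ h ∈ Mon F k, d.lam u0 * d.lam (φ h) = d.lam u * d.lam h := by
    intro h hh
    obtain ⟨m, hd⟩ := mem_Mon.1 hh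
    obtain ⟨m', hd'⟩ := mem_Mon.1 (hφmem h hh)
    rw [← d.lam_mul _ _ mu0 m', ← d.lam_mul _ _ mu m]
    have := d.lam_congr (u * h) (u0 * φ h) ?_ ?_ ((u0 * φ h).nextCoeff - (u * h).nextCoeff) (by ring)
    · rw [this, hψ]; simp
    · rw [mu.natDegree_mul m, mu0.natDegree_mul m', hd, hd', hdeg]
    · have e : u0 * φ h - u * h = u0 * (φ h - w * h) + d.M * (-(u * h * b)) := by
        have : u * h = u * h * (a * u0 + b * d.M) := by rw [hab, mul_one]
        rw [hw]
        linear_combination (u * h) * hab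
      rw [e]
      exact dvd_add (Dvd.dvd.mul_left (hφc h) _) (dvd_mul_right _ _)
  have hsum : ∑ h ∈ Mon F k, d.lam (φ h) = d.cc k := by
    have himg : (Mon F k).image φ = Mon F k :=
      Finset.eq_of_subset_of_card_le (Finset.image_subset_iff.2 hφmem)
        (Finset.card_image_of_injOn hinj).ge
    rw [Dat.cc]
    conv_rhs => rw [← himg, Finset.sum_image hinj]
  have key : d.lam u0 * d.cc k = d.lam u * d.cc k := by
    conv_lhs => rw [← hsum]
    rw [Dat.cc, Finset.mul_sum, Finset.mul_sum]
    exact Finset.sum_congr rfl hlam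
  by_contra h0
  exact hne (mul_right_cancel₀ h0 key).symm
end Weil
end

section
namespace Weil
open Polynomial IntermediateField Module

variable {F : Type u} [Field F]

/-- characteristic polynomial -/
noncomputable def chp (F : Type u) [Field F] {E : Type v} [Field E] [Algebra F E] (x : E) : F[X] :=
  minpoly F x ^ finrank F⟮x⟯ E

theorem chp_monic {E : Type v} [Field E] [Algebra F E] [FiniteDimensional F E] (x : E) : (chp F x).Monic :=
  (minpoly.monic (Algebra.IsIntegral.isIntegral x)).pow _

theorem chp_deg {E : Type v} [Field E] [Algebra F E] [FiniteDimensional F E] (x : E) :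
    (chp F x).natDegree = finrank F E := by
  rw [chp, natDegree_pow, ← IntermediateField.adjoin.finrank (Algebra.IsIntegral.isIntegral x), mul_comm,
    finrank_mul_finrank]

theorem Dat.lam_chp (d : Dat F) {E : Type v} [Field E] [Algebra F E] [FiniteDimensional F E]
    [Algebra.IsSeparable F E] (x : E) : d.lam (chp F x) = d.Th E x := by
  rw [d.Th_eq, chp, d.lam_pow _ (minpoly.monic (Algebra.IsIntegral.isIntegral x))]

theorem mulChar_norm_eq [Fintype F] (χ : MulChar F ℂ) (x : F) (hx : x ≠ 0) : ‖χ x‖ = 1 := by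
  have : (χ x) ^ (Fintype.card F - 1) = 1 := by
    rw [← map_pow, FiniteField.pow_card_sub_one_eq_one x hx, map_one]
  have h2 : Fintype.card F - 1 ≠ 0 := by have := Fintype.one_lt_card (α := F); omega
  exact (Complex.norm_eq_one_of_pow_eq_one this h2)

theorem Dat.Th_norm (d : Dat F) [Fintype F] {E : Type v} [Field E] [Algebra F E] [FiniteDimensional F E] (x : E)
    (h0 : x ≠ 0) (h1 : ((d.f1 * d.f2).map (algebraMap F E)).eval x ≠ 0) : ‖d.Th E x‖ = 1 := by
  rw [eval_map_algebraMap, map_mul] at h1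
  have hn : ∀ y : E, y ≠ 0 → Algebra.norm F y ≠ 0 := fun y hy => by rwa [Ne, Algebra.norm_eq_zero_iff]
  rw [Dat.Th, norm_mul, norm_mul, norm_mul, AddChar.norm_apply, AddChar.norm_apply,
    mulChar_norm_eq _ _ (hn _ h0), mulChar_norm_eq _ _
    (div_ne_zero (hn _ (left_ne_zero_of_mul h1)) (hn _ (right_ne_zero_of_mul h1)))]
  norm_num

theorem Dat.exists_u [Fintype F] (p : ℕ) [Fact p.Prime] [CharP F p] (d : Dat F)
    (hQ : 2 < Fintype.card F) (hne : NonExc d.f1 d.f2 (Fintype.card F - 1)) (hnt : d.Nt) :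
    ∃ u u0 : F[X], u.Monic ∧ u0.Monic ∧ u.natDegree = u0.natDegree ∧ d.lam u ≠ 0 ∧ d.lam u0 ≠ 0 ∧
      d.lam u ≠ d.lam u0 := by
  classical
  by_contra hcon
  push Not at hcon
  obtain ⟨Cc, k0, H⟩ := Dat.equidist.{u, 0} p hQ d hne hnt
  set D := (d.f1 * d.f2).natDegree + 1 with hD
  obtain ⟨k1, hk1⟩ := exists_nat_gt (Cc + D)
  let k := max (max k0 k1) 1
  have hk : 1 ≤ k := le_max_right _ _
  haveI : NeZero (2 * k) := ⟨by omega⟩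
  let E := FiniteField.Extension F p (2 * k)
  letI : Fintype E := Fintype.ofFinite _
  have hfr : finrank F E = 2 * k := FiniteField.finrank_extension F p (2 * k)
  have hS := H k ((le_max_left _ _).trans (le_max_left _ _)) E hfr
  have hcard : Fintype.card E = (Fintype.card F ^ k) ^ 2 := by
    rw [Module.card_eq_pow_finrank (K := F), hfr, ← pow_mul, mul_comm 2 k]
  set R := (d.f1 * d.f2).map (algebraMap F E) with hR
  have hR0 : R ≠ 0 := (Polynomial.map_ne_zero_iff (algebraMap F E).injective).2 (mul_ne_zero hne.1 hne.2.1)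
  have hg := card_good R hR0
  rw [hcard, hR, natDegree_map, ← hD, ← hR] at hg
  set s := Fintype.card F ^ k with hs
  have hsk : k1 < s := lt_of_le_of_lt ((le_max_right _ _).trans (le_max_left _ _)) (Nat.lt_pow_self (by omega))
  have hs' : (Cc + D : ℝ) < s := hk1.trans (by exact_mod_cast hsk)
  have hs1 : (1 : ℝ) ≤ s := by exact_mod_cast (by omega : 1 ≤ s)
  set A := Finset.univ.filter fun x : E => x ≠ 0 ∧ R.eval x ≠ 0 with hA
  have hn1 : ∀ x ∈ A, ‖d.Th E x‖ = 1 := by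
    intro x hx
    obtain ⟨-, h1, h2⟩ := Finset.mem_filter.1 hx
    exact d.Th_norm x h1 h2
  have hz : ∀ x : E, x ∉ A → d.Th E x = 0 := by
    intro x hx
    have : ¬ (x ≠ 0 ∧ R.eval x ≠ 0) := fun h => hx (Finset.mem_filter.2 ⟨Finset.mem_univ _, h⟩)
    rw [Dat.Th]
    by_cases h0 : x = 0
    · rw [h0, Algebra.norm_zero, MulChar.map_zero]; ring
    · have h1 : R.eval x = 0 := by by_contra h; exact this ⟨h0, h⟩
      rw [hR, eval_map_algebraMap, map_mul, mul_eq_zero] at h1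
      rcases h1 with h1 | h1
      · rw [h1, Algebra.norm_zero, zero_div, MulChar.map_zero]; ring
      · rw [h1, Algebra.norm_zero, div_zero, MulChar.map_zero]; ring
  have hsum : ∑ x : E, d.Th E x = ∑ x ∈ A, d.Th E x :=
    (Finset.sum_subset (Finset.subset_univ _) (fun x _ hx => hz x hx)).symm
  have hnorm : ‖∑ x : E, d.Th E x‖ = A.card := by
    rw [hsum]
    rcases A.eq_empty_or_nonempty with h | ⟨y, hy⟩
    · simp [h]
    · rw [Finset.sum_congr rfl (g := fun _ => d.Th E y)]
      · rw [Finset.sum_const, nsmul_eq_mul, norm_mul, hn1 y hy]; simp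
      · intro x hx
        have h1 : d.lam (chp F x) ≠ 0 := by
          rw [d.lam_chp]; intro h; have := hn1 x hx; rw [h] at this; simp at this
        have h2 : d.lam (chp F y) ≠ 0 := by
          rw [d.lam_chp]; intro h; have := hn1 y hy; rw [h] at this; simp at this
        have := hcon _ _ (chp_monic x) (chp_monic y) (by rw [chp_deg, chp_deg]) h1 h2
        rwa [d.lam_chp, d.lam_chp] at this
  rw [hnorm] at hS
  have hs2 : (Fintype.card F : ℝ) ^ k = s := by rw [hs]; push_cast; rfl
  rw [hs2] at hS
  have hg' : (s : ℝ) ^ 2 ≤ A.card + D := by exact_mod_cast hg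
  have hD0 : (0 : ℝ) ≤ D := by positivity
  nlinarith

theorem Dat.cc_zero [Fintype F] (p : ℕ) [Fact p.Prime] [CharP F p] (d : Dat F)
    (hQ : 2 < Fintype.card F) (hne : NonExc d.f1 d.f2 (Fintype.card F - 1)) (hnt : d.Nt) (k : ℕ)
    (hk : d.f1.natDegree + d.f2.natDegree + 3 ≤ k) : d.cc k = 0 := by
  by_cases hψ : d.ψ1 = 1
  · obtain ⟨u, u0, m, m0, hd, h1, h2, h3⟩ := d.exists_u p hQ hne hnt
    exact d.cc_zero_of_mul hne.1 hne.2.1 hψ k (by omega) u u0 m m0 hd h1 h2 h3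
  · exact d.cc_zero_of_psi hne.1 hne.2.1 hψ k hk

end Weil
end

section
namespace Weil
open Polynomial IntermediateField Module UniqueFactorizationMonoid

variable {F : Type u} [Field F]

theorem chp_of_minpoly {E : Type v} [Field E] [Algebra F E] [FiniteDimensional F E] (x : E) (P : F[X])
    (hx : minpoly F x = P) : P.natDegree ∣ finrank F E ∧ chp F x = P ^ (finrank F E / P.natDegree) := by
  have hi : IsIntegral F x := Algebra.IsIntegral.isIntegral x
  have h1 : P.natDegree = finrank F F⟮x⟯ := by rw [← hx, IntermediateField.adjoin.finrank hi]
  have h2 : finrank F F⟮x⟯ * finrank F⟮x⟯ E = finrank F E := finrank_mul_finrank _ _ _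
  refine ⟨⟨_, by rw [h1, h2]⟩, ?_⟩
  rw [chp, hx, h1, ← h2, Nat.mul_div_cancel_left _ finrank_pos]

theorem fib_card [Fintype F] {E : Type v} [Field E] [Algebra F E] [Fintype E] [DecidableEq F] [DecidableEq F[X]]
    (P : F[X]) (hm : P.Monic) (hP : Irreducible P) (hd : P.natDegree ∣ finrank F E) :
    (Finset.univ.filter fun x : E => minpoly F x = P).card = P.natDegree := by
  classical
  have hn : finrank F E ≠ 0 := finrank_pos.ne'
  have hdv := (hP.natDegree_dvd_iff_dvd_X_pow_card_pow_sub_X).1 hd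
  have hsp : ((X ^ Nat.card F ^ finrank F E - X : F[X]).map (algebraMap F E)).Splits := by
    have := FiniteField.isSplittingField_sub E F
    rw [Nat.card_eq_fintype_card, ← Module.card_eq_pow_finrank]
    exact this.splits
  have hs : (P.map (algebraMap F E)).Splits := by
    refine hsp.of_dvd ?_ (Polynomial.map_dvd _ hdv)
    exact map_ne_zero (FiniteField.X_pow_card_pow_sub_X_ne_zero _ hn Finite.one_lt_card)
  have hsep : P.Separable := PerfectField.separable_of_irreducible hP
  rw [← card_rootSet_eq_natDegree hsep hs, ← Set.toFinset_card]
  congr 1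
  ext x
  simp only [Finset.mem_filter, Finset.mem_univ, true_and, Set.mem_toFinset, mem_rootSet]
  constructor
  · rintro rfl
    exact ⟨hm.ne_zero, minpoly.aeval _ _⟩
  · rintro ⟨-, h⟩
    exact (minpoly.eq_of_irreducible_of_monic hP h hm).symm

theorem pow_dvd_iff_count [DecidableEq F] [DecidableEq F[X]] {P h : F[X]} (hP : P ∈ normalizedFactors h) (h0 : h ≠ 0) (e : ℕ) :
    P ^ e ∣ h ↔ e ≤ (normalizedFactors h).count P := by
  rw [pow_dvd_iff_le_emultiplicity, emultiplicity_eq_count_normalizedFactors (irreducible_of_normalized_factor _ hP) h0,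
    normalize_normalized_factor _ hP]
  exact Nat.cast_le

theorem fib_card' [Fintype F] {E : Type v} [Field E] [Algebra F E] [Fintype E] [DecidableEq F] [DecidableEq F[X]]
    [DecidableRel (fun a b : F[X] => a ∣ b)]
    {P h : F[X]} (h0 : h ≠ 0) (hP : P ∈ normalizedFactors h) :
    (Finset.univ.filter fun x : E => chp F x ∣ h ∧ minpoly F x = P).card =
      if P.natDegree ∣ finrank F E ∧ finrank F E / P.natDegree ≤ (normalizedFactors h).count P then P.natDegree else 0 := by
  have hirr := irreducible_of_normalized_factor _ hP
  have hm : P.Monic := by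
    rw [← normalize_normalized_factor _ hP]; exact monic_normalize hirr.ne_zero
  split_ifs with hc
  · rw [← fib_card P hm hirr hc.1]
    congr 1
    ext x
    simp only [Finset.mem_filter, Finset.mem_univ, true_and, and_iff_right_iff_imp]
    intro hx
    rw [(chp_of_minpoly x P hx).2, pow_dvd_iff_count hP h0]
    exact hc.2
  · rw [Finset.card_eq_zero, Finset.filter_eq_empty_iff]
    rintro x - ⟨h1, hx⟩
    have := chp_of_minpoly x P hx
    rw [this.2, pow_dvd_iff_count hP h0] at h1
    exact hc ⟨this.1, h1⟩

theorem count_range (d c k : ℕ) (hd : 0 < d) (hk : d * c ≤ k) :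
    ∑ j ∈ Finset.range k, (if d ∣ j + 1 ∧ (j + 1) / d ≤ c then d else 0) = d * c := by
  rw [← Finset.sum_filter, Finset.sum_const, smul_eq_mul, mul_comm]
  congr 1
  have : (Finset.range k).filter (fun j => d ∣ j + 1 ∧ (j + 1) / d ≤ c) =
      (Finset.range c).image fun e => d * (e + 1) - 1 := by
    ext j
    simp only [Finset.mem_filter, Finset.mem_range, Finset.mem_image]
    constructor
    · rintro ⟨hj, ⟨e, he⟩, h2⟩
      rw [he, Nat.mul_div_cancel_left _ hd] at h2
      have : e ≠ 0 := by rintro rfl; simp at he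
      refine ⟨e - 1, by omega, ?_⟩
      rw [Nat.sub_add_cancel (by omega), ← he]; rfl
    · rintro ⟨e, he, rfl⟩
      have h1 : 0 < d * (e + 1) := by positivity
      have h2 : d * (e + 1) ≤ d * c := Nat.mul_le_mul_left _ he
      rw [Nat.sub_add_cancel h1, Nat.mul_div_cancel_left _ hd]
      exact ⟨by omega, dvd_mul_right _ _, he⟩
  rw [this, Finset.card_image_of_injective, Finset.card_range]
  intro a b hab
  simp only at hab
  have h1 : 0 < d * (a + 1) := by positivity
  have h2 : 0 < d * (b + 1) := by positivity
  have := Nat.eq_of_mul_eq_mul_left hd (show d * (a + 1) = d * (b + 1) by omega)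
  omega

theorem sum_deg_count [DecidableEq F] [DecidableEq F[X]] {h : F[X]} (hm : h.Monic) :
    ∑ P ∈ (normalizedFactors h).toFinset, P.natDegree * (normalizedFactors h).count P = h.natDegree := by
  have h1 : (normalizedFactors h).prod = h := by
    rw [prod_normalizedFactors_eq hm.ne_zero, hm.normalize_eq_self]
  have h2 : ∀ P ∈ normalizedFactors h, P ≠ 0 := fun P hP => (irreducible_of_normalized_factor _ hP).ne_zero
  nth_rewrite 3 [← h1]
  rw [natDegree_multiset_prod _ (fun h => h2 0 h rfl), Finset.sum_multiset_map_count]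
  refine Finset.sum_congr rfl fun P _ => ?_
  rw [smul_eq_mul, mul_comm]

theorem counting [Fintype F] (p : ℕ) [Fact p.Prime] [CharP F p] [DecidableRel (fun a b : F[X] => a ∣ b)]
    [∀ j, Fintype (FiniteField.Extension F p (j + 1))] (h : F[X]) (hm : h.Monic) :
    ∑ j ∈ Finset.range h.natDegree,
      (Finset.univ.filter fun x : FiniteField.Extension F p (j + 1) => chp F x ∣ h).card = h.natDegree := by
  classical
  have h0 := hm.ne_zero
  have e : ∀ j, (Finset.univ.filter fun x : FiniteField.Extension F p (j + 1) => chp F x ∣ h).card =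
      ∑ P ∈ (normalizedFactors h).toFinset,
        if P.natDegree ∣ j + 1 ∧ (j + 1) / P.natDegree ≤ (normalizedFactors h).count P then P.natDegree else 0 := by
    intro j
    rw [Finset.card_eq_sum_card_fiberwise (f := fun x => minpoly F x) (t := (normalizedFactors h).toFinset)]
    · refine Finset.sum_congr rfl fun P hP => ?_
      have := fib_card' (E := FiniteField.Extension F p (j + 1)) h0 (Multiset.mem_toFinset.1 hP)
      rw [FiniteField.finrank_extension] at this
      rw [← this, Finset.filter_filter]
    · intro x hx
      have hx' : chp F x ∣ h := by simpa using hx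
      have hi : IsIntegral F x := Algebra.IsIntegral.isIntegral x
      simp only [Finset.mem_coe, Multiset.mem_toFinset]
      rw [mem_normalizedFactors_iff' h0]
      refine ⟨minpoly.irreducible hi, (minpoly.monic hi).normalize_eq_self, ?_⟩
      exact (dvd_pow_self _ finrank_pos.ne').trans hx'
  simp_rw [e]
  rw [Finset.sum_comm]
  refine (Finset.sum_congr rfl fun P hP => ?_).trans (sum_deg_count hm)
  have hP' := Multiset.mem_toFinset.1 hP
  refine count_range _ _ _ (irreducible_of_normalized_factor _ hP').natDegree_pos ?_
  rw [← sum_deg_count hm]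
  exact Finset.single_le_sum (f := fun P => P.natDegree * (normalizedFactors h).count P) (fun _ _ => Nat.zero_le _) hP

theorem sum_dvd [Fintype F] (d : Dat F) [DecidableRel (fun a b : F[X] => a ∣ b)] (u : F[X]) (hu : u.Monic) (k : ℕ)
    (hk : u.natDegree ≤ k) :
    ∑ h ∈ (Mon F k).filter (fun h => u ∣ h), d.lam h = d.lam u * d.cc (k - u.natDegree) := by
  rw [Dat.cc, Finset.mul_sum]
  symm
  refine Finset.sum_bij (fun h _ => u * h) ?_ ?_ ?_ ?_
  · intro h hh
    rw [mem_Mon] at hh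
    rw [Finset.mem_filter, mem_Mon]
    exact ⟨⟨hu.mul hh.1, by rw [hu.natDegree_mul hh.1]; omega⟩, dvd_mul_right _ _⟩
  · intro a _ b _ hab
    exact mul_left_cancel₀ hu.ne_zero hab
  · intro b hb
    rw [Finset.mem_filter, mem_Mon] at hb
    obtain ⟨⟨hb, hd⟩, w, rfl⟩ := hb
    have hw := hu.of_mul_monic_left hb
    refine ⟨w, mem_Mon.2 ⟨hw, ?_⟩, rfl⟩
    rw [hu.natDegree_mul hw] at hd; omega
  · intro h hh
    rw [mem_Mon] at hh
    rw [d.lam_mul _ _ hu hh.1]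

/-- the power sums -/
noncomputable def Dat.S [Fintype F] (p : ℕ) [Fact p.Prime] [CharP F p] (d : Dat F) (j : ℕ) : ℂ :=
  letI : Fintype (FiniteField.Extension F p (j + 1)) := Fintype.ofFinite _
  ∑ x : FiniteField.Extension F p (j + 1), d.Th (FiniteField.Extension F p (j + 1)) x

theorem Dat.newton [Fintype F] (p : ℕ) [Fact p.Prime] [CharP F p] (d : Dat F) (k : ℕ) :
    (k : ℂ) * d.cc k = ∑ j ∈ Finset.range k, d.S p j * d.cc (k - 1 - j) := by
  classical
  letI : ∀ j, Fintype (FiniteField.Extension F p (j + 1)) := fun j => Fintype.ofFinite _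
  have : ∀ j ∈ Finset.range k, d.S p j * d.cc (k - 1 - j) = ∑ h ∈ Mon F k, d.lam h *
      (Finset.univ.filter fun x : FiniteField.Extension F p (j + 1) => chp F x ∣ h).card := by
    intro j hj
    rw [Finset.mem_range] at hj
    have : d.S p j = ∑ x : FiniteField.Extension F p (j + 1), d.Th (FiniteField.Extension F p (j + 1)) x := rfl
    rw [this, Finset.sum_mul]
    have h2 : ∀ x : FiniteField.Extension F p (j + 1), d.Th (FiniteField.Extension F p (j + 1)) x * d.cc (k - 1 - j) =
        ∑ h ∈ Mon F k, if chp F x ∣ h then d.lam h else 0 := by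
      intro x
      have hx : (chp F x).natDegree = j + 1 := by rw [chp_deg, FiniteField.finrank_extension]
      have := sum_dvd d (chp F x) (chp_monic x) k (by omega)
      rw [← Finset.sum_filter, this, d.lam_chp, hx, Nat.sub_sub, add_comm 1 j]
    simp_rw [h2]
    rw [Finset.sum_comm]
    refine Finset.sum_congr rfl fun h _ => ?_
    rw [← Finset.sum_filter, Finset.sum_const, nsmul_eq_mul, mul_comm]
  rw [Finset.sum_congr rfl this, Finset.sum_comm, Dat.cc, Finset.mul_sum]
  refine Finset.sum_congr rfl fun h hh => ?_
  rw [mem_Mon] at hh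
  rw [← Finset.mul_sum, mul_comm]
  congr 1
  have := counting p h hh.1
  rw [hh.2] at this
  exact_mod_cast this.symm

end Weil
end

section
namespace Weil
open Polynomial

theorem newton_aux (D : ℕ) (om : Fin D → ℂ) (c : ℕ → ℂ)
    (hc : ∀ k, c k = (-1) ^ k * (Multiset.map om Finset.univ.val).esymm k) (k : ℕ) :
    (k : ℂ) * c k = ∑ j ∈ Finset.range k, (- ∑ i, om i ^ (j + 1)) * c (k - 1 - j) := by
  have h := congrArg (MvPolynomial.aeval (R := ℂ) om) (MvPolynomial.mul_esymm_eq_sum (Fin D) ℂ k)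
  simp only [map_mul, map_natCast, map_pow, map_neg, map_one, map_sum,
    MvPolynomial.aeval_esymm_eq_multiset_esymm] at h
  have hps : ∀ j, MvPolynomial.aeval (R := ℂ) om (MvPolynomial.psum (Fin D) ℂ j) = ∑ i, om i ^ j := by
    intro j; simp [MvPolynomial.psum]
  simp only [hps, ← hc] at h
  have h2 : (k : ℂ) * c k = - ∑ a ∈ Finset.HasAntidiagonal.antidiagonal k with a.1 < k, c a.1 * ∑ i, om i ^ a.2 := by
    rw [hc k]
    have : (k : ℂ) * ((-1) ^ k * (Multiset.map om Finset.univ.val).esymm k) =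
      (-1) ^ k * (k * (Multiset.map om Finset.univ.val).esymm k) := by ring
    rw [this, h, ← mul_assoc, ← pow_add, show k + (k + 1) = 2 * k + 1 by ring, pow_succ, pow_mul]
    norm_num
  rw [h2, Finset.sum_filter, Finset.Nat.sum_antidiagonal_eq_sum_range_succ_mk, Finset.sum_range_succ]
  simp only [lt_self_iff_false, if_false, add_zero]
  rw [← Finset.sum_range_reflect, ← Finset.sum_neg_distrib]
  refine Finset.sum_congr rfl fun j hj => ?_
  rw [Finset.mem_range] at hj
  rw [if_pos (by omega), show k - (k - 1 - j) = j + 1 by omega]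
  ring

theorem newton_uniq (c S T : ℕ → ℂ) (h0 : c 0 = 1)
    (hS : ∀ k : ℕ, (k : ℂ) * c k = ∑ j ∈ Finset.range k, S j * c (k - 1 - j))
    (hT : ∀ k : ℕ, (k : ℂ) * c k = ∑ j ∈ Finset.range k, T j * c (k - 1 - j)) (j : ℕ) : S j = T j := by
  induction j using Nat.strong_induction_on with
  | _ j ih =>
    have h1 := (hS (j + 1)).symm.trans (hT (j + 1))
    rw [Finset.sum_range_succ, Finset.sum_range_succ] at h1
    have h2 : ∑ x ∈ Finset.range j, S x * c (j + 1 - 1 - x) = ∑ x ∈ Finset.range j, T x * c (j + 1 - 1 - x) :=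
      Finset.sum_congr rfl fun x hx => by rw [ih x (Finset.mem_range.1 hx)]
    rw [h2] at h1
    simpa [h0] using h1

theorem exists_roots (D : ℕ) (c : ℕ → ℂ) (h0 : c 0 = 1) (hD : ∀ k, D < k → c k = 0) :
    ∃ om : Fin D → ℂ, ∀ k, c k = (-1) ^ k * (Multiset.map om Finset.univ.val).esymm k := by
  set P : ℂ[X] := X ^ D + ∑ i : Fin D, C (c (D - i)) * X ^ (i : ℕ) with hP
  have hm : P.Monic := monic_X_pow_add (degree_sum_fin_lt (fun i : Fin D => c (D - i)))
  have hdeg : P.natDegree = D := by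
    have := degree_add_eq_left_of_degree_lt (p := (X : ℂ[X]) ^ D) (q := ∑ i : Fin D, C (c (D - i)) * X ^ (i : ℕ))
      (by rw [degree_X_pow]; exact degree_sum_fin_lt (fun i : Fin D => c (D - i)))
    rw [natDegree, hP, this, degree_X_pow]; rfl
  have hcard : P.roots.card = P.natDegree := ((IsAlgClosed.splits P).natDegree_eq_card_roots).symm
  have hcoef : ∀ k, k ≤ D → P.coeff k = c (D - k) := by
    intro k hk
    rw [hP, coeff_add, coeff_X_pow, finsetSum_coeff]
    simp only [coeff_C_mul_X_pow]
    rcases hk.eq_or_lt with rfl | hlt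
    · rw [if_pos rfl, Finset.sum_eq_zero]
      · simp [h0]
      · intro i _; rw [if_neg]; exact i.2.ne'
    · rw [if_neg hlt.ne, Finset.sum_eq_single (⟨k, hlt⟩ : Fin D)]
      · simp
      · intro b _ hb; rw [if_neg]; intro h; exact hb (Fin.ext h.symm)
      · simp
  have hl : P.roots.toList.length = D := by rw [Multiset.length_toList, hcard, hdeg]
  refine ⟨fun i => P.roots.toList.get (i.cast hl.symm), fun k => ?_⟩
  have hmap : Multiset.map (fun i : Fin D => P.roots.toList.get (i.cast hl.symm)) Finset.univ.val = P.roots := by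
    conv_rhs => rw [← Multiset.coe_toList P.roots]
    rw [Fin.univ_val_map]
    congr 1
    apply List.ext_get
    · simp [hl]
    · intro n h1 h2; simp
  rw [hmap]
  rcases le_or_gt k D with hk | hk
  · have := coeff_eq_esymm_roots_of_card hcard (k := D - k) (by omega)
    rw [hcoef _ (by omega), hm.leadingCoeff, hdeg, Nat.sub_sub_self hk, one_mul] at this
    exact this
  · rw [hD k hk, Multiset.esymm, Multiset.powersetCard_eq_empty _ (by omega)]
    simp

theorem roots_bdd (D : ℕ) (be : Fin D → ℂ) (Cc : ℝ) (k0 : ℕ) (H : ∀ k ≥ k0, ‖∑ i, be i ^ k‖ ≤ Cc) (i : Fin D) :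
    ‖be i‖ ≤ 1 := by
  classical
  by_contra hcon
  push Not at hcon
  set b := be i with hb
  set p : ℂ[X] := ∏ x ∈ (Finset.univ.image be).erase b, (X - C x) with hp
  have hpb : p.eval b ≠ 0 := by
    rw [hp, eval_prod, Finset.prod_ne_zero_iff]
    intro x hx
    rw [eval_sub, eval_X, eval_C, sub_ne_zero]
    exact (Finset.ne_of_mem_erase hx).symm
  have hp0 : ∀ j, be j ≠ b → p.eval (be j) = 0 := by
    intro j hj
    rw [hp, eval_prod]
    exact Finset.prod_eq_zero (Finset.mem_erase.2 ⟨hj, Finset.mem_image_of_mem _ (Finset.mem_univ _)⟩) (by simp)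
  set mm := (Finset.univ.filter fun j => be j = b).card with hmm
  have hmm1 : 1 ≤ mm := Finset.card_pos.2 ⟨i, by simp [hb]⟩
  have key : ∀ k, ∑ j, p.eval (be j) * be j ^ k = mm * (p.eval b * b ^ k) := by
    intro k
    rw [← Finset.sum_filter_add_sum_filter_not Finset.univ (fun j => be j = b)]
    rw [Finset.sum_congr rfl (g := fun _ => p.eval b * b ^ k), Finset.sum_const, Finset.sum_eq_zero, nsmul_eq_mul,
      add_zero]
    · intro j hj; rw [hp0 j (Finset.mem_filter.1 hj).2, zero_mul]
    · intro j hj; rw [(Finset.mem_filter.1 hj).2]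
  have key2 : ∀ k ≥ k0, ‖∑ j, p.eval (be j) * be j ^ k‖ ≤ ∑ e ∈ Finset.range (p.natDegree + 1), ‖p.coeff e‖ * Cc := by
    intro k hk
    have : ∑ j, p.eval (be j) * be j ^ k = ∑ e ∈ Finset.range (p.natDegree + 1), p.coeff e * ∑ j, be j ^ (e + k) := by
      simp_rw [eval_eq_sum_range, Finset.sum_mul, Finset.mul_sum]
      rw [Finset.sum_comm]
      refine Finset.sum_congr rfl fun e _ => Finset.sum_congr rfl fun j _ => ?_
      ring
    rw [this]
    refine (norm_sum_le _ _).trans (Finset.sum_le_sum fun e _ => ?_)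
    rw [norm_mul]
    exact mul_le_mul_of_nonneg_left (H _ (by omega)) (norm_nonneg _)
  set B := ∑ e ∈ Finset.range (p.natDegree + 1), ‖p.coeff e‖ * Cc
  have hpn : 0 < ‖p.eval b‖ := norm_pos_iff.2 hpb
  obtain ⟨k1, hk1⟩ := pow_unbounded_of_one_lt (B / ‖p.eval b‖) hcon
  rw [div_lt_iff₀ hpn] at hk1
  have h3 := key2 (max k0 k1) (le_max_left _ _)
  rw [key, norm_mul, norm_mul, norm_pow, Complex.norm_natCast] at h3
  have h4 : ‖b‖ ^ k1 ≤ ‖b‖ ^ (max k0 k1) := pow_le_pow_right₀ hcon.le (le_max_right _ _)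
  have h5 : ‖b‖ ^ k1 * ‖p.eval b‖ ≤ ‖b‖ ^ (max k0 k1) * ‖p.eval b‖ := mul_le_mul_of_nonneg_right h4 hpn.le
  have h6 : (1 : ℝ) * (‖p.eval b‖ * ‖b‖ ^ (max k0 k1)) ≤ mm * (‖p.eval b‖ * ‖b‖ ^ (max k0 k1)) := by
    apply mul_le_mul_of_nonneg_right (by exact_mod_cast hmm1) (by positivity)
  linarith

variable {F : Type u} [Field F]

theorem Dat.cc_zero_eq [Fintype F] (d : Dat F) : d.cc 0 = 1 := by
  have : Mon F 0 = {1} := by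
    ext h
    rw [mem_Mon, Finset.mem_singleton]
    constructor
    · rintro ⟨h1, h2⟩; exact h1.natDegree_eq_zero.1 h2
    · rintro rfl; simp
  rw [Dat.cc, this, Finset.sum_singleton, d.lam_one]

theorem Dat.cc_one_eq [Fintype F] (d : Dat F) : d.cc 1 = ∑ a : F, d.lam (X - C a) := by
  rw [Dat.cc]
  symm
  refine Finset.sum_bij (fun a _ => X - C a) ?_ ?_ ?_ ?_
  · intro a _; rw [mem_Mon]; exact ⟨monic_X_sub_C a, natDegree_X_sub_C a⟩
  · intro a _ b _ hab; simpa using hab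
  · intro h hh
    rw [mem_Mon] at hh
    refine ⟨- h.coeff 0, Finset.mem_univ _, ?_⟩
    rw [hh.1.eq_X_add_C hh.2]; simp
  · intros; rfl

/-- Weil bound for mixed character sums -/
theorem Dat.weil [Fintype F] (p : ℕ) [Fact p.Prime] [CharP F p] (d : Dat F)
    (hQ : 2 < Fintype.card F) (hne : NonExc d.f1 d.f2 (Fintype.card F - 1)) (hnt : d.Nt) :
    ‖∑ a : F, d.χ1 a * d.χ2 (d.f1.eval a / d.f2.eval a) * d.ψ1 a * d.ψ2 a⁻¹‖ ≤
      ((d.f1.natDegree + d.f2.natDegree : ℕ) + 2) * √(Fintype.card F) := by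
  set D := d.f1.natDegree + d.f2.natDegree + 2 with hD
  obtain ⟨om, hom⟩ := exists_roots D d.cc d.cc_zero_eq (fun k hk => d.cc_zero p hQ hne hnt k (by omega))
  have hS : ∀ j, d.S p j = - ∑ i, om i ^ (j + 1) :=
    newton_uniq d.cc _ _ d.cc_zero_eq (d.newton p) (newton_aux D om d.cc hom)
  have hQ0 : (0 : ℝ) < Fintype.card F := by exact_mod_cast (by omega : 0 < Fintype.card F)
  obtain ⟨Cc, k0, H⟩ := Dat.equidist.{u, 0} p hQ d hne hnt
  have hb : ∀ i, ‖om i ^ 2 / (Fintype.card F : ℂ)‖ ≤ 1 := by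
    refine roots_bdd D (fun i => om i ^ 2 / (Fintype.card F : ℂ)) Cc (max k0 1) fun k hk => ?_
    have hk0 : k0 ≤ k := (le_max_left _ _).trans hk
    have hk1 : 1 ≤ k := (le_max_right _ _).trans hk
    letI : Fintype (FiniteField.Extension F p (2 * k - 1 + 1)) := Fintype.ofFinite _
    have h1 := H k hk0 (FiniteField.Extension F p (2 * k - 1 + 1))
      (by rw [FiniteField.finrank_extension]; omega)
    have h2 : ∑ x : FiniteField.Extension F p (2 * k - 1 + 1), d.Th (FiniteField.Extension F p (2 * k - 1 + 1)) x
      = d.S p (2 * k - 1) := rfl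
    rw [h2, hS, norm_neg, show 2 * k - 1 + 1 = 2 * k by omega] at h1
    simp only [div_pow, ← pow_mul]
    rw [← Finset.sum_div, norm_div, norm_pow, Complex.norm_natCast, div_le_iff₀ (by positivity)]
    exact h1
  have hb2 : ∀ i, ‖om i‖ ≤ √(Fintype.card F) := by
    intro i
    have := hb i
    rw [norm_div, norm_pow, Complex.norm_natCast, div_le_one hQ0] at this
    exact Real.le_sqrt_of_sq_le this
  have h1 : d.cc 1 = - ∑ i, om i := by
    have := newton_aux D om d.cc hom 1
    simpa [d.cc_zero_eq] using this
  rw [d.cc_one_eq] at h1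
  simp_rw [d.lam_X_sub_C] at h1
  rw [h1, norm_neg]
  refine (norm_sum_le _ _).trans ((Finset.sum_le_sum fun i _ => hb2 i).trans ?_)
  rw [Finset.sum_const, Finset.card_univ, Fintype.card_fin, nsmul_eq_mul, hD]
  push_cast
  exact le_rfl

end Weil
end

section
namespace Weil

theorem expand {J G A : Type*} [Fintype J] [DecidableEq J] [CommGroup G] [Fintype A]
    (Ph : A → G →* ℂ) (B : ℝ) (hB : ∀ g : G, g ≠ 1 → ‖∑ x, Ph x g‖ ≤ B)
    (La : J → Finset G) (h1 : ∀ j, 1 ∈ La j)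
    (hind : ∀ t : J → G, (∀ j, t j ∈ La j) → ∏ j, t j = 1 → t = 1) (a : J → G → ℂ) :
    ‖∑ x, ∏ j, ∑ g ∈ La j, a j g * Ph x g - Fintype.card A * ∏ j, a j 1‖ ≤
      B * (∏ j, ∑ g ∈ La j, ‖a j g‖ - ∏ j, ‖a j 1‖) := by
  classical
  have e1 : ∑ x, ∏ j, ∑ g ∈ La j, a j g * Ph x g =
      ∑ t ∈ Fintype.piFinset La, (∏ j, a j (t j)) * ∑ x, Ph x (∏ j, t j) := by
    simp_rw [Finset.prod_univ_sum, Finset.mul_sum]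
    rw [Finset.sum_comm]
    refine Finset.sum_congr rfl fun t _ => Finset.sum_congr rfl fun x _ => ?_
    rw [Finset.prod_mul_distrib, map_prod]
  have hmem : (1 : J → G) ∈ Fintype.piFinset La := by
    rw [Fintype.mem_piFinset]; exact h1
  have e2 : ∑ x : A, Ph x (∏ j, (1 : J → G) j) = Fintype.card A := by simp
  have e3 : ∑ x, ∏ j, ∑ g ∈ La j, a j g * Ph x g - Fintype.card A * ∏ j, a j 1 =
      ∑ t ∈ (Fintype.piFinset La).erase 1, (∏ j, a j (t j)) * ∑ x, Ph x (∏ j, t j) := by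
    rw [e1, ← Finset.add_sum_erase _ _ hmem, e2]
    simp only [Pi.one_apply]
    ring
  have e4 : ∏ j, ∑ g ∈ La j, ‖a j g‖ - ∏ j, ‖a j 1‖ =
      ∑ t ∈ (Fintype.piFinset La).erase 1, ∏ j, ‖a j (t j)‖ := by
    rw [Finset.prod_univ_sum, ← Finset.add_sum_erase _ _ hmem]
    simp only [Pi.one_apply]
    ring
  rw [e3, e4, Finset.mul_sum]
  refine (norm_sum_le _ _).trans (Finset.sum_le_sum fun t ht => ?_)
  rw [Finset.mem_erase, Fintype.mem_piFinset] at ht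
  rw [norm_mul, norm_prod, mul_comm]
  refine mul_le_mul_of_nonneg_right (hB _ fun h => ht.1 (hind t ht.2 h)) (by positivity)

theorem sieve {J G A : Type*} [Fintype J] [DecidableEq J] [CommGroup G] [Fintype A]
    (Ph : A → G →* ℂ) (B : ℝ) (hB0 : 0 ≤ B) (hB : ∀ g : G, g ≠ 1 → ‖∑ x, Ph x g‖ ≤ B)
    (La : J → Finset G) (h1 : ∀ j, 1 ∈ La j) (h2 : ∀ j, 2 ≤ (La j).card)
    (hor : ∀ j x, ∑ g ∈ La j, Ph x g = 0 ∨ ∑ g ∈ La j, Ph x g = (La j).card)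
    (Lt : Finset G) (ht1 : 1 ∈ Lt) (b : G → ℂ) (q : ℝ) (hq : 0 < q) (hb1 : b 1 = (1 / q : ℝ)) (hb : ∑ g ∈ Lt, ‖b g‖ = 1)
    (hort : ∀ x, ∑ g ∈ Lt, b g * Ph x g = 0 ∨ ∑ g ∈ Lt, b g * Ph x g = 1)
    (hind : ∀ (s : G) (t : J → G), s ∈ Lt → (∀ j, t j ∈ La j) → s * ∏ j, t j = 1 → s = 1 ∧ t = 1)
    (J1 : Finset J) (de : ℝ) (hde : de = 1 - ∑ j ∈ J1, 1 / ((La j).card : ℝ)) (hpos : 0 < de)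
    (hcond : B * q * 2 ^ (J1ᶜ).card * ((J1.card - 1) / de + 2) < Fintype.card A + B) :
    ∃ x, ∑ g ∈ Lt, b g * Ph x g = 1 ∧ ∀ j, ∑ g ∈ La j, Ph x g = 0 := by
  classical
  by_contra hcon
  push Not at hcon
  -- data
  set th : J → ℝ := fun j => 1 - 1 / ((La j).card : ℝ) with hth
  have hc0 : ∀ j, (0 : ℝ) < (La j).card := fun j => by exact_mod_cast (by have := h2 j; omega : 0 < (La j).card)
  have hth0 : ∀ j, 0 < th j := by
    intro j
    have : (2 : ℝ) ≤ (La j).card := by exact_mod_cast h2 j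
    have : 1 / ((La j).card : ℝ) < 1 := by rw [div_lt_one (hc0 j)]; linarith
    simp only [hth]; linarith
  set a0 : J → G → ℂ := fun j g => if g = 1 then 0 else -(1 / ((La j).card : ℝ) : ℝ) with ha0
  set a1 : J → G → ℂ := fun j g => if g = 1 then (th j : ℂ) else -(1 / ((La j).card : ℝ) : ℝ) with ha1
  set a2 : G → ℂ := fun g => if g = 1 then 1 else 0 with ha2
  set Ar : J → A → ℝ := fun j x => if ∑ g ∈ La j, Ph x g = 0 then 1 else 0 with hAr
  set tr : A → ℝ := fun x => if ∑ g ∈ Lt, b g * Ph x g = 0 then 0 else 1 with htr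
  have E0 : ∀ j x, ∑ g ∈ La j, a0 j g * Ph x g = ((Ar j x - th j : ℝ) : ℂ) := by
    intro j x
    have e : ∑ g ∈ La j, a0 j g * Ph x g = -(1 / ((La j).card : ℝ) : ℝ) * (∑ g ∈ La j, Ph x g - 1) := by
      rw [← Finset.add_sum_erase _ _ (h1 j), ← Finset.add_sum_erase _ (fun g => Ph x g) (h1 j), map_one,
        add_sub_cancel_left, Finset.mul_sum]
      simp only [ha0, if_true, zero_mul, zero_add]
      refine Finset.sum_congr rfl fun g hg => ?_
      rw [if_neg (Finset.ne_of_mem_erase hg)]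
    have hc : ((La j).card : ℂ) ≠ 0 := by exact_mod_cast (hc0 j).ne'
    rw [e]
    rcases hor j x with h | h
    · simp only [hAr, h, if_true, hth]; push_cast; ring
    · rw [h]; simp only [hAr, h, if_neg hc, hth]; push_cast; field_simp; ring
  have E1 : ∀ j x, ∑ g ∈ La j, a1 j g * Ph x g = (Ar j x : ℂ) := by
    intro j x
    have : ∑ g ∈ La j, a1 j g * Ph x g = th j + ∑ g ∈ La j, a0 j g * Ph x g := by
      rw [← Finset.add_sum_erase _ _ (h1 j), ← Finset.add_sum_erase _ (fun g => a0 j g * Ph x g) (h1 j), map_one]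
      simp only [ha0, ha1, if_true, zero_mul, zero_add, mul_one]
      congr 1
      refine Finset.sum_congr rfl fun g hg => ?_
      rw [if_neg (Finset.ne_of_mem_erase hg), if_neg (Finset.ne_of_mem_erase hg)]
    rw [this, E0]; push_cast; ring
  have E2 : ∀ j x, ∑ g ∈ La j, a2 g * Ph x g = 1 := by
    intro j x
    simp [ha2, h1 j]
  have Et : ∀ x, ∑ g ∈ Lt, b g * Ph x g = (tr x : ℂ) := by
    intro x
    rcases hort x with h | h
    · rw [h]; simp [htr, h]
    · rw [h]; simp [htr, h]
  have N0 : ∀ j, ∑ g ∈ La j, ‖a0 j g‖ = th j := by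
    intro j
    rw [← Finset.add_sum_erase _ _ (h1 j)]
    have : ∀ g ∈ (La j).erase 1, ‖a0 j g‖ = 1 / ((La j).card : ℝ) := by
      intro g hg
      simp only [ha0, if_neg (Finset.ne_of_mem_erase hg)]
      rw [norm_neg, Complex.norm_real, Real.norm_of_nonneg (div_nonneg zero_le_one (hc0 j).le)]
    rw [Finset.sum_congr rfl this, Finset.sum_const, Finset.card_erase_of_mem (h1 j), nsmul_eq_mul,
      Nat.cast_sub (by have := h2 j; omega)]
    have := hc0 j
    have e0 : ‖a0 j 1‖ = 0 := by simp [ha0]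
    rw [e0]
    simp only [hth]
    clear_value th a0
    generalize ((La j).card : ℝ) = y at this ⊢
    push_cast
    field_simp
    ring
  have N1 : ∀ j, ∑ g ∈ La j, ‖a1 j g‖ = 2 * th j := by
    intro j
    have h3 := N0 j
    rw [← Finset.add_sum_erase _ (fun g => ‖a0 j g‖) (h1 j)] at h3
    rw [← Finset.add_sum_erase _ (fun g => ‖a1 j g‖) (h1 j)]
    have : ∀ g ∈ (La j).erase 1, ‖a1 j g‖ = ‖a0 j g‖ := by
      intro g hg
      simp only [ha0, ha1, if_neg (Finset.ne_of_mem_erase hg)]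
    rw [Finset.sum_congr rfl this]
    have e1 : ‖a1 j 1‖ = th j := by
      simp only [ha1, if_true]; rw [Complex.norm_real, Real.norm_of_nonneg (hth0 j).le]
    have e2 : ‖a0 j 1‖ = 0 := by simp [ha0]
    linarith
  have N2 : ∀ j, ∑ g ∈ La j, ‖a2 g‖ = 1 := by
    intro j
    rw [← Finset.add_sum_erase _ _ (h1 j), Finset.sum_eq_zero]
    · simp [ha2]
    · intro g hg; simp [ha2, Finset.ne_of_mem_erase hg]
  -- general expansion over Option J
  have EX : ∀ a : J → G → ℂ, ‖∑ x, (tr x : ℂ) * ∏ j, ∑ g ∈ La j, a j g * Ph x g -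
      Fintype.card A * ((1 / q : ℝ) * ∏ j, a j 1)‖ ≤
      B * (∏ j, ∑ g ∈ La j, ‖a j g‖ - 1 / q * ∏ j, ‖a j 1‖) := by
    intro a
    have := expand (J := Option J) Ph B hB (fun o => o.elim Lt La) (by rintro (_ | j); exacts [ht1, h1 j])
      (by
        intro t ht hp
        rw [Fintype.prod_option] at hp
        obtain ⟨h3, h4⟩ := hind (t none) (fun j => t (some j)) (ht none) (fun j => ht (some j)) hp
        funext o
        rcases o with _ | j
        · exact h3
        · exact congrFun h4 j) (fun o => o.elim b a)
    simp only [Fintype.prod_option, Option.elim] at this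
    rw [hb, one_mul, hb1, Complex.norm_real, Real.norm_of_nonneg (by positivity)] at this
    simp_rw [Et] at this
    exact this
  set aw : J → G → ℂ := fun j => if j ∈ J1 then a2 else a1 j with haw
  set TH : ℝ := ∏ j ∈ J1ᶜ, th j with hTH
  have hTH0 : 0 < TH := Finset.prod_pos fun j _ => hth0 j
  have split : ∀ {R : Type} [CommMonoid R] (u : J → R), (∏ j, if j ∈ J1 then 1 else u j) = ∏ j ∈ J1ᶜ, u j := by
    intro R _ u
    rw [Finset.compl_eq_univ_sdiff, Finset.prod_ite, Finset.prod_const_one, one_mul]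
    congr 1; ext j; simp
  set w : A → ℝ := fun x => tr x * ∏ j ∈ J1ᶜ, Ar j x with hw
  set W : ℝ := 2 ^ (J1ᶜ).card with hW
  have ew1 : ∀ x, ∏ j, ∑ g ∈ La j, aw j g * Ph x g = ((∏ j ∈ J1ᶜ, Ar j x : ℝ) : ℂ) := by
    intro x
    push_cast
    rw [← split]
    refine Finset.prod_congr rfl fun j _ => ?_
    simp only [haw]
    split_ifs
    · exact E2 j x
    · exact E1 j x
  have ew2 : ∏ j, ∑ g ∈ La j, ‖aw j g‖ = W * TH := by
    rw [hW, hTH, ← Finset.prod_const, ← Finset.prod_mul_distrib, ← split]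
    refine Finset.prod_congr rfl fun j _ => ?_
    simp only [haw]
    split_ifs
    · exact N2 j
    · exact N1 j
  have ew3 : ∏ j, aw j 1 = (TH : ℂ) := by
    rw [hTH]; push_cast; rw [← split]
    refine Finset.prod_congr rfl fun j _ => ?_
    simp only [haw]
    split_ifs <;> simp [ha1, ha2]
  have ew4 : ∏ j, ‖aw j 1‖ = TH := by
    rw [← norm_prod, ew3, Complex.norm_real, Real.norm_of_nonneg hTH0.le]
  have M1 : |∑ x, w x - Fintype.card A * (TH / q)| ≤ B * (W * TH - TH / q) := by
    have := EX aw
    simp_rw [ew1] at this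
    rw [ew2, ew3, ew4] at this
    have h3 : ∑ x, (tr x : ℂ) * ((∏ j ∈ J1ᶜ, Ar j x : ℝ) : ℂ) - Fintype.card A * ((1 / q : ℝ) * (TH : ℂ)) =
      ((∑ x, w x - Fintype.card A * (TH / q) : ℝ) : ℂ) := by
      simp only [hw]; push_cast; ring
    rw [h3, Complex.norm_real, Real.norm_eq_abs] at this
    refine this.trans (le_of_eq ?_); ring
  have M2 : ∀ i ∈ J1, |∑ x, w x * (Ar i x - th i)| ≤ B * (W * TH * th i) := by
    intro i hi
    set ai : J → G → ℂ := fun j => if j = i then a0 j else aw j with hai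
    have f1 : ∀ x, ∏ j, ∑ g ∈ La j, ai j g * Ph x g = (((∏ j ∈ J1ᶜ, Ar j x) * (Ar i x - th i) : ℝ) : ℂ) := by
      intro x
      push_cast
      have h4 := ew1 x
      push_cast at h4
      rw [← h4, mul_comm]
      have h5 : ((Ar i x : ℂ) - th i) = ∏ j, if j = i then ((Ar j x : ℂ) - th j) else 1 := by
        rw [Fintype.prod_ite_eq']
      rw [h5, ← Finset.prod_mul_distrib]
      refine Finset.prod_congr rfl fun j _ => ?_
      simp only [hai]
      split_ifs with hj
      · subst hj
        simp only [haw, if_pos hi]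
        rw [E2, mul_one, E0]; push_cast; rfl
      · rw [one_mul]
    have f2 : ∏ j, ∑ g ∈ La j, ‖ai j g‖ = W * TH * th i := by
      rw [← ew2, mul_comm]
      have h5 : th i = ∏ j, if j = i then th j else 1 := by
        rw [Fintype.prod_ite_eq']
      rw [h5, ← Finset.prod_mul_distrib]
      refine Finset.prod_congr rfl fun j _ => ?_
      simp only [hai]
      split_ifs with hj
      · subst hj
        simp only [haw, if_pos hi]
        rw [N2, mul_one, N0]
      · rw [one_mul]
    have f3 : ∏ j, ai j 1 = 0 := Finset.prod_eq_zero (Finset.mem_univ i) (by simp [hai, ha0])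
    have f4 : ∏ j, ‖ai j 1‖ = 0 := by rw [← norm_prod, f3, norm_zero]
    have := EX ai
    simp_rw [f1] at this
    rw [f2, f3, f4, mul_zero, mul_zero, mul_zero, sub_zero, sub_zero] at this
    have h3 : ∑ x, (tr x : ℂ) * (((∏ j ∈ J1ᶜ, Ar j x) * (Ar i x - th i) : ℝ) : ℂ)  =
      ((∑ x, w x * (Ar i x - th i) : ℝ) : ℂ) := by
      simp only [hw]; push_cast
      exact Finset.sum_congr rfl fun x _ => by ring
    rwa [h3, Complex.norm_real, Real.norm_eq_abs] at this
  have hsth : ∑ j ∈ J1, th j = J1.card - 1 + de := by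
    simp only [hth]; rw [Finset.sum_sub_distrib, hde]; simp
  have T0 : ∑ x, w x * (∑ j ∈ J1, Ar j x - (J1.card - 1)) ≤ 0 := by
    refine Finset.sum_nonpos fun x _ => ?_
    have hA01 : ∀ j, 0 ≤ Ar j x ∧ Ar j x ≤ 1 := by
      intro j; simp only [hAr]; split_ifs <;> norm_num
    have hw0 : 0 ≤ w x := by
      simp only [hw]
      refine mul_nonneg ?_ (Finset.prod_nonneg fun j _ => (hA01 j).1)
      simp only [htr]; split_ifs <;> norm_num
    by_cases hwz : w x = 0
    · rw [hwz, zero_mul]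
    · refine mul_nonpos_of_nonneg_of_nonpos hw0 ?_
      have h3 : tr x ≠ 0 := left_ne_zero_of_mul hwz
      have h4 : ∏ j ∈ J1ᶜ, Ar j x ≠ 0 := right_ne_zero_of_mul hwz
      rw [Finset.prod_ne_zero_iff] at h4
      have h5 : ∑ g ∈ Lt, b g * Ph x g = 1 := by
        rcases hort x with h | h
        · exact absurd (by simp only [htr, h, if_true]) h3
        · exact h
      obtain ⟨i, hi⟩ := hcon x h5
      have hi0 : Ar i x = 0 := by simp only [hAr, if_neg hi]
      have hiJ : i ∈ J1 := by
        by_contra hh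
        exact h4 i (Finset.mem_compl.2 hh) hi0
      rw [← Finset.add_sum_erase _ _ hiJ, hi0, zero_add]
      have h6 : ∑ j ∈ J1.erase i, Ar j x ≤ ∑ j ∈ J1.erase i, (1 : ℝ) := Finset.sum_le_sum fun j _ => (hA01 j).2
      rw [Finset.sum_const, Finset.card_erase_of_mem hiJ, nsmul_eq_mul, mul_one,
        Nat.cast_sub (Finset.card_pos.2 ⟨i, hiJ⟩)] at h6
      push_cast at h6
      linarith
  have T1 : ∑ x, w x * (∑ j ∈ J1, Ar j x - (J1.card - 1)) =
      de * ∑ x, w x + ∑ i ∈ J1, ∑ x, w x * (Ar i x - th i) := by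
    rw [Finset.sum_comm, Finset.mul_sum, ← Finset.sum_add_distrib]
    refine Finset.sum_congr rfl fun x _ => ?_
    rw [← Finset.mul_sum, Finset.sum_sub_distrib, hsth]
    ring
  have T2 : - (B * (W * TH) * (J1.card - 1 + de)) ≤ ∑ i ∈ J1, ∑ x, w x * (Ar i x - th i) := by
    rw [← hsth, Finset.mul_sum, ← Finset.sum_neg_distrib]
    refine Finset.sum_le_sum fun i hi => ?_
    have := (abs_le.1 (M2 i hi)).1
    linarith
  have T3 := (abs_le.1 M1).1
  have T4 : de * (Fintype.card A * (TH / q) - B * (W * TH - TH / q)) ≤ de * ∑ x, w x :=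
    mul_le_mul_of_nonneg_left (by linarith) hpos.le
  have T5 : TH * de / q * (Fintype.card A + B - B * q * W * ((J1.card - 1) / de + 2)) ≤ 0 := by
    have : TH * de / q * (Fintype.card A + B - B * q * W * ((J1.card - 1) / de + 2)) =
      de * (Fintype.card A * (TH / q) - B * (W * TH - TH / q)) - B * (W * TH) * (J1.card - 1 + de) := by
      field_simp
      ring
    rw [this]
    linarith
  have T6 : 0 < TH * de / q * (Fintype.card A + B - B * q * W * ((J1.card - 1) / de + 2)) := by
    apply mul_pos (by positivity)
    linarith
  linarith

end Weil
end

section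
namespace Weil
open Polynomial Module

section
variable (K : Type u) (F : Type v) [Field K] [Field F] [Fintype K] [Fintype F] [Algebra K F]

/-- Frobenius -/
noncomputable def sg : Module.End K F := (FiniteField.frobeniusAlgHom K F).toLinearMap

theorem sg_pow (i : ℕ) (x : F) : (sg K F ^ i) x = x ^ Fintype.card K ^ i := by
  induction i generalizing x with
  | zero => simp
  | succ i ih =>
    rw [pow_succ, Module.End.mul_apply, ih]
    simp only [sg, AlgHom.toLinearMap_apply, FiniteField.coe_frobeniusAlgHom]
    rw [← pow_mul, pow_succ, mul_comm]

theorem aeval_sg (u : K[X]) (x : F) : aeval (sg K F) u x =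
    (∑ i ∈ Finset.range (u.natDegree + 1), C (algebraMap K F (u.coeff i)) * X ^ Fintype.card K ^ i : F[X]).eval x := by
  rw [aeval_eq_sum_range, LinearMap.sum_apply, eval_finsetSum]
  refine Finset.sum_congr rfl fun i _ => ?_
  rw [LinearMap.smul_apply, sg_pow, eval_mul, eval_C, eval_pow, eval_X, Algebra.smul_def]

theorem finrank_ker_le (u : K[X]) (hu : u ≠ 0) : finrank K (LinearMap.ker (aeval (sg K F) u)) ≤ u.natDegree := by
  classical
  set q := Fintype.card K with hq
  have hq1 : 1 < q := Fintype.one_lt_card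
  set L : F[X] := ∑ i ∈ Finset.range (u.natDegree + 1), C (algebraMap K F (u.coeff i)) * X ^ q ^ i with hL
  have hinj : Function.Injective fun i : ℕ => q ^ i := Nat.pow_right_injective hq1
  have hcoef : L.coeff (q ^ u.natDegree) ≠ 0 := by
    rw [hL, finsetSum_coeff, Finset.sum_eq_single u.natDegree]
    · simpa [coeff_C_mul_X_pow] using hu
    · intro b _ hb
      rw [coeff_C_mul_X_pow, if_neg]
      intro h; exact hb (hinj h).symm
    · intro h; simp at h
  have hL0 : L ≠ 0 := by intro h; rw [h] at hcoef; simp at hcoef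
  have hdeg : L.natDegree ≤ q ^ u.natDegree := by
    rw [hL]
    refine natDegree_sum_le_of_forall_le _ _ fun i hi => (natDegree_C_mul_X_pow_le _ _).trans ?_
    exact Nat.pow_le_pow_right (by omega) (by rw [Finset.mem_range] at hi; omega)
  have hcard : Fintype.card (LinearMap.ker (aeval (sg K F) u)) ≤ q ^ u.natDegree := by
    refine le_trans ?_ hdeg
    refine le_trans ?_ (L.card_roots')
    refine le_trans ?_ (Multiset.toFinset_card_le L.roots)
    rw [← Fintype.card_coe]
    refine Fintype.card_le_of_injective (fun x => ⟨x.1, ?_⟩) ?_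
    · rw [Multiset.mem_toFinset, mem_roots hL0, IsRoot]
      have := x.2
      rw [LinearMap.mem_ker, aeval_sg] at this
      exact this
    · intro x y hxy
      exact Subtype.ext (congrArg (fun z => z.1) hxy)
  rw [Module.card_eq_pow_finrank (K := K), ← hq] at hcard
  exact (Nat.pow_le_pow_iff_right hq1).1 hcard


theorem aeval_sg_XM (m : ℕ) (hm : finrank K F = m) : aeval (sg K F) (X ^ m - 1 : K[X]) = 0 := by
  ext x
  rw [map_sub, map_pow, aeval_X, map_one, LinearMap.sub_apply, sg_pow, ← hm, ← Module.card_eq_pow_finrank,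
    FiniteField.pow_card]
  simp

theorem XM_ne (m : ℕ) (hm : finrank K F = m) : (X ^ m - 1 : K[X]) ≠ 0 := by
  have : 0 < m := hm ▸ finrank_pos
  exact X_pow_sub_C_ne_zero this 1

theorem range_le (m : ℕ) (hm : finrank K F = m) (e e' : K[X]) (h : e * e' = X ^ m - 1) :
    LinearMap.range (aeval (sg K F) e') ≤ LinearMap.ker (aeval (sg K F) e) := by
  rintro _ ⟨y, rfl⟩
  rw [LinearMap.mem_ker, ← Module.End.mul_apply, ← map_mul, h, aeval_sg_XM K F m hm]; rfl

theorem finrank_ker (m : ℕ) (hm : finrank K F = m) (e e' : K[X]) (h : e * e' = X ^ m - 1) :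
    finrank K (LinearMap.ker (aeval (sg K F) e)) = e.natDegree := by
  have h0 := XM_ne K F m hm
  rw [← h] at h0
  have hd : e.natDegree + e'.natDegree = m := by
    rw [← natDegree_mul (left_ne_zero_of_mul h0) (right_ne_zero_of_mul h0), h]
    exact natDegree_X_pow_sub_C (R := K) (n := m) (r := 1)
  refine le_antisymm (finrank_ker_le K F e (left_ne_zero_of_mul h0)) ?_
  have h1 := LinearMap.finrank_range_add_finrank_ker (aeval (sg K F) e')
  have h2 := finrank_ker_le K F e' (right_ne_zero_of_mul h0)
  have h3 := Submodule.finrank_mono (range_le K F m hm e e' h)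
  omega

theorem finrank_range (m : ℕ) (hm : finrank K F = m) (e e' : K[X]) (h : e * e' = X ^ m - 1) :
    finrank K (LinearMap.range (aeval (sg K F) e)) = e'.natDegree := by
  have h0 := XM_ne K F m hm
  rw [← h] at h0
  have hd : e.natDegree + e'.natDegree = m := by
    rw [← natDegree_mul (left_ne_zero_of_mul h0) (right_ne_zero_of_mul h0), h]
    exact natDegree_X_pow_sub_C (R := K) (n := m) (r := 1)
  have h1 := LinearMap.finrank_range_add_finrank_ker (aeval (sg K F) e)
  rw [finrank_ker K F m hm e e' h] at h1
  omega

theorem range_eq (m : ℕ) (hm : finrank K F = m) (e e' : K[X]) (h : e * e' = X ^ m - 1) :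
    LinearMap.range (aeval (sg K F) e') = LinearMap.ker (aeval (sg K F) e) := by
  refine Submodule.eq_of_le_of_finrank_eq (range_le K F m hm e e' h) ?_
  rw [finrank_ker K F m hm e e' h, finrank_range K F m hm e' e (by rw [mul_comm, h])]

theorem card_quot (m : ℕ) (hm : finrank K F = m) (e : K[X]) (h : e ∣ X ^ m - 1) :
    Nat.card (F ⧸ LinearMap.range (aeval (sg K F) e)) = Fintype.card K ^ e.natDegree := by
  obtain ⟨e', h⟩ := h
  rw [Module.natCard_eq_pow_finrank (K := K), Nat.card_eq_fintype_card]
  congr 1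
  have h1 := Submodule.finrank_quotient_add_finrank (LinearMap.range (aeval (sg K F) e))
  have h2 := LinearMap.finrank_range_add_finrank_ker (aeval (sg K F) e)
  rw [finrank_ker K F m hm e e' h.symm] at h2
  omega

theorem normal_of (m : ℕ) (hm : finrank K F = m) (x : F) (hx : ∀ e : K[X], Irreducible e → e.Monic → e ∣ X ^ m - 1 →
      x ∉ LinearMap.range (aeval (sg K F) e)) :
    LinearIndependent K (fun i : Fin m => x ^ Fintype.card K ^ (i : ℕ)) ∧
    Submodule.span K (Set.range fun i : Fin m => x ^ Fintype.card K ^ (i : ℕ)) = ⊤ := by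
  classical
  have hli : LinearIndependent K (fun i : Fin m => x ^ Fintype.card K ^ (i : ℕ)) := by
    rw [Fintype.linearIndependent_iff]
    intro c hc
    by_contra hcon
    push Not at hcon
    obtain ⟨i0, hi0⟩ := hcon
    set u : K[X] := ∑ i : Fin m, C (c i) * X ^ (i : ℕ) with hu
    have hu0 : u ≠ 0 := by
      intro h
      have : u.coeff i0 = c i0 := by
        rw [hu, finsetSum_coeff, Finset.sum_eq_single i0]
        · simp
        · intro b _ hb; rw [coeff_C_mul_X_pow, if_neg]; intro h; exact hb (Fin.ext h.symm)
        · simp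
      rw [h] at this; exact hi0 (by simpa using this.symm)
    have hux : aeval (sg K F) u x = 0 := by
      rw [hu, map_sum, LinearMap.sum_apply, ← hc]
      refine Finset.sum_congr rfl fun i _ => ?_
      rw [map_mul, aeval_C, map_pow, aeval_X, Module.End.mul_apply, sg_pow, Module.algebraMap_end_apply]
    have hdeg : u.degree < m := degree_sum_fin_lt c
    set d := EuclideanDomain.gcd u (X ^ m - 1) with hd
    have hdx : aeval (sg K F) d x = 0 := by
      rw [hd, EuclideanDomain.gcd_eq_gcd_ab, mul_comm u, mul_comm (X ^ m - 1 : K[X]), map_add, map_mul, map_mul, LinearMap.add_apply,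
        Module.End.mul_apply, Module.End.mul_apply, hux, aeval_sg_XM K F m hm]
      simp
    obtain ⟨w, hw⟩ : d ∣ X ^ m - 1 := EuclideanDomain.gcd_dvd_right _ _
    have h0 := XM_ne K F m hm
    have hw0 : w ≠ 0 := by rintro rfl; exact h0 (by rw [hw, mul_zero])
    have hwu : ¬ IsUnit w := by
      intro hwu
      have h3 : d.degree = (X ^ m - 1 : K[X]).degree := by
        rw [hw, degree_mul, degree_eq_zero_of_isUnit hwu, add_zero]
      have h4 : (X ^ m - 1 : K[X]).degree = m := degree_X_pow_sub_C (R := K) (n := m) (hm ▸ finrank_pos) 1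
      have h5 : d.degree ≤ u.degree := degree_le_of_dvd (EuclideanDomain.gcd_dvd_left _ _) hu0
      rw [h3, h4] at h5
      exact absurd hdeg (not_lt.2 h5)
    obtain ⟨e, hem, hei, w', rfl⟩ := exists_monic_irreducible_factor w hwu
    refine hx e hei hem ⟨d * w', by rw [hw]; ring⟩ ?_
    rw [range_eq K F m hm (d * w') e (by rw [hw]; ring), LinearMap.mem_ker, mul_comm, map_mul, Module.End.mul_apply,
      hdx, map_zero]
  refine ⟨hli, ?_⟩
  apply hli.span_eq_top_of_card_eq_finrank'
  rw [hm, Fintype.card_fin]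

end

end Weil
end

section
namespace Weil
open Polynomial Module

theorem indep_mul {ι G : Type*} [Fintype ι] [DecidableEq ι] [CommGroup G] (n : ι → ℕ)
    (hn : ∀ i j, i ≠ j → Nat.Coprime (n i) (n j)) (t : ι → G) (ht : ∀ i, t i ^ n i = 1) (hp : ∏ i, t i = 1) (i : ι) :
    t i = 1 := by
  set M := ∏ j ∈ Finset.univ.erase i, n j with hM
  have h1 : t i ^ M = 1 := by
    have h2 : (∏ j, t j) ^ M = 1 := by rw [hp, one_pow]
    rw [← Finset.prod_pow, ← Finset.mul_prod_erase _ _ (Finset.mem_univ i), Finset.prod_eq_one, mul_one] at h2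
    · exact h2
    · intro j hj
      obtain ⟨w, hw⟩ := Finset.dvd_prod_of_mem n hj
      rw [hM, hw, pow_mul, ht, one_pow]
  have hc : Nat.Coprime (n i) M := Nat.Coprime.prod_right fun j hj => hn i j (Finset.ne_of_mem_erase hj).symm
  have h3 := Nat.dvd_gcd (orderOf_dvd_of_pow_eq_one (ht i)) (orderOf_dvd_of_pow_eq_one h1)
  rw [hc] at h3
  exact orderOf_eq_one_iff.1 (Nat.dvd_one.1 h3)

theorem indep_add {ι K F : Type*} [Fintype ι] [DecidableEq ι] [Field K] [Field F] [Algebra K F]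
    (s : Module.End K F) (e : ι → K[X]) (hn : ∀ i j, i ≠ j → IsCoprime (e i) (e j)) (t : ι → AddChar F ℂ)
    (ht : ∀ i y, t i (aeval s (e i) y) = 1) (hp : ∏ i, t i = 1) (i : ι) :
    t i = 1 := by
  set M := ∏ j ∈ Finset.univ.erase i, e j with hM
  have h1 : ∀ y, t i (aeval s M y) = 1 := by
    intro y
    have h2 : (∏ j, t j) (aeval s M y) = 1 := by rw [hp]; rfl
    rw [AddChar.prod_apply, ← Finset.mul_prod_erase _ _ (Finset.mem_univ i), Finset.prod_eq_one, mul_one] at h2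
    · exact h2
    · intro j hj
      obtain ⟨w, hw⟩ := Finset.dvd_prod_of_mem e hj
      rw [hM, hw, map_mul, Module.End.mul_apply, ht]
  have hc : IsCoprime (e i) M := IsCoprime.prod_right fun j hj => hn i j (Finset.ne_of_mem_erase hj).symm
  obtain ⟨a, b, hab⟩ := hc
  ext y
  have h4 : aeval s (e i) (aeval s a y) + aeval s M (aeval s b y) = y := by
    rw [← Module.End.mul_apply, ← Module.End.mul_apply, ← map_mul, ← map_mul, ← LinearMap.add_apply, ← map_add,
      mul_comm (e i), mul_comm M, hab, map_one]; rfl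
  rw [← h4, AddChar.map_add_eq_mul, ht, h1, mul_one]; rfl

theorem orth {G : Type*} [CommGroup G] [Fintype G] (H : Subgroup G) (La : Finset G)
    (hL : ∀ g, g ∈ La ↔ g ∈ H) (φ : G →* ℂ) : ∑ g ∈ La, φ g = 0 ∨ ∑ g ∈ La, φ g = La.card := by
  by_cases h : ∀ g ∈ La, φ g = 1
  · right; rw [Finset.sum_congr rfl h]; simp
  · left
    push Not at h
    obtain ⟨g0, hg0, hne⟩ := h
    have : φ g0 * ∑ g ∈ La, φ g = ∑ g ∈ La, φ g := by
      rw [Finset.mul_sum]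
      refine Finset.sum_bij (fun g _ => g0 * g) ?_ ?_ ?_ ?_
      · intro g hg; rw [hL] at *; exact H.mul_mem hg0 hg
      · intro a _ b _ hab; exact mul_left_cancel hab
      · intro g hg; rw [hL] at *
        exact ⟨g0⁻¹ * g, (hL _).2 (H.mul_mem (H.inv_mem hg0) hg), by simp⟩
      · intro g _; rw [map_mul]
    have h2 : (φ g0 - 1) * ∑ g ∈ La, φ g = 0 := by rw [sub_mul, this]; ring
    exact (mul_eq_zero.1 h2).resolve_left (sub_ne_zero.2 hne)

/-- the group of character quadruples -/
abbrev GG (F : Type*) [Field F] := MulChar F ℂ × MulChar F ℂ × AddChar F ℂ × AddChar F ℂ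

/-- good points -/
abbrev Good {F : Type*} [Field F] (f1 f2 : F[X]) := {x : F // x ≠ 0 ∧ f1.eval x ≠ 0 ∧ f2.eval x ≠ 0}

/-- evaluation of quadruples -/
noncomputable def Phi {F : Type*} [Field F] (f1 f2 : F[X]) (x : Good f1 f2) : GG F →* ℂ where
  toFun g := g.1 x.1 * g.2.1 (f1.eval x.1 / f2.eval x.1) * g.2.2.1 x.1 * g.2.2.2 x.1⁻¹
  map_one' := by
    obtain ⟨x, h0, h1, h2⟩ := x
    simp only [Prod.fst_one, Prod.snd_one, AddChar.one_apply, mul_one]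
    rw [MulChar.one_apply (isUnit_iff_ne_zero.2 h0), MulChar.one_apply (isUnit_iff_ne_zero.2 (div_ne_zero h1 h2)), mul_one]
  map_mul' := by
    intro g h
    simp only [Prod.fst_mul, Prod.snd_mul, AddChar.mul_apply, MulChar.mul_apply]
    ring

theorem Phi_bound {F : Type u} [Field F] [Fintype F] (p : ℕ) [Fact p.Prime] [CharP F p] (f1 f2 : F[X])
    (hQ : 2 < Fintype.card F) (hne : NonExc f1 f2 (Fintype.card F - 1)) [Fintype (Good f1 f2)] (g : GG F) (hg : g ≠ 1) :
    ‖∑ x, Phi f1 f2 x g‖ ≤ ((f1.natDegree + f2.natDegree : ℕ) + 2) * √(Fintype.card F) := by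
  classical
  set d : Dat F := ⟨g.1, g.2.1, g.2.2.1, g.2.2.2, f1, f2⟩ with hd
  have hnt : d.Nt := by
    by_contra h
    simp only [Dat.Nt, not_or, not_not] at h
    exact hg (Prod.ext h.1 (Prod.ext h.2.1 (Prod.ext h.2.2.1 h.2.2.2)))
  have := d.weil p hQ hne hnt
  refine le_trans (le_of_eq ?_) this
  congr 1
  symm
  have e1 : ∑ a ∈ Finset.univ.filter (fun x : F => x ≠ 0 ∧ f1.eval x ≠ 0 ∧ f2.eval x ≠ 0),
     d.χ1 a * d.χ2 (d.f1.eval a / d.f2.eval a) * d.ψ1 a * d.ψ2 a⁻¹ =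
     ∑ a : F, d.χ1 a * d.χ2 (d.f1.eval a / d.f2.eval a) * d.ψ1 a * d.ψ2 a⁻¹ := by
    refine Finset.sum_subset (Finset.subset_univ _) fun x _ hx => ?_
    have hx' : ¬ (x ≠ 0 ∧ f1.eval x ≠ 0 ∧ f2.eval x ≠ 0) := fun h => hx (Finset.mem_filter.2 ⟨Finset.mem_univ _, h⟩)
    have h3 : d.χ1 x = 0 ∨ d.χ2 (d.f1.eval x / d.f2.eval x) = 0 := by
      by_cases h0 : x = 0
      · left; rw [h0, MulChar.map_zero]
      · right
        by_cases h1 : f1.eval x = 0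
        · simp only [hd, h1, zero_div]; rw [MulChar.map_zero]
        · have h2 : f2.eval x = 0 := by by_contra h2; exact hx' ⟨h0, h1, h2⟩
          simp only [hd, h2, div_zero]; rw [MulChar.map_zero]
    rcases h3 with h | h <;> rw [h] <;> ring
  rw [← e1]
  exact Finset.sum_subtype _ (by simp) _

theorem card_Good {F : Type u} [Field F] [Fintype F] (f1 f2 : F[X]) (h1 : f1 ≠ 0) (h2 : f2 ≠ 0) [Fintype (Good f1 f2)] :
    Fintype.card F ≤ Fintype.card (Good f1 f2) + (f1.natDegree + f2.natDegree + 1) := by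
  classical
  have := card_good (f1 * f2) (mul_ne_zero h1 h2)
  rw [natDegree_mul h1 h2] at this
  refine this.trans (Nat.add_le_add_right (le_of_eq ?_) _)
  rw [Fintype.card_subtype]
  congr 1; ext x; simp [not_or]

/-- additive characters trivial on a submodule -/
noncomputable def ann {K F : Type*} [Field K] [Field F] [Algebra K F] (V : Submodule K F) : AddChar (F ⧸ V) ℂ →* AddChar F ℂ where
  toFun ψ := ψ.compAddMonoidHom V.mkQ.toAddMonoidHom
  map_one' := by ext; rfl
  map_mul' _ _ := by ext; rfl

theorem ann_inj {K F : Type*} [Field K] [Field F] [Algebra K F] (V : Submodule K F) : Function.Injective (ann V) := by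
  intro a b hab
  ext y
  obtain ⟨x, rfl⟩ := V.mkQ_surjective y
  exact DFunLike.congr_fun hab x

theorem ann_apply {K F : Type*} [Field K] [Field F] [Algebra K F] (V : Submodule K F) (ψ : AddChar (F ⧸ V) ℂ) (x : F)
    (hx : x ∈ V) : ann V ψ x = 1 := by
  have : V.mkQ x = 0 := by simpa using hx
  change ψ (V.mkQ x) = 1
  rw [this, AddChar.map_zero_eq_one]

theorem card_ann {K F : Type*} [Field K] [Field F] [Finite F] [Algebra K F] (V : Submodule K F) :
    Nat.card (ann V).range = Nat.card (F ⧸ V) := by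
  haveI : Finite (F ⧸ V) := Finite.of_surjective _ V.mkQ_surjective
  haveI : Fintype (F ⧸ V) := Fintype.ofFinite _
  have h1 : Nat.card (ann V).range = Nat.card (AddChar (F ⧸ V) ℂ) :=
    Nat.card_congr (MonoidHom.ofInjective (ann_inj V)).symm.toEquiv
  rw [h1, Nat.card_eq_fintype_card, AddChar.card_eq, Nat.card_eq_fintype_card]

/-- pullback along the trace -/
noncomputable def trc (K F : Type*) [Field K] [Field F] [Algebra K F] : AddChar K ℂ →* AddChar F ℂ where
  toFun ψ := ψ.compAddMonoidHom (Algebra.trace K F).toAddMonoidHom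
  map_one' := by ext; rfl
  map_mul' _ _ := by ext; rfl

theorem trc_apply (K F : Type*) [Field K] [Field F] [Algebra K F] (ψ : AddChar K ℂ) (x : F) :
    trc K F ψ x = ψ (Algebra.trace K F x) := rfl

theorem trc_inj (K F : Type*) [Field K] [Field F] [Finite F] [Finite K] [Algebra K F] : Function.Injective (trc K F) := by
  intro a b hab
  ext y
  obtain ⟨x, rfl⟩ := Algebra.trace_surjective K F y
  exact DFunLike.congr_fun hab x

theorem exists_chi (F : Type*) [Field F] [Fintype F] (c : ℕ) (hc : c ∣ Fintype.card F - 1) (hc0 : c ≠ 0) :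
    ∃ χ : MulChar F ℂ, orderOf χ = c :=
  MulChar.exists_mulChar_orderOf F hc (Complex.isPrimitiveRoot_exp c hc0)

theorem primitive_of {F : Type*} [Field F] [Fintype F] (x : F) (hx : x ≠ 0)
    (h : ∀ c : ℕ, c.Prime → c ∣ Fintype.card F - 1 → ¬ ∃ y, y ^ c = x) : orderOf x = Fintype.card F - 1 := by
  classical
  have h1 : 0 < Fintype.card F - 1 := by have := Fintype.one_lt_card (α := F); omega
  refine orderOf_eq_of_pow_and_pow_div_prime h1 (FiniteField.pow_card_sub_one_eq_one x hx) fun c hc hd hcon => ?_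
  obtain ⟨g, hg⟩ := IsCyclic.exists_generator (α := Fˣ)
  obtain ⟨k, hk⟩ := (mem_powers_iff_mem_zpowers.2 (hg (Units.mk0 x hx)))
  have hgo : orderOf g = Fintype.card F - 1 := by
    rw [orderOf_eq_card_of_forall_mem_zpowers hg, Nat.card_eq_fintype_card, Fintype.card_units]
  have h2 : g ^ (k * ((Fintype.card F - 1) / c)) = 1 := by
    rw [pow_mul]
    simp only at hk
    rw [hk]
    ext; simpa using hcon
  have h3 := orderOf_dvd_of_pow_eq_one h2
  rw [hgo] at h3
  obtain ⟨N, hN⟩ := hd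
  rw [hN, Nat.mul_div_cancel_left _ hc.pos] at h3
  have hN0 : 0 < N := by rcases Nat.eq_zero_or_pos N with rfl | h; · omega
                         · exact h
  obtain ⟨j, rfl⟩ := Nat.dvd_of_mul_dvd_mul_right hN0 h3
  refine h c hc ⟨N, hN⟩ ⟨((g ^ j : Fˣ) : F), ?_⟩
  have := congrArg (fun z : Fˣ => (z : F)) hk
  simp only [Units.val_mk0] at this
  rw [← this, mul_comm c j, pow_mul]; simp

end Weil
end

section
namespace Weil
open Polynomial Module

theorem assembly {K : Type u} {F : Type v} [Field K] [Field F] [Fintype K] [Fintype F] [Algebra K F]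
    (p : ℕ) [Fact p.Prime] [CharP F p] (m : ℕ) (hm : finrank K F = m) (hQ : 2 < Fintype.card F)
    (PP : Finset ℕ) (hPP : ∀ c, c ∈ PP ↔ c.Prime ∧ c ∣ Fintype.card F - 1)
    (EE : Finset K[X]) (hEE : ∀ e, e ∈ EE ↔ Irreducible e ∧ e.Monic ∧ e ∣ X ^ m - 1)
    (pr : ℕ → Prop) [DecidablePred pr] (gr : K[X] → Prop) [DecidablePred gr]
    (f1 f2 : F[X]) (hne : NonExc f1 f2 (Fintype.card F - 1)) (de : ℝ)
    (hde : de = 1 - 2 * (∑ c ∈ PP.filter (fun c => ¬ pr c), (1 : ℝ) / c) -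
      ∑ e ∈ EE.filter (fun e => ¬ gr e), (1 : ℝ) / (Fintype.card K : ℝ) ^ e.natDegree) (hpos : 0 < de)
    (hcond : ((f1.natDegree + f2.natDegree : ℕ) + 2) * √(Fintype.card F) * Fintype.card K *
      2 ^ (2 * (PP.filter pr).card + (EE.filter gr).card) *
      ((2 * (PP.filter (fun c => ¬ pr c)).card + (EE.filter (fun e => ¬ gr e)).card - 1) / de + 2) < Fintype.card F)
    (a : K) :
    ∃ x : F, x ≠ 0 ∧ f1.eval x ≠ 0 ∧ f2.eval x ≠ 0 ∧ Algebra.trace K F x⁻¹ = a ∧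
      (∀ c ∈ PP, ¬ ∃ y, y ^ c = x) ∧ (∀ c ∈ PP, ¬ ∃ y, y ^ c = f1.eval x / f2.eval x) ∧
      (∀ e ∈ EE, x ∉ LinearMap.range (aeval (sg K F) e)) := by
  classical
  letI : Fintype (GG F) := Fintype.ofFinite _
  set q := Fintype.card K with hq
  set n := f1.natDegree + f2.natDegree with hn
  have hchi : ∀ c : PP, ∃ χ : MulChar F ℂ, orderOf χ = c.1 := fun c =>
    exists_chi F c.1 ((hPP _).1 c.2).2 ((hPP _).1 c.2).1.ne_zero
  choose χ hχ using hchi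
  let i1 : MulChar F ℂ →* GG F := MonoidHom.inl _ _
  let i2 : MulChar F ℂ →* GG F := (MonoidHom.inr _ _).comp (MonoidHom.inl _ _)
  let i3 : AddChar F ℂ →* GG F := (MonoidHom.inr _ _).comp ((MonoidHom.inr _ _).comp (MonoidHom.inl _ _))
  let i4 : AddChar F ℂ →* GG F := (MonoidHom.inr _ _).comp ((MonoidHom.inr _ _).comp (MonoidHom.inr _ _))
  have e1 : ∀ χ, i1 χ = (χ, 1, 1, 1) := fun _ => rfl
  have e2 : ∀ χ, i2 χ = (1, χ, 1, 1) := fun _ => rfl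
  have e3 : ∀ χ, i3 χ = (1, 1, χ, 1) := fun _ => rfl
  have e4 : ∀ χ, i4 χ = (1, 1, 1, χ) := fun _ => rfl
  have j1 : Function.Injective i1 := fun a b h => by simpa [e1] using h
  have j2 : Function.Injective i2 := fun a b h => by simpa [e2] using h
  have j3 : Function.Injective i3 := fun a b h => by simpa [e3] using h
  have j4 : Function.Injective i4 := fun a b h => by simpa [e4] using h
  let H : PP ⊕ (PP ⊕ EE) → Subgroup (GG F) := Sum.elim (fun c => (Subgroup.zpowers (χ c)).map i1)
    (Sum.elim (fun c => (Subgroup.zpowers (χ c)).map i2)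
      (fun e => ((ann (LinearMap.range (aeval (sg K F) e.1))).range).map i3))
  let La : PP ⊕ (PP ⊕ EE) → Finset (GG F) := fun j => Finset.univ.filter (fun g => g ∈ H j)
  have hLa : ∀ j g, g ∈ La j ↔ g ∈ H j := fun j g => by simp [La]
  have hcardH : ∀ j, (La j).card = Nat.card (H j) := by
    intro j
    rw [Nat.card_eq_fintype_card, Fintype.card_subtype]
  have k1 : ∀ c : PP, (La (Sum.inl c)).card = c.1 := by
    intro c
    rw [hcardH]
    change Nat.card ((Subgroup.zpowers (χ c)).map i1) = c
    rw [Subgroup.card_map_of_injective j1, Nat.card_zpowers, hχ]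
  have k2 : ∀ c : PP, (La (Sum.inr (Sum.inl c))).card = c.1 := by
    intro c
    rw [hcardH]
    change Nat.card ((Subgroup.zpowers (χ c)).map i2) = c
    rw [Subgroup.card_map_of_injective j2, Nat.card_zpowers, hχ]
  have k3 : ∀ e : EE, (La (Sum.inr (Sum.inr e))).card = q ^ e.1.natDegree := by
    intro e
    rw [hcardH]
    change Nat.card (((ann (LinearMap.range (aeval (sg K F) e.1))).range).map i3) = _
    rw [Subgroup.card_map_of_injective j3, card_ann, card_quot K F m hm e.1 ((hEE _).1 e.2).2.2]
  -- membership
  have mem1 : ∀ c g, g ∈ La (Sum.inl c) → g.1 ^ c.1 = 1 ∧ g = (g.1, 1, 1, 1) := by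
    intro c g hg
    rw [hLa] at hg
    obtain ⟨ψ, hψ, rfl⟩ := hg
    refine ⟨?_, rfl⟩
    obtain ⟨k, rfl⟩ := hψ
    change (χ c ^ k) ^ c.1 = 1
    rw [← zpow_natCast, ← zpow_mul, mul_comm, zpow_mul, zpow_natCast, ← hχ c, pow_orderOf_eq_one, one_zpow]
  have mem2 : ∀ c g, g ∈ La (Sum.inr (Sum.inl c)) → g.2.1 ^ c.1 = 1 ∧ g = (1, g.2.1, 1, 1) := by
    intro c g hg
    rw [hLa] at hg
    obtain ⟨ψ, hψ, rfl⟩ := hg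
    refine ⟨?_, rfl⟩
    obtain ⟨k, rfl⟩ := hψ
    change (χ c ^ k) ^ c.1 = 1
    rw [← zpow_natCast, ← zpow_mul, mul_comm, zpow_mul, zpow_natCast, ← hχ c, pow_orderOf_eq_one, one_zpow]
  have mem3 : ∀ e g, g ∈ La (Sum.inr (Sum.inr e)) → (∀ y, g.2.2.1 (aeval (sg K F) e.1 y) = 1) ∧ g = (1, 1, g.2.2.1, 1) := by
    intro e g hg
    rw [hLa] at hg
    obtain ⟨_, ⟨ψ, rfl⟩, rfl⟩ := hg
    exact ⟨fun y => ann_apply _ ψ _ ⟨y, rfl⟩, rfl⟩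
  -- trace
  obtain ⟨z, hz⟩ := Algebra.trace_surjective K F (-a)
  let b : GG F → ℂ := fun g => g.2.2.2 z / q
  have hinj : Function.Injective fun ψ => i4 (trc K F ψ) := fun _ _ h => trc_inj K F (j4 h)
  let Lt : Finset (GG F) := Finset.univ.image fun ψ => i4 (trc K F ψ)
  have hq0 : (0 : ℝ) < q := by exact_mod_cast Fintype.card_pos
  have hqC : (q : ℂ) ≠ 0 := by exact_mod_cast hq0.ne'
  have sLt : ∀ x, ∑ g ∈ Lt, b g * Phi f1 f2 x g = if Algebra.trace K F x.1⁻¹ = a then 1 else 0 := by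
    intro x
    rw [Finset.sum_image (fun _ _ _ _ h => hinj h)]
    have : ∀ ψ : AddChar K ℂ, b (i4 (trc K F ψ)) * Phi f1 f2 x (i4 (trc K F ψ)) =
        (1 / q) * ψ (Algebra.trace K F x.1⁻¹ - a) := by
      intro ψ
      obtain ⟨x, h0, h1, h2⟩ := x
      change (trc K F ψ) z / q * ((1 : MulChar F ℂ) x * (1 : MulChar F ℂ) (f1.eval x / f2.eval x) *
        (1 : AddChar F ℂ) x * (trc K F ψ) x⁻¹) = _
      rw [MulChar.one_apply (isUnit_iff_ne_zero.2 h0), MulChar.one_apply (isUnit_iff_ne_zero.2 (div_ne_zero h1 h2)),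
        AddChar.one_apply, trc_apply, trc_apply, hz, sub_eq_add_neg, AddChar.map_add_eq_mul]
      ring
    simp_rw [this]
    rw [← Finset.mul_sum, AddChar.sum_apply_eq_ite]
    simp only [sub_eq_zero]
    split_ifs
    · rw [← hq]; field_simp
    · simp
  set B : ℝ := ((n : ℕ) + 2) * √(Fintype.card F) with hBdef
  have hB0 : 0 ≤ B := by positivity
  let J1 : Finset (PP ⊕ (PP ⊕ EE)) := Finset.univ.filter
    (Sum.elim (fun c => ¬ pr c.1) (Sum.elim (fun c => ¬ pr c.1) (fun e => ¬ gr e.1)))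
  have hJ1 : ∀ u : PP ⊕ (PP ⊕ EE) → ℝ, ∑ j ∈ J1, u j = ∑ c : PP, (if ¬ pr c.1 then u (Sum.inl c) else 0) +
      (∑ c : PP, (if ¬ pr c.1 then u (Sum.inr (Sum.inl c)) else 0) +
        ∑ e : EE, (if ¬ gr e.1 then u (Sum.inr (Sum.inr e)) else 0)) := by
    intro u
    rw [Finset.sum_filter, Fintype.sum_sum_type, Fintype.sum_sum_type]
    refine congrArg₂ _ (Finset.sum_congr rfl fun c _ => if_congr Iff.rfl rfl rfl) (congrArg₂ _ (Finset.sum_congr rfl fun c _ => if_congr Iff.rfl rfl rfl) (Finset.sum_congr rfl fun c _ => if_congr Iff.rfl rfl rfl))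
  have hJ1c : ∀ u : PP ⊕ (PP ⊕ EE) → ℕ, ∑ j ∈ J1ᶜ, u j = ∑ c : PP, (if pr c.1 then u (Sum.inl c) else 0) +
      (∑ c : PP, (if pr c.1 then u (Sum.inr (Sum.inl c)) else 0) +
        ∑ e : EE, (if gr e.1 then u (Sum.inr (Sum.inr e)) else 0)) := by
    intro u
    have : J1ᶜ = Finset.univ.filter
      (Sum.elim (fun c => pr c.1) (Sum.elim (fun c => pr c.1) (fun e => gr e.1))) := by
      ext j
      rw [Finset.mem_compl, Finset.mem_filter, Finset.mem_filter]
      rcases j with c | c | e <;> simp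
    rw [this, Finset.sum_filter, Fintype.sum_sum_type, Fintype.sum_sum_type]
    refine congrArg₂ _ (Finset.sum_congr rfl fun c _ => if_congr Iff.rfl rfl rfl) (congrArg₂ _ (Finset.sum_congr rfl fun c _ => if_congr Iff.rfl rfl rfl) (Finset.sum_congr rfl fun c _ => if_congr Iff.rfl rfl rfl))
  have cJ1 : (J1.card : ℝ) = 2 * (PP.filter (fun c => ¬ pr c)).card + (EE.filter (fun e => ¬ gr e)).card := by
    have := hJ1 fun _ => 1
    rw [Finset.sum_const, nsmul_eq_mul, mul_one] at this
    rw [this, Finset.sum_coe_sort PP (fun c => if ¬ pr c then (1 : ℝ) else 0),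
      Finset.sum_coe_sort EE (fun c => if ¬ gr c then (1 : ℝ) else 0), ← Finset.sum_filter, ← Finset.sum_filter]
    simp only [Finset.sum_const, nsmul_eq_mul, mul_one]
    ring
  have cJ1c : (J1ᶜ).card = 2 * (PP.filter pr).card + (EE.filter gr).card := by
    have := hJ1c fun _ => 1
    rw [Finset.sum_const, smul_eq_mul, mul_one] at this
    rw [this, Finset.sum_coe_sort PP (fun c => if pr c then 1 else 0),
      Finset.sum_coe_sort EE (fun c => if gr c then 1 else 0), ← Finset.sum_filter, ← Finset.sum_filter]
    simp only [Finset.sum_const, smul_eq_mul, mul_one]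
    ring
  have hde' : de = 1 - ∑ j ∈ J1, 1 / ((La j).card : ℝ) := by
    rw [hJ1]
    simp only [k1, k2, k3]
    rw [Finset.sum_coe_sort PP (fun c => if ¬ pr c then 1 / (c : ℝ) else 0),
      Finset.sum_coe_sort EE (fun e => if ¬ gr e then 1 / ((q ^ e.natDegree : ℕ) : ℝ) else 0),
      ← Finset.sum_filter, ← Finset.sum_filter, hde]
    push_cast
    ring
  have main := sieve (Phi f1 f2) B hB0 (Phi_bound p f1 f2 hQ hne) La
    (by intro j; rw [hLa]; exact (H j).one_mem)
    (by
      rintro (c | c | e)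
      · rw [k1]; exact ((hPP _).1 c.2).1.two_le
      · rw [k2]; exact ((hPP _).1 c.2).1.two_le
      · rw [k3]
        have h5 : 1 < q := Fintype.one_lt_card
        have h6 := ((hEE _).1 e.2).1.natDegree_pos
        calc 2 ≤ q := h5
          _ = q ^ 1 := (pow_one q).symm
          _ ≤ q ^ e.1.natDegree := Nat.pow_le_pow_right (by omega) h6)
    (fun j x => orth (H j) (La j) (hLa j) _)
    Lt (Finset.mem_image.2 ⟨1, Finset.mem_univ _, by rw [map_one, map_one]⟩) b q hq0
    (by change (1 : AddChar F ℂ) z / q = _; rw [AddChar.one_apply]; push_cast; rfl)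
    (by
      rw [Finset.sum_image (fun _ _ _ _ h => hinj h)]
      have : ∀ ψ : AddChar K ℂ, ‖b (i4 (trc K F ψ))‖ = 1 / q := by
        intro ψ
        change ‖(trc K F ψ) z / q‖ = _
        rw [norm_div, AddChar.norm_apply, Complex.norm_natCast]
      simp_rw [this]
      rw [Finset.sum_const, Finset.card_univ, AddChar.card_eq, nsmul_eq_mul, ← hq]
      field_simp)
    (by intro x; rw [sLt]; split_ifs <;> simp)
    (by
      intro s t hs ht hp
      obtain ⟨ψ, -, rfl⟩ := Finset.mem_image.1 hs
      rw [Fintype.prod_sum_type, Fintype.prod_sum_type] at hp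
      have t1 : ∀ c, t (Sum.inl c) = ((t (Sum.inl c)).1, 1, 1, 1) := fun c => (mem1 c _ (ht _)).2
      have t2 : ∀ c, t (Sum.inr (Sum.inl c)) = (1, (t (Sum.inr (Sum.inl c))).2.1, 1, 1) := fun c => (mem2 c _ (ht _)).2
      have t3 : ∀ c, t (Sum.inr (Sum.inr c)) = (1, 1, (t (Sum.inr (Sum.inr c))).2.2.1, 1) := fun c => (mem3 c _ (ht _)).2
      have p1 : (∏ c, t (Sum.inl c)) = i1 (∏ c, (t (Sum.inl c)).1) := by
        rw [map_prod]; exact Finset.prod_congr rfl fun c _ => t1 c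
      have p2 : (∏ c, t (Sum.inr (Sum.inl c))) = i2 (∏ c, (t (Sum.inr (Sum.inl c))).2.1) := by
        rw [map_prod]; exact Finset.prod_congr rfl fun c _ => t2 c
      have p3 : (∏ c, t (Sum.inr (Sum.inr c))) = i3 (∏ c, (t (Sum.inr (Sum.inr c))).2.2.1) := by
        rw [map_prod]; exact Finset.prod_congr rfl fun c _ => t3 c
      rw [p1, p2, p3] at hp
      simp only [e1, e2, e3, e4, Prod.mk_mul_mk, one_mul, mul_one, Prod.mk_eq_one] at hp
      obtain ⟨c1, c2, c3, c4⟩ := hp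
      have cop : ∀ i j : PP, i ≠ j → Nat.Coprime i.1 j.1 := fun i j hij =>
        (Nat.coprime_primes ((hPP _).1 i.2).1 ((hPP _).1 j.2).1).2 fun h => hij (Subtype.ext h)
      have d1 := indep_mul (fun c : PP => c.1) cop _ (fun c => (mem1 c _ (ht _)).1) c1
      have d2 := indep_mul (fun c : PP => c.1) cop _ (fun c => (mem2 c _ (ht _)).1) c2
      have d3 := indep_add (sg K F) (fun e : EE => e.1) (by
        intro i j hij
        obtain ⟨ii, im, -⟩ := (hEE _).1 i.2
        obtain ⟨ji, jm, -⟩ := (hEE _).1 j.2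
        rw [ii.coprime_iff_not_dvd]
        intro h
        exact hij (Subtype.ext (eq_of_monic_of_associated im jm (ii.associated_of_dvd ji h)))) _
        (fun e => (mem3 e _ (ht _)).1) c3
      refine ⟨?_, ?_⟩
      · rw [c4, map_one]
      · funext j
        rcases j with c | c | e
        · rw [t1, d1]; rfl
        · rw [t2, d2]; rfl
        · rw [t3, d3]; rfl)
    J1 de hde' hpos
    (by
      rw [cJ1, cJ1c]
      refine lt_of_lt_of_le hcond ?_
      have h5 : (Fintype.card F : ℝ) ≤ Fintype.card (Good f1 f2) + (n + 1) := by
        exact_mod_cast card_Good f1 f2 hne.1 hne.2.1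
      have h6 : (1 : ℝ) ≤ √(Fintype.card F) := by
        rw [Real.one_le_sqrt]; exact_mod_cast (by omega : 1 ≤ Fintype.card F)
      have h7 : ((n : ℝ) + 2) * 1 ≤ B := mul_le_mul_of_nonneg_left h6 (by positivity)
      linarith)
  obtain ⟨⟨x, h0, hx1, hx2⟩, hx3, hx4⟩ := main
  have fin : ∀ j, (∀ g ∈ La j, Phi f1 f2 ⟨x, h0, hx1, hx2⟩ g = 1) → False := by
    intro j h
    have h5 := hx4 j
    rw [Finset.sum_congr rfl h, Finset.sum_const, nsmul_eq_mul, mul_one, Nat.cast_eq_zero, Finset.card_eq_zero] at h5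
    have h6 : (1 : GG F) ∈ La j := by rw [hLa]; exact (H j).one_mem
    rw [h5] at h6
    simp at h6
  have u1 : (1 : MulChar F ℂ) x = 1 := MulChar.one_apply (isUnit_iff_ne_zero.2 h0)
  have u2 : (1 : MulChar F ℂ) (f1.eval x / f2.eval x) = 1 := MulChar.one_apply (isUnit_iff_ne_zero.2 (div_ne_zero hx1 hx2))
  have ev : ∀ g : GG F, Phi f1 f2 ⟨x, h0, hx1, hx2⟩ g = g.1 x * g.2.1 (f1.eval x / f2.eval x) * g.2.2.1 x * g.2.2.2 x⁻¹ :=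
    fun _ => rfl
  refine ⟨x, h0, hx1, hx2, ?_, ?_, ?_, ?_⟩
  · rw [sLt] at hx3
    by_contra h
    rw [if_neg h] at hx3
    exact zero_ne_one hx3
  · rintro c hc ⟨y, hy⟩
    refine fin (Sum.inl ⟨c, hc⟩) fun g hg => ?_
    obtain ⟨m1, m2⟩ := mem1 _ _ hg
    have hy0 : y ≠ 0 := by
      rintro rfl
      exact h0 (by rw [← hy, zero_pow ((hPP _).1 hc).1.ne_zero])
    have m3 : g.1 x = 1 := by
      rw [← hy, map_pow, ← MulChar.pow_apply' _ ((hPP _).1 hc).1.ne_zero, m1,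
        MulChar.one_apply (isUnit_iff_ne_zero.2 hy0)]
    rw [ev, m3, m2]
    simp [u2]
  · rintro c hc ⟨y, hy⟩
    refine fin (Sum.inr (Sum.inl ⟨c, hc⟩)) fun g hg => ?_
    obtain ⟨m1, m2⟩ := mem2 _ _ hg
    have hy0 : y ≠ 0 := by
      rintro rfl
      exact (div_ne_zero hx1 hx2) (by rw [← hy, zero_pow ((hPP _).1 hc).1.ne_zero])
    have m3 : g.2.1 (f1.eval x / f2.eval x) = 1 := by
      rw [← hy, map_pow, ← MulChar.pow_apply' _ ((hPP _).1 hc).1.ne_zero, m1,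
        MulChar.one_apply (isUnit_iff_ne_zero.2 hy0)]
    rw [ev, m3, m2]
    simp [u1]
  · rintro e he ⟨y, hy⟩
    refine fin (Sum.inr (Sum.inr ⟨e, he⟩)) fun g hg => ?_
    obtain ⟨m1, m2⟩ := mem3 _ _ hg
    have m3 : g.2.2.1 x = 1 := by rw [← hy]; exact m1 y
    rw [ev, m3, m2]
    simp [u1, u2]

end Weil
end

open Polynomial UniqueFactorizationMonoid Finset Classical

theorem Weil.nonExc_of {F : Type*} [Field F] [Fintype F] (hQ : 2 < Fintype.card F) (f : RatFunc F)
    (hf : ¬ ExceptionalRatFunc f) : Weil.NonExc f.num f.denom (Fintype.card F - 1) := by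
  refine ⟨?_, f.denom_ne_zero, f.isCoprime_num_denom, ?_⟩
  · intro h0
    apply hf
    refine Or.inl ⟨0, 0, 1, Fintype.card F - 1, by omega, dvd_rfl, ?_⟩
    rw [RatFunc.num_eq_zero_iff.1 h0]
    simp
  · rintro d hd hdv ⟨c1, i1, w1, h1⟩ ⟨c2, i2, w2, h2⟩
    apply hf
    refine Or.inl ⟨c1 / c2, (i1 : ℤ) - i2, algebraMap _ _ w1 / algebraMap _ _ w2, d, hd, hdv, ?_⟩
    have hX : (RatFunc.X : RatFunc F) ≠ 0 := RatFunc.X_ne_zero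
    rw [zpow_sub₀ hX, zpow_natCast, zpow_natCast, div_pow, map_div₀]
    conv_lhs => rw [← RatFunc.num_div_denom f, h1, h2]
    simp only [map_mul, map_pow, RatFunc.algebraMap_C, RatFunc.algebraMap_X]
    simp only [div_eq_mul_inv, mul_inv]
    ring

/-- Sieving criterion: with `p₁, …, p_r` the primes dividing `q^m−1` but not `l`,
`g₁, …, g_s` the monic irreducible factors of `x^m−1` not dividing `g`,
`δ = 1 − 2∑ 1/pᵢ − ∑ 1/q^{deg gᵢ} > 0` and `Δ = (2r+s−1)/δ + 2`, the inequality
`q^{m/2−1} > (n+2)·Δ·W(l)²·W(g)` implies the existence of a normal element `α` with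
`(α, f(α))` a primitive pair and `Tr(α⁻¹) = a`, for every non-exceptional `f` of degree sum
`n` and every `a`. -/
theorem sieving_criterion {K F : Type*} [Field K] [DecidableEq K] [Field F]
    [Fintype K] [Fintype F] [Algebra K F]
    (q m n : ℕ) (p t : ℕ) (hp : p.Prime) (hq : q = p ^ t) (ht : 0 < t)
    (hm : 3 ≤ m) (hn : 0 < n) (hK : Fintype.card K = q) (hF : Fintype.card F = q ^ m)
    (l : ℕ) (hl : l ∣ q ^ m - 1) (g : K[X]) (hg : g ∣ X ^ m - 1)
    (P : Finset ℕ) (hP : P = (q ^ m - 1).primeFactors.filter fun c => ¬ c ∣ l)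
    (G : Finset K[X])
    (hG : G = (normalizedFactors ((X : K[X]) ^ m - 1)).toFinset.filter fun e => ¬ e ∣ g)
    (δ : ℝ) (hδdef : δ = 1 - 2 * (∑ c ∈ P, (1 : ℝ) / c) -
      ∑ e ∈ G, (1 : ℝ) / (q : ℝ) ^ e.natDegree)
    (hδ : 0 < δ)
    (Δ : ℝ) (hΔ : Δ = (2 * P.card + G.card - 1) / δ + 2)
    (hcond : (q : ℝ) ^ ((m : ℝ) / 2 - 1) >
      (n + 2) * Δ * ((2 : ℝ) ^ l.primeFactors.card) ^ 2 *
        2 ^ (normalizedFactors g).toFinset.card)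
    (f : RatFunc F) (hf : ¬ ExceptionalRatFunc f)
    (hdeg : f.num.natDegree + f.denom.natDegree = n) (a : K) :
    ∃ α : F, IsNormalElem K q m α ∧ IsPrimitiveElem α ∧
      IsPrimitiveElem (RatFunc.eval (RingHom.id F) α f) ∧
      Algebra.trace K F α⁻¹ = a := by
  have hq1 : 1 < q := hK ▸ Fintype.one_lt_card
  have hq0 : (0 : ℝ) < q := by exact_mod_cast (by omega : 0 < q)
  have hfin : Module.finrank K F = m := by
    have := Module.card_eq_pow_finrank (K := K) (V := F)
    rw [hF, hK] at this
    exact (Nat.pow_right_injective hq1 this).symm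
  have hQ : 2 < Fintype.card F := by
    rw [hF]
    calc 2 < 2 ^ 3 := by norm_num
      _ ≤ q ^ 3 := Nat.pow_le_pow_left hq1 3
      _ ≤ q ^ m := Nat.pow_le_pow_right (by omega) hm
  haveI : Fact p.Prime := ⟨hp⟩
  haveI : CharP F p := by
    obtain ⟨p', hp'⟩ := CharP.exists F
    obtain ⟨k, hpr, hk⟩ := FiniteField.card F p'
    have h1 : p ∣ p' ^ (k : ℕ) := by
      rw [← hk, hF, hq, ← pow_mul]
      exact dvd_pow_self p (by positivity)
    rw [(Nat.prime_dvd_prime_iff_eq hp hpr).1 (hp.dvd_of_dvd_pow h1)]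
    exact hp'
  have hXm : (X : K[X]) ^ m - 1 ≠ 0 := Weil.XM_ne K F m hfin
  have hN0 : q ^ m - 1 ≠ 0 := by omega
  have hl0 : l ≠ 0 := fun h => hN0 (by rwa [h, zero_dvd_iff] at hl)
  have hg0 : g ≠ 0 := fun h => hXm (by rwa [h, zero_dvd_iff] at hg)
  have hnf : ∀ (b : K[X]), b ≠ 0 → ∀ e, e ∈ (normalizedFactors b).toFinset ↔ Irreducible e ∧ e.Monic ∧ e ∣ b := by
    intro b hb e
    rw [Multiset.mem_toFinset, mem_normalizedFactors_iff' hb]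
    constructor
    · rintro ⟨h1, h2, h3⟩
      exact ⟨h1, (normalize_eq_self_iff_monic h1.ne_zero).1 h2, h3⟩
    · rintro ⟨h1, h2, h3⟩
      exact ⟨h1, (normalize_eq_self_iff_monic h1.ne_zero).2 h2, h3⟩
  have hc1 : (q ^ m - 1).primeFactors.filter (fun c => c ∣ l) = l.primeFactors := by
    ext c
    simp only [Finset.mem_filter, Nat.mem_primeFactors]
    exact ⟨fun h => ⟨h.1.1, h.2, hl0⟩, fun h => ⟨⟨h.1, h.2.1.trans hl, hN0⟩, h.2.1⟩⟩
  have hc2 : (normalizedFactors ((X : K[X]) ^ m - 1)).toFinset.filter (fun e => e ∣ g) =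
      (normalizedFactors g).toFinset := by
    ext e
    rw [Finset.mem_filter, hnf _ hXm, hnf _ hg0]
    exact ⟨fun h => ⟨h.1.1, h.1.2.1, h.2⟩, fun h => ⟨⟨h.1, h.2.1, h.2.2.trans hg⟩, h.2.2⟩⟩
  have hs : √(Fintype.card F : ℝ) * q * (q : ℝ) ^ ((m : ℝ) / 2 - 1) = Fintype.card F := by
    have e1 : √((q : ℝ) ^ m) = (q : ℝ) ^ ((m : ℝ) / 2) := by
      rw [Real.sqrt_eq_rpow, ← Real.rpow_natCast, ← Real.rpow_mul hq0.le]
      congr 1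
      ring
    rw [hF, Nat.cast_pow, e1, Real.rpow_sub hq0, Real.rpow_one, mul_assoc, mul_div_cancel₀ _ hq0.ne',
      ← Real.rpow_add hq0, add_halves, Real.rpow_natCast]
  obtain ⟨x, hx0, hn1, hn2, htr, hx1, hx2, hx3⟩ := Weil.assembly (K := K) (F := F) p m hfin hQ
    (q ^ m - 1).primeFactors (fun c => by rw [Nat.mem_primeFactors, hF]; tauto)
    (normalizedFactors ((X : K[X]) ^ m - 1)).toFinset (hnf _ hXm)
    (fun c => c ∣ l) (fun e => e ∣ g) f.num f.denom (Weil.nonExc_of hQ f hf) δ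
    (by rw [hδdef, hP, hG, hK]) hδ
    (by
      have hpos : 0 < √(Fintype.card F : ℝ) * q :=
        mul_pos (Real.sqrt_pos.2 (by exact_mod_cast Fintype.card_pos)) hq0
      have h1 := mul_lt_mul_of_pos_left hcond hpos
      rw [hs] at h1
      refine lt_of_eq_of_lt ?_ h1
      rw [hdeg, hK, hc1, hc2, ← hP, ← hG, hΔ, pow_add, pow_mul']
      ring) a
  have hpp : ∀ c : ℕ, c.Prime → c ∣ Fintype.card F - 1 → c ∈ (q ^ m - 1).primeFactors := by
    intro c hc hd
    rw [hF] at hd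
    exact Nat.mem_primeFactors.2 ⟨hc, hd, hN0⟩
  refine ⟨x, ?_, ?_, ?_, htr⟩
  · have := Weil.normal_of K F m hfin x fun e h1 h2 h3 => hx3 e ((hnf _ hXm e).2 ⟨h1, h2, h3⟩)
    rw [hK] at this
    exact this
  · exact Weil.primitive_of x hx0 fun c hc hd => hx1 c (hpp c hc hd)
  · have he : RatFunc.eval (RingHom.id F) x f = f.num.eval x / f.denom.eval x := by
      rw [RatFunc.eval, eval₂_id, eval₂_id]
    rw [he]
    exact Weil.primitive_of _ (div_ne_zero hn1 hn2) fun c hc hd => hx2 c (hpp c hc hd)
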